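/- arXiv:1108.0586 — 7 statements merged into one kernel-verified Lean document; each statement's English description precedes it below -/
import Mathlib

section
/- Let K be a field of characteristic 0. Let P be a multilinear polynomial of degree 6 in one formal bilinear operation such that, in every alternative dialgebra over K, P vanishes identically when the formal operation is interpreted as the dicommutator ⟨a,b⟩ = a ⊣ b − b ⊢ a. Then P vanishes identically in every Malcev dialgebra over K; in other words, there are no special identities for Malcev dialgebras in degree 6, so any special identity for Malcev dialgebras must have degree at least 7. -/
/-- Formal monomials of a single binary operation in variables `x_0, …, x_{n-1}`:
binary trees whose leaves are labelled by variables. -/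
inductive BTree (n : ℕ) : Type
  | leaf : Fin n → BTree n
  | node : BTree n → BTree n → BTree n

namespace BTree

/-- Evaluate a monomial in an algebra with binary operation `m`,
assigning the value `x i` to the variable `i`. -/
def eval {n : ℕ} {V : Type} (m : V → V → V) (x : Fin n → V) : BTree n → V
  | leaf i => x i
  | node s t => m (eval m x s) (eval m x t)

/-- The multiset of variables occurring in a monomial. -/
def vars {n : ℕ} : BTree n → Multiset (Fin n)
  | leaf i => {i}
  | node s t => vars s + vars t

/-- A monomial of degree `n` is multilinear if each of the `n` variables
occurs in it exactly once. -/
def Multilinear {n : ℕ} (t : BTree n) : Prop :=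
  vars t = (Finset.univ : Finset (Fin n)).val

end BTree

/-!
Split `P` according to the leftmost variable of its monomials. Two copies of an alternative algebra
form an alternative dialgebra, in which placing only the variable `x i` in the second copy isolates
the part of `P` that starts with `x i`; hence each part is an identity of the commutator algebras
of alternative algebras. Conversely a Malcev dialgebra `M` is a bimodule over its quotient by the
right annihilator, and the split null extension is a Malcev algebra, in which placing only `x i` in
`M` recovers the dialgebra values of the part that starts with `x i`.

It remains to see that an identity of degree six of these commutator algebras holds in all Malcev
algebras. By Sagle's identity, the values of multilinear monomials of degree six are spanned by the
120 left-normed words that start with `x 0` and 90 products of Jacobians: the cyclic sums over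
`d, e, f` of the words `J(a, b, c) d e f`, the products `J(a, b, c)((de)f)`, and the products
`J(a, b, c) J(d, e, f)`. These 210 elements are linearly independent in a product of commutator
algebras: an associative algebra separates the left-normed words and kills all Jacobians, and basis
elements of the octonions and of an alternative bimodule over the exterior algebra separate the
rest. The spanning is checked by elimination modulo 5, the independence modulo 11.
-/

/-! ### Malcev algebras and commutators in alternative algebras -/

/-- The Jacobian `(ab)c + (bc)a + (ca)b`. -/
def jac {Z : Type*} [NonUnitalNonAssocRing Z] (a b c : Z) : Z := a * b * c + b * c * a + c * a * b

/-- Malcev algebras, presented by anticommutativity and Sagle's expansion of `J(ab, c, d)`. -/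
structure IsMalcev (Z : Type*) [NonUnitalNonAssocRing Z] : Prop where
  anticomm : ∀ a b : Z, b * a = -(a * b)
  three_jac_mul : ∀ a b c d : Z, (3 : ℤ) • jac (a * b) c d =
    jac b c d * a - jac a c d * b - (2 : ℤ) • (jac a b d * c) + (2 : ℤ) • (jac a b c * d)

section Jacobian

variable {Z : Type*} [NonUnitalNonAssocRing Z]

theorem jac_rotate (a b c : Z) : jac b c a = jac a b c := by
  simp only [jac]; abel

theorem IsMalcev.jac_swap_left (h : IsMalcev Z) (a b c : Z) : jac b a c = -jac a b c := by
  simp only [jac, h.anticomm a b, h.anticomm b c, h.anticomm a c]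
  simp only [neg_mul, h.anticomm c a, neg_neg]
  abel

theorem IsMalcev.jac_swap_right (h : IsMalcev Z) (a b c : Z) : jac a c b = -jac a b c := by
  rw [← jac_rotate, h.jac_swap_left, jac_rotate, jac_rotate]

theorem isMalcev_of_sagle (anticomm : ∀ a b : Z, b * a = -(a * b))
    (sagle : ∀ x y z w : Z, (x * z) * (y * w) =
      x * y * z * w + y * z * w * x + z * w * x * y + w * x * y * z) : IsMalcev Z where
  anticomm := anticomm
  three_jac_mul a b c d := by
    have adbc := sagle a d b c
    have acdb := sagle a c d b
    have dcab := sagle d c a b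
    have acbd := sagle a c b d
    simp only [jac, add_mul, anticomm a b, anticomm a c, anticomm a d, anticomm b c, anticomm b d,
      anticomm c d, neg_mul, mul_neg, neg_neg, anticomm (a * b) d, anticomm (a * b) (c * d)]
      at adbc acdb dcab acbd ⊢
    linear_combination (norm := module) (2 : ℤ) • adbc + acdb + dcab - acbd

end Jacobian

/-- The space `V` with the product given by the bilinear map `μ`. -/
def AlgebraOf {K V : Type*} [Field K] [AddCommGroup V] [Module K V]
    (_μ : V →ₗ[K] V →ₗ[K] V) : Type _ := V

namespace AlgebraOf

variable {K V : Type*} [Field K] [AddCommGroup V] [Module K V] (μ : V →ₗ[K] V →ₗ[K] V)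

instance : AddCommGroup (AlgebraOf μ) := inferInstanceAs (AddCommGroup V)

instance : Module K (AlgebraOf μ) := inferInstanceAs (Module K V)

/-- The identity map onto `AlgebraOf μ`. -/
def of : V ≃ₗ[K] AlgebraOf μ := LinearEquiv.refl K V

instance : NonUnitalNonAssocRing (AlgebraOf μ) where
  mul a b := of μ (μ ((of μ).symm a) ((of μ).symm b))
  left_distrib a b c := by
    change of μ _ = of μ _ + of μ _
    simp only [map_add]
  right_distrib a b c := by
    change of μ _ = of μ _ + of μ _
    simp only [map_add, LinearMap.add_apply]
  zero_mul a := by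
    change of μ _ = _
    simp only [map_zero, LinearMap.zero_apply]
  mul_zero a := by
    change of μ _ = _
    simp only [map_zero]

theorem of_mul_of (a b : V) : of μ a * of μ b = of μ (μ a b) := rfl

instance : IsScalarTower K (AlgebraOf μ) (AlgebraOf μ) where
  smul_assoc c a b := by
    change of μ _ = c • of μ _
    simp only [map_smul, LinearMap.smul_apply]

instance : SMulCommClass K (AlgebraOf μ) (AlgebraOf μ) where
  smul_comm c a b := by
    change c • of μ _ = of μ _
    simp only [map_smul]

end AlgebraOf

/-- Alternative algebras, presented by the skew-symmetry of the associator. -/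
structure IsAlternative (A : Type*) [NonUnitalNonAssocRing A] : Prop where
  swap_left : ∀ a b c : A, associator b a c = -associator a b c
  swap_right : ∀ a b c : A, associator a c b = -associator a b c

namespace IsAlternative

variable {A : Type*} [NonUnitalNonAssocRing A]

theorem associator_mul_sub_add (h : IsAlternative A) (a b c d : A) :
    associator (a * b) c d - associator (b * c) d a + associator (c * d) a b =
      a * associator b c d + associator a b c * d := by
  have hcocycle := associator_cocycle a b c d
  rw [h.swap_left (b * c), h.swap_right (b * c), h.swap_right a (c * d), h.swap_left (c * d)]
    at hcocycle
  linear_combination (norm := module) -hcocycle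

theorem three_associator_commutator (h : IsAlternative A) (a b c d : A) :
    (3 : ℤ) • associator (a * b - b * a) c d =
      (associator b c d * a - a * associator b c d) - (associator a c d * b - b * associator a c d)
        - (2 : ℤ) • (associator a b d * c - c * associator a b d)
        + (2 : ℤ) • (associator a b c * d - d * associator a b c) := by
  have sub_left (x y z w : A) : associator (x - y) z w = associator x z w - associator y z w := by
    simp only [associator, sub_mul]
    abel
  have bcda := h.associator_mul_sub_add b c d a
  have dabc := h.associator_mul_sub_add d a b c
  have cdba := h.associator_mul_sub_add c d b a
  have acdb := h.associator_mul_sub_add a c d b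
  have bacd := h.associator_mul_sub_add b a c d
  have dbac := h.associator_mul_sub_add d b a c
  simp only [h.swap_left a b, h.swap_left a c, h.swap_left a d, h.swap_left b c, h.swap_left b d,
    fun x => h.swap_right x a b, fun x => h.swap_right x a d, fun x => h.swap_right x b d,
    sub_left, neg_mul, mul_neg, neg_neg] at bcda dabc cdba acdb bacd dbac ⊢
  linear_combination (norm := module)
    (3 : ℤ) • bcda - (3 : ℤ) • dabc - (2 : ℤ) • cdba - acdb - (2 : ℤ) • bacd - dbac

end IsAlternative

section Commutator

variable (K : Type*) {A : Type*} [Field K] [NonUnitalNonAssocRing A] [Module K A]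
  [IsScalarTower K A A] [SMulCommClass K A A]

variable (A) in
/-- The commutator `ab - ba` as a bilinear map. -/
def commutator₂ : A →ₗ[K] A →ₗ[K] A := LinearMap.mul K A - (LinearMap.mul K A).flip

theorem commutator₂_apply (a b : A) : commutator₂ K A a b = a * b - b * a := rfl

variable (A) in
/-- The commutator algebra of `A`. -/
abbrev CommutatorAlgebra : Type _ := AlgebraOf (commutator₂ K A)

theorem IsAlternative.jac_of (h : IsAlternative A) (a b c : A) :
    jac (AlgebraOf.of (commutator₂ K A) a) (AlgebraOf.of _ b) (AlgebraOf.of _ c) =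
      AlgebraOf.of _ ((6 : ℤ) • associator a b c) := by
  have bac := h.swap_left a b c
  have acb := h.swap_right a b c
  have cab := h.swap_left a c b
  have bca := h.swap_right b a c
  have cba := h.swap_left b c a
  simp only [jac, AlgebraOf.of_mul_of, commutator₂_apply, ← map_add]
  congr 1
  simp only [associator, mul_sub, sub_mul] at *
  linear_combination (norm := module) -(3 : ℤ) • bac - (2 : ℤ) • acb + cab + (2 : ℤ) • bca - cba

theorem IsAlternative.isMalcev (h : IsAlternative A) : IsMalcev (CommutatorAlgebra K A) where
  anticomm a b := by
    obtain ⟨a, rfl⟩ := (AlgebraOf.of _).surjective a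
    obtain ⟨b, rfl⟩ := (AlgebraOf.of _).surjective b
    simp only [AlgebraOf.of_mul_of, commutator₂_apply, ← map_neg, neg_sub]
  three_jac_mul a b c d := by
    obtain ⟨a, rfl⟩ := (AlgebraOf.of _).surjective a
    obtain ⟨b, rfl⟩ := (AlgebraOf.of _).surjective b
    obtain ⟨c, rfl⟩ := (AlgebraOf.of _).surjective c
    obtain ⟨d, rfl⟩ := (AlgebraOf.of _).surjective d
    simp only [AlgebraOf.of_mul_of, h.jac_of K, commutator₂_apply, ← map_zsmul, ← map_add,
      ← map_sub]
    congr 1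
    simp only [mul_smul_comm, smul_mul_assoc]
    linear_combination (norm := module) (6 : ℤ) • h.three_associator_commutator a b c d

end Commutator

namespace IsMalcev

variable {Z : Type*} [NonUnitalNonAssocRing Z]

/-- The two sides come from the two expansions of `J(ab, cd, e)`. -/
theorem jac_mul_mul_add (h : IsMalcev Z) (a b c d e : Z) :
    (6 : ℤ) • (jac a b e * (c * d)) + (6 : ℤ) • (jac c d e * (a * b)) =
      (jac d e b * c - jac c e b * d - (2 : ℤ) • (jac c d b * e) + (2 : ℤ) • (jac c d e * b)) * a
      - (jac d e a * c - jac c e a * d - (2 : ℤ) • (jac c d a * e) + (2 : ℤ) • (jac c d e * a)) * b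
      + (2 : ℤ) • ((jac d a b * c - jac c a b * d - (2 : ℤ) • (jac c d b * a) +
        (2 : ℤ) • (jac c d a * b)) * e)
      - (jac b d e * a - jac a d e * b - (2 : ℤ) • (jac a b e * d) + (2 : ℤ) • (jac a b d * e)) * c
      + (jac b c e * a - jac a c e * b - (2 : ℤ) • (jac a b e * c) + (2 : ℤ) • (jac a b c * e)) * d
      + (2 : ℤ) • ((jac b c d * a - jac a c d * b - (2 : ℤ) • (jac a b d * c) +
        (2 : ℤ) • (jac a b c * d)) * e) := by
  have hab := h.three_jac_mul a b (c * d) e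
  have hcd := h.three_jac_mul c d e (a * b)
  rw [← h.three_jac_mul c d e b, ← h.three_jac_mul c d e a, ← h.three_jac_mul c d a b,
    ← h.three_jac_mul a b d e, ← h.three_jac_mul a b c e, ← h.three_jac_mul a b c d]
  simp only [smul_mul_assoc]
  rw [jac_rotate (a * b), jac_rotate (a * b) d e, jac_rotate (a * b) c e,
    jac_rotate (a * b) c d] at hcd
  rw [← jac_rotate b (c * d) e, ← jac_rotate a (c * d) e, jac_rotate (c * d) a b] at hab
  linear_combination (norm := module) (3 : ℤ) • hab - (3 : ℤ) • hcd

theorem twelve_jac_mul_mul (h : IsMalcev Z) (a b c d e : Z) :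
    (12 : ℤ) • (jac a b c * (d * e)) =
    -(jac c d e * a * b) + jac b d e * a * c - (3 : ℤ) • (jac b c e * a * d)
      + (3 : ℤ) • (jac b c d * a * e) + jac c d e * b * a - jac a d e * b * c
      + (3 : ℤ) • (jac a c e * b * d) - (3 : ℤ) • (jac a c d * b * e) - jac b d e * c * a
      + jac a d e * c * b - (3 : ℤ) • (jac a b e * c * d) + (3 : ℤ) • (jac a b d * c * e)
      - (5 : ℤ) • (jac b c e * d * a) + (5 : ℤ) • (jac a c e * d * b)
      - (5 : ℤ) • (jac a b e * d * c) - (3 : ℤ) • (jac a b c * d * e)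
      + (5 : ℤ) • (jac b c d * e * a) - (5 : ℤ) • (jac a c d * e * b)
      + (5 : ℤ) • (jac a b d * e * c) + (3 : ℤ) • (jac a b c * e * d) := by
  have acbde := h.jac_mul_mul_add a c b d e
  have bcdea := h.jac_mul_mul_add b c d e a
  have acdeb := h.jac_mul_mul_add a c d e b
  have aebdc := h.jac_mul_mul_add a e b d c
  have aebcd := h.jac_mul_mul_add a e b c d
  simp only [h.jac_swap_left a b, h.jac_swap_left a c, h.jac_swap_left a d, h.jac_swap_left a e,
    h.jac_swap_left b c, h.jac_swap_left b d, h.jac_swap_left b e, h.jac_swap_left c d,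
    h.jac_swap_left c e, h.jac_swap_left d e, fun x => h.jac_swap_right x a c,
    fun x => h.jac_swap_right x a d, fun x => h.jac_swap_right x a e,
    fun x => h.jac_swap_right x b c, fun x => h.jac_swap_right x b d,
    fun x => h.jac_swap_right x b e, fun x => h.jac_swap_right x c d,
    fun x => h.jac_swap_right x c e, fun x => h.jac_swap_right x d e,
    add_mul, sub_mul, smul_mul_assoc, neg_mul, neg_neg, smul_neg]
    at acbde bcdea acdeb aebdc aebcd ⊢
  linear_combination (norm := module) acbde + bcdea - acdeb + aebdc + aebcd

theorem jac_eq_sub_sub (h : IsMalcev Z) (x y z : Z) :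
    jac x y z = x * y * z - x * z * y - x * (y * z) := by
  rw [jac, h.anticomm x (y * z), h.anticomm x z, neg_mul]
  abel

theorem three_mul_mul_mul (h : IsMalcev Z) (x d e f : Z) :
    (3 : ℤ) • (x * d * (e * f)) = (3 : ℤ) • (x * d * e * f) - (3 : ℤ) • (x * d * f * e)
      + x * jac d e f + (x * e * f - x * f * e - x * (e * f)) * d
      + (2 : ℤ) • ((x * d * f - x * f * d - x * (d * f)) * e)
      - (2 : ℤ) • ((x * d * e - x * e * d - x * (d * e)) * f) := by
  have expand := h.three_jac_mul x d e f
  rw [h.anticomm x (jac d e f), h.jac_eq_sub_sub (x * d), h.jac_eq_sub_sub x e f,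
    h.jac_eq_sub_sub x d f, h.jac_eq_sub_sub x d e] at expand
  linear_combination (norm := module) -expand

end IsMalcev

/-! ### Linear systems modulo a prime -/

/-- Formal integral linear combinations of unknowns indexed by `ℕ`, kept as expressions so that
they can be evaluated both in a module and, for computations, modulo an integer. -/
inductive LinearExpr : Type
  | var (k : ℕ)
  | add (s t : LinearExpr)
  | smul (c : ℤ) (s : LinearExpr)

namespace LinearExpr

instance : Add LinearExpr := ⟨add⟩

instance : SMul ℤ LinearExpr := ⟨smul⟩

instance : Neg LinearExpr := ⟨fun s => (-1 : ℤ) • s⟩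

instance : Sub LinearExpr := ⟨fun s t => s + -t⟩

section Value

variable {V : Type*} [AddCommGroup V]

/-- The value of an expression when the unknown `k` takes the value `d k`. -/
def value (d : ℕ → V) : LinearExpr → V
  | var k => d k
  | add s t => s.value d + t.value d
  | smul c s => c • s.value d

variable (d : ℕ → V) (s t : LinearExpr)

@[simp] theorem value_var (k : ℕ) : (var k).value d = d k := rfl

@[simp] theorem value_add : (s + t).value d = s.value d + t.value d := rfl

@[simp] theorem value_smul (c : ℤ) : (c • s).value d = c • s.value d := rfl

@[simp] theorem value_neg : (-s).value d = -s.value d := neg_one_smul ℤ _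

@[simp] theorem value_sub : (s - t).value d = s.value d - t.value d := by
  rw [sub_eq_add_neg, ← value_neg, ← value_add]
  rfl

theorem map_value {W F : Type*} [AddCommGroup W] [FunLike F V W] [AddMonoidHomClass F V W] (φ : F) :
    φ (s.value d) = s.value (φ ∘ d) := by
  induction s with
  | var k => rfl
  | add s t hs ht => rw [value, map_add, hs, ht, value]
  | smul c s hs => rw [value, map_zsmul, hs, value]

@[simp] theorem value_zero : s.value (0 : ℕ → V) = 0 :=
  (map_value 0 s (0 : V →+ V)).symm

end Value

/-- The sum of the coefficients `c mod p` of an expression, with `c mod p ∈ [0, p)`. -/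
def bound (p : ℕ) : LinearExpr → ℕ
  | var _ => 1
  | add s t => s.bound p + t.bound p
  | smul c s => (c % p).toNat * s.bound p

/-- The coefficients modulo `p` of an expression in `n` unknowns, as the digits in base `β` of a
single natural number. -/
def code (β p n : ℕ) : LinearExpr → ℕ
  | var k => if k < n then β ^ k else 0
  | add s t => s.code β p n + t.code β p n
  | smul c s => (c % p).toNat * s.code β p n

end LinearExpr

namespace PackedElimination

open Finset

variable {W : Type*} [AddCommGroup W] {β p B C n f g : ℕ} {d : ℕ → W} {w x : W}

/-- The digits in base `β` of `f` are coefficients, all at most `B`, of a linear form in `n`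
unknowns which takes the value `w` at `d`. -/
def Encodes (β B n : ℕ) (d : ℕ → W) (f : ℕ) (w : W) : Prop :=
  ∃ q : ℕ → ℕ, (∀ k, q k ≤ B) ∧ ∑ k ∈ range n, q k * β ^ k = f ∧ ∑ k ∈ range n, q k • d k = w

theorem Encodes.mono (h : Encodes β B n d f w) (hBC : B ≤ C) : Encodes β C n d f w := by
  obtain ⟨q, hq, hf, hw⟩ := h
  exact ⟨q, fun k => (hq k).trans hBC, hf, hw⟩

theorem Encodes.add (hf : Encodes β B n d f w) (hg : Encodes β C n d g x) :
    Encodes β (B + C) n d (f + g) (w + x) := by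
  obtain ⟨q, hq, rfl, rfl⟩ := hf
  obtain ⟨r, hr, rfl, rfl⟩ := hg
  exact ⟨q + r, fun k => add_le_add (hq k) (hr k), by simp only [Pi.add_apply, add_mul,
    sum_add_distrib], by simp only [Pi.add_apply, add_smul, sum_add_distrib]⟩

theorem Encodes.smul (c : ℕ) (hf : Encodes β B n d f w) :
    Encodes β (c * B) n d (c * f) (c • w) := by
  obtain ⟨q, hq, rfl, rfl⟩ := hf
  exact ⟨fun k => c * q k, fun k => Nat.mul_le_mul_left c (hq k), by simp only [mul_assoc,
    mul_sum], by simp only [mul_smul, smul_sum]⟩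

theorem Encodes.cons {c : ℕ} (hc : c ≤ B) (hf : Encodes β B n (fun k => d (k + 1)) f w) :
    Encodes β B (n + 1) d (c + β * f) (c • d 0 + w) := by
  obtain ⟨q, hq, rfl, rfl⟩ := hf
  refine ⟨fun k => k.casesOn c q, Nat.rec hc fun k _ => hq k, ?_, ?_⟩
  · simp only [sum_range_succ', pow_zero, mul_one, pow_succ, mul_sum, add_comm c]
    exact congrArg (· + c) (sum_congr rfl fun k _ => by ring)
  · exact (sum_range_succ' _ n).trans (add_comm _ _)

theorem Encodes.uncons (hf : Encodes β B (n + 1) d f w) (hB : B < β) :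
    f % β ≤ B ∧ Encodes β B n (fun k => d (k + 1)) (f / β) (w - (f % β) • d 0) := by
  obtain ⟨q, hq, rfl, rfl⟩ := hf
  have hsplit : ∑ k ∈ range (n + 1), q k * β ^ k
      = q 0 + β * ∑ k ∈ range n, q (k + 1) * β ^ k := by
    simp only [sum_range_succ', pow_zero, mul_one, pow_succ, mul_sum, add_comm (q 0)]
    exact congrArg (· + q 0) (sum_congr rfl fun k _ => by ring)
  have hq₀ : q 0 < β := (hq 0).trans_lt hB
  rw [hsplit, Nat.add_mul_mod_self_left, Nat.mod_eq_of_lt hq₀,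
    Nat.add_mul_div_left _ _ (hq₀.pos), Nat.div_eq_of_lt hq₀, zero_add]
  exact ⟨hq 0, fun k => q (k + 1), fun k => hq _, rfl,
    by rw [sum_range_succ', add_sub_cancel_right]⟩

theorem mod_smul (hW : ∀ w : W, p • w = 0) (a : ℕ) (w : W) : (a % p) • w = a • w := by
  conv_rhs => rw [← Nat.mod_add_div a p, add_smul, mul_smul, hW, add_zero]

/-- Reduces the `n` digits in base `β` of `f` modulo `p`. -/
def reduce (β p : ℕ) : ℕ → ℕ → ℕ
  | 0, _ => 0
  | n + 1, f => f % β % p + β * reduce β p n (f / β)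

theorem Encodes.reduce [NeZero p] (hW : ∀ w : W, p • w = 0) (hB : B < β)
    (hf : Encodes β B n d f w) : Encodes β p n d (reduce β p n f) w := by
  induction n generalizing d f w with
  | zero =>
    obtain ⟨q, -, -, rfl⟩ := hf
    exact ⟨0, fun _ => Nat.zero_le p, rfl, rfl⟩
  | succ n ih =>
    have hcons := (ih (hf.uncons hB).2).cons (Nat.mod_lt (f % β) (NeZero.pos p)).le
    rwa [mod_smul hW, add_sub_cancel] at hcons

/-- Adds a multiple of `q`, whose lowest digit is `1`, to `f` so that the lowest digit becomes
divisible by `p`, and drops this digit. -/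
def eliminate (β p q f : ℕ) : ℕ := (f + (p - f % β % p) * q) / β

theorem Encodes.eliminate [NeZero p] {q : ℕ} (hW : ∀ w : W, p • w = 0) (hB : B + p * p < β)
    (hq : Encodes β p (n + 1) d q 0) (hq₁ : q % β = 1) (hf : Encodes β B (n + 1) d f 0) :
    Encodes β (B + p * p) n (fun k => d (k + 1)) (eliminate β p q f) 0 := by
  set a := f % β % p with ha
  have hap : a < p := Nat.mod_lt _ (NeZero.pos p)
  have hg : Encodes β (B + p * p) (n + 1) d (f + (p - a) * q) 0 := by
    simpa only [smul_zero, add_zero] using (hf.add (hq.smul (p - a))).mono (by gcongr; omega)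
  have hlead : (f + (p - a) * q) % β = f % β + (p - a) := by
    have hlt : f % β + (p - a) < β := by
      have := (hf.uncons (by omega)).1
      have := Nat.le_mul_self p
      omega
    rw [← Nat.mod_eq_of_lt hlt]
    simp [Nat.add_mod, Nat.mul_mod, hq₁]
  have hzero : (f % β + (p - a)) • d 0 = 0 := by
    rw [add_smul, ← mod_smul hW (f % β), ← ha, ← add_smul, Nat.add_sub_of_le hap.le, hW]
  simpa only [hlead, hzero, sub_zero, PackedElimination.eliminate] using (hg.uncons hB).2

/-- Gaussian elimination modulo `p` on linear forms in `n` unknowns whose coefficients, all at most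
`B`, are the digits in base `β` of natural numbers. Pivots are normalised by Fermat's little
theorem. The result is `true` if all unknowns have been eliminated without any digit exceeding
the base. -/
def isNonsingular (β p : ℕ) : ℕ → ℕ → List ℕ → Bool
  | _, 0, _ => true
  | B, n + 1, fs =>
    match fs.find? fun f => f % β % p ≠ 0 with
    | none => false
    | some f =>
      let q := reduce β p (n + 1) ((f % β % p) ^ (p - 2) % p * f)
      q % β = 1 && p * (B + p * p) < β &&
        isNonsingular β p (B + p * p) n (fs.map (eliminate β p q))

theorem eq_zero_of_isNonsingular [NeZero p] (hW : ∀ w : W, p • w = 0) {fs : List ℕ}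
    (h : isNonsingular β p B n fs = true) (hfs : ∀ f ∈ fs, Encodes β B n d f 0) :
    ∀ k < n, d k = 0 := by
  induction n generalizing B d fs with
  | zero => exact fun k hk => absurd hk k.not_lt_zero
  | succ n ih =>
    rw [isNonsingular] at h
    split at h
    · exact absurd h Bool.false_ne_true
    rename_i f hfind
    simp only [Bool.and_eq_true, decide_eq_true_eq] at h
    set q := PackedElimination.reduce β p (n + 1) ((f % β % p) ^ (p - 2) % p * f)
    obtain ⟨⟨hq₁, hβ⟩, hrec⟩ := h
    have hp : 0 < p := NeZero.pos p
    have hB : B + p * p < β := (Nat.le_mul_of_pos_left _ hp).trans_lt hβ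
    have hq : Encodes β p (n + 1) d q 0 := by
      have hmul := ((hfs f (List.mem_of_find?_eq_some hfind)).smul
        ((f % β % p) ^ (p - 2) % p)).mono
        (Nat.mul_le_mul (Nat.mod_lt _ hp).le (Nat.le_add_right B (p * p)))
      exact smul_zero (M := ℕ) (A := W) _ ▸ hmul.reduce hW hβ
    have hsucc : ∀ k < n, d (k + 1) = 0 := ih hrec fun g hg => by
      obtain ⟨f, hf, rfl⟩ := List.mem_map.1 hg
      exact hq.eliminate hW hB hq₁ (hfs f hf)
    have hzero : d 0 = 0 := by
      obtain ⟨r, -, -, hsum⟩ := (hq.uncons (by nlinarith)).2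
      have hrest : ∑ k ∈ range n, r k • d (k + 1) = 0 :=
        sum_eq_zero fun k hk => by rw [hsucc k (mem_range.1 hk), smul_zero]
      rwa [hrest, hq₁, one_smul, zero_sub, eq_comm, neg_eq_zero] at hsum
    rintro (_ | k) hk
    · exact hzero
    · exact hsucc k (Nat.lt_of_succ_lt_succ hk)

theorem encodes_code [NeZero p] (hW : ∀ w : W, p • w = 0) (hd : ∀ k, n ≤ k → d k = 0)
    (e : LinearExpr) : Encodes β (e.bound p) n d (e.code β p n) (e.value d) := by
  induction e with
  | var k =>
    refine ⟨fun j => if k = j then 1 else 0, fun j => ite_le_one le_rfl zero_le_one, ?_, ?_⟩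
    · simp [LinearExpr.code]
    · simpa using fun hk => (hd k hk).symm
  | add s t hs ht => exact hs.add ht
  | smul c s hs =>
    have hc : (c % p).toNat • s.value d = c • s.value d := by
      rw [← natCast_zsmul, Int.toNat_of_nonneg (Int.emod_nonneg c (NeZero.ne (p : ℤ)))]
      conv_rhs => rw [← Int.emod_add_mul_ediv c p, add_smul, mul_comm, mul_smul,
        natCast_zsmul, hW, smul_zero, add_zero]
    exact Eq.subst (motive := Encodes β _ n d _) hc (hs.smul (c % p).toNat)

end PackedElimination

/-- The linear system `es` in `n` unknowns is nonsingular modulo `p`, as witnessed by elimination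
on packed forms with digits in base `β`. -/
def IsNonsingularMod (p β n : ℕ) (es : List LinearExpr) : Prop :=
  ∃ B, (∀ e ∈ es, e.bound p ≤ B) ∧
    PackedElimination.isNonsingular β p B n (es.map (LinearExpr.code β p n)) = true

theorem eq_bot_of_le_span_smul {V : Type*} [AddCommGroup V] [IsAddTorsionFree V] {p : ℕ}
    (hp : 1 < p) {D : Submodule ℤ V} (hD : D.FG) (hle : D ≤ Ideal.span {(p : ℤ)} • D) : D = ⊥ := by
  obtain ⟨r, hr, hrD⟩ :=
    Submodule.exists_sub_one_mem_and_smul_eq_zero_of_fg_of_le_smul _ D hD hle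
  have hr₀ : r ≠ 0 := by
    rintro rfl
    rw [Ideal.mem_span_singleton, zero_sub, dvd_neg, ← Nat.cast_one, Int.natCast_dvd_natCast,
      Nat.dvd_one] at hr
    exact hp.ne' hr
  exact (Submodule.eq_bot_iff D).2 fun x hx =>
    (IsAddTorsionFree.zsmul_eq_zero_iff_right hr₀).1 (hrD x hx)

/-- Nakayama's lemma for the span of a solution lifts nonsingularity from `ℤ / p` to every
torsion-free group. -/
theorem IsNonsingularMod.eq_zero {V : Type*} [AddCommGroup V] [IsAddTorsionFree V] {p β n : ℕ}
    (hp : 1 < p) {es : List LinearExpr} (h : IsNonsingularMod p β n es) {d : ℕ → V}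
    (hd : ∀ k, n ≤ k → d k = 0) (he : ∀ e ∈ es, e.value d = 0) (k : ℕ) : d k = 0 := by
  have : NeZero p := ⟨by omega⟩
  obtain ⟨B, hB, h⟩ := h
  let D : Submodule ℤ V := Submodule.span ℤ (d '' Set.Iio n)
  have hdD (k : ℕ) : d k ∈ D := by
    obtain hk | hk := lt_or_ge k n
    · exact Submodule.subset_span ⟨k, hk, rfl⟩
    · exact hd k hk ▸ D.zero_mem
  let Q : Submodule ℤ D := Ideal.span {(p : ℤ)} • ⊤
  have hpQ (w : D ⧸ Q) : p • w = 0 := by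
    obtain ⟨x, rfl⟩ := Q.mkQ_surjective w
    rw [← map_nsmul, ← natCast_zsmul, Submodule.mkQ_apply, Submodule.Quotient.mk_eq_zero]
    exact Submodule.smul_mem_smul (Ideal.mem_span_singleton_self _) trivial
  let d' : ℕ → D := fun k => ⟨d k, hdD k⟩
  have hd' (k : ℕ) (hk : n ≤ k) : d' k = 0 := Subtype.ext (hd k hk)
  have hvalue (e : LinearExpr) (hmem : e ∈ es) : e.value d' = 0 :=
    Subtype.ext ((e.map_value d' D.subtype).trans (he e hmem))
  have hdQ : ∀ k < n, Q.mkQ (d' k) = 0 := by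
    refine PackedElimination.eq_zero_of_isNonsingular hpQ h fun f hf => ?_
    obtain ⟨e, hmem, rfl⟩ := List.mem_map.1 hf
    have hcode := PackedElimination.encodes_code (β := β) hpQ (d := Q.mkQ ∘ d')
      (fun k hk => by rw [Function.comp_apply, hd' k hk, map_zero]) e
    rw [← e.map_value, hvalue e hmem, map_zero] at hcode
    exact hcode.mono (hB e hmem)
  have hD : D = ⊥ := by
    refine eq_bot_of_le_span_smul hp (Submodule.fg_span ((Set.finite_Iio n).image d)) ?_
    refine Submodule.span_le.2 ?_
    rintro _ ⟨k, hk, rfl⟩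
    have hmem := Submodule.mem_map_of_mem (f := D.subtype)
      ((Submodule.Quotient.mk_eq_zero Q).1 (hdQ k hk))
    rwa [Submodule.map_smul'', Submodule.map_top, Submodule.range_subtype] at hmem
  exact (Submodule.mem_bot ℤ).1 (hD ▸ hdD k)

/-! ### Jacobian words in degree six -/

section Arrangements

/-- A list of six variables, read as a pair of triples. -/
structure Sextuple : Type where
  (a b c d e f : Fin 6)
  deriving DecidableEq

/-- The variables `a, …, f` are `0, …, 5` in some order. -/
def IsArrangement (a b c d e f : Fin 6) : Prop :=
  ({a} + {b} + {c} + {d} + {e} + {f} : Multiset (Fin 6)) = (Finset.univ : Finset (Fin 6)).val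

instance (a b c d e f : Fin 6) : Decidable (IsArrangement a b c d e f) := Multiset.decidableEq _ _

/-- The ordered partitions of the six variables into two increasing triples. -/
def splits : List Sextuple :=
  [⟨0, 1, 2, 3, 4, 5⟩, ⟨0, 1, 3, 2, 4, 5⟩, ⟨0, 2, 3, 1, 4, 5⟩, ⟨1, 2, 3, 0, 4, 5⟩,
    ⟨0, 1, 4, 2, 3, 5⟩, ⟨0, 2, 4, 1, 3, 5⟩, ⟨1, 2, 4, 0, 3, 5⟩, ⟨0, 3, 4, 1, 2, 5⟩,
    ⟨1, 3, 4, 0, 2, 5⟩, ⟨2, 3, 4, 0, 1, 5⟩, ⟨0, 1, 5, 2, 3, 4⟩, ⟨0, 2, 5, 1, 3, 4⟩,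
    ⟨1, 2, 5, 0, 3, 4⟩, ⟨0, 3, 5, 1, 2, 4⟩, ⟨1, 3, 5, 0, 2, 4⟩, ⟨2, 3, 5, 0, 1, 4⟩,
    ⟨0, 4, 5, 1, 2, 3⟩, ⟨1, 4, 5, 0, 2, 3⟩, ⟨2, 4, 5, 0, 1, 3⟩, ⟨3, 4, 5, 0, 1, 2⟩]

/-- The arrangements `a, …, f` with `a < b < c`, indexing the words `J(a, b, c) d e f`. -/
def words : List Sextuple :=
  splits.flatMap fun ⟨a, b, c, d, e, f⟩ =>
    [⟨a, b, c, d, e, f⟩, ⟨a, b, c, d, f, e⟩, ⟨a, b, c, e, d, f⟩, ⟨a, b, c, e, f, d⟩,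
      ⟨a, b, c, f, d, e⟩, ⟨a, b, c, f, e, d⟩]

variable {a b c d e f : Fin 6}

theorem IsArrangement.of_eq {a' b' c' d' e' f' : Fin 6} (h : IsArrangement a b c d e f)
    (h' : ({a'} + {b'} + {c'} + {d'} + {e'} + {f'} : Multiset (Fin 6)) =
      {a} + {b} + {c} + {d} + {e} + {f}) : IsArrangement a' b' c' d' e' f' :=
  h'.trans h

theorem isArrangement_iff_nodup : IsArrangement a b c d e f ↔ [a, b, c, d, e, f].Nodup := by
  refine ⟨fun h => ?_, fun h => ?_⟩
  · exact Multiset.coe_nodup.1 ((congrArg Multiset.Nodup h).mpr Finset.univ.nodup)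
  · exact congrArg Finset.val
      (Finset.eq_univ_of_card (⟨↑[a, b, c, d, e, f], h⟩ : Finset (Fin 6)) rfl)

theorem mem_words_of_lt : ∀ a b : Fin 6, a < b → ∀ c, b < c → ∀ d e f : Fin 6,
    IsArrangement a b c d e f → (⟨a, b, c, d, e, f⟩ : Sextuple) ∈ words := by
  decide +kernel

theorem mem_splits_of_lt : ∀ a b : Fin 6, a < b → ∀ c, b < c → ∀ d e : Fin 6, d < e → ∀ f, e < f →
    IsArrangement a b c d e f → (⟨a, b, c, d, e, f⟩ : Sextuple) ∈ splits := by
  decide +kernel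

theorem isArrangement_of_mem_splits :
    ∀ s ∈ splits, IsArrangement s.a s.b s.c s.d s.e s.f := by
  decide +kernel

theorem mirror_mem_splits : ∀ s ∈ splits, s.a ≠ 0 →
    (⟨s.d, s.e, s.f, s.a, s.b, s.c⟩ : Sextuple) ∈ splits ∧ s.d = 0 := by
  decide +kernel

theorem of_increasing {α : Type*} [LinearOrder α] {Q : α → α → α → Prop}
    (swap_left : ∀ a b c, Q a b c → Q b a c) (swap_right : ∀ a b c, Q a b c → Q a c b)
    (increasing : ∀ a b c, a < b → b < c → Q a b c) (a b c : α)
    (hab : a ≠ b) (hac : a ≠ c) (hbc : b ≠ c) : Q a b c := by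
  rcases lt_or_gt_of_ne hab with _ | _ <;> rcases lt_or_gt_of_ne hac with _ | _ <;>
    rcases lt_or_gt_of_ne hbc with _ | _ <;> grind

theorem forall_of_splits {Q : Fin 6 → Fin 6 → Fin 6 → Fin 6 → Fin 6 → Fin 6 → Prop}
    (swap_ab : ∀ a b c d e f, Q a b c d e f → Q b a c d e f)
    (swap_bc : ∀ a b c d e f, Q a b c d e f → Q a c b d e f)
    (swap_de : ∀ a b c d e f, Q a b c d e f → Q a b c e d f)
    (swap_ef : ∀ a b c d e f, Q a b c d e f → Q a b c d f e)
    (split : ∀ s ∈ splits, Q s.a s.b s.c s.d s.e s.f) (a b c d e f : Fin 6)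
    (h : IsArrangement a b c d e f) : Q a b c d e f := by
  have distinct : (a ≠ b ∧ a ≠ c ∧ b ≠ c) ∧ d ≠ e ∧ d ≠ f ∧ e ≠ f := by
    have hn := isArrangement_iff_nodup.1 h
    simp only [List.nodup_cons, List.mem_cons, not_or] at hn
    tauto
  obtain ⟨⟨hab, hac, hbc⟩, hde, hdf, hef⟩ := distinct
  refine of_increasing (Q := fun a b c => IsArrangement a b c d e f → Q a b c d e f)
    (fun a b c ih h => swap_ab _ _ _ _ _ _ (ih (h.of_eq (by abel))))
    (fun a b c ih h => swap_bc _ _ _ _ _ _ (ih (h.of_eq (by abel))))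
    (fun a b c ab bc h => ?_) a b c hab hac hbc h
  refine of_increasing (Q := fun d e f => IsArrangement a b c d e f → Q a b c d e f)
    (fun d e f ih h => swap_de _ _ _ _ _ _ (ih (h.of_eq (by abel))))
    (fun d e f ih h => swap_ef _ _ _ _ _ _ (ih (h.of_eq (by abel))))
    (fun d e f de ef h => ?_) d e f hde hdf hef h
  exact split ⟨a, b, c, d, e, f⟩ (mem_splits_of_lt a b ab c bc d e de f ef h)

end Arrangements

section Relations

open LinearExpr

/-- The word `J(a, b, c) d e f` as a linear form in the words listed in `words`. -/
def word (a b c d e f : Fin 6) : LinearExpr :=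
  if a < b then
    if b < c then var (words.idxOf ⟨a, b, c, d, e, f⟩)
    else if a < c then -var (words.idxOf ⟨a, c, b, d, e, f⟩)
    else var (words.idxOf ⟨c, a, b, d, e, f⟩)
  else if a < c then -var (words.idxOf ⟨b, a, c, d, e, f⟩)
  else if b < c then var (words.idxOf ⟨b, c, a, d, e, f⟩)
  else -var (words.idxOf ⟨c, b, a, d, e, f⟩)

/-- The expansion `IsMalcev.twelve_jac_mul_mul` of `12 J(a, b, c)(de)`, with `F x y z u v` standing
for `J(x, y, z) u v`. -/
def expansion {ι : Type*} (F : ι → ι → ι → ι → ι → LinearExpr) (a b c d e : ι) : LinearExpr :=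
  -F c d e a b + F b d e a c - (3 : ℤ) • F b c e a d + (3 : ℤ) • F b c d a e + F c d e b a
    - F a d e b c + (3 : ℤ) • F a c e b d - (3 : ℤ) • F a c d b e - F b d e c a + F a d e c b
    - (3 : ℤ) • F a b e c d + (3 : ℤ) • F a b d c e - (5 : ℤ) • F b c e d a
    + (5 : ℤ) • F a c e d b - (5 : ℤ) • F a b e d c - (3 : ℤ) • F a b c d e
    + (5 : ℤ) • F b c d e a - (5 : ℤ) • F a c d e b + (5 : ℤ) • F a b d e c
    + (3 : ℤ) • F a b c e d

/-- The word `12 J(a, b, c)(de) f`. -/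
def mulWord (a b c d e f : Fin 6) : LinearExpr :=
  expansion (fun x y z u v => word x y z u v f) a b c d e

/-- The word `36 J(a, b, c) d (ef)` modulo the elements `J(a, b, c)((de)f)`,
from `IsMalcev.three_mul_mul_mul`. -/
def wordMul (a b c d e f : Fin 6) : LinearExpr :=
  (36 : ℤ) • word a b c d e f - (36 : ℤ) • word a b c d f e
    + (12 : ℤ) • word a b c e f d - (12 : ℤ) • word a b c f e d - mulWord a b c e f d
    + (2 : ℤ) • ((12 : ℤ) • word a b c d f e - (12 : ℤ) • word a b c f d e - mulWord a b c d f e)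
    - (2 : ℤ) • ((12 : ℤ) • word a b c d e f - (12 : ℤ) • word a b c e d f - mulWord a b c d e f)

/-- The word `36 J(pq, y, z) u w`. -/
def jacWord (p q y z u w : Fin 6) : LinearExpr :=
  (12 : ℤ) • word q y z p u w - (12 : ℤ) • word p y z q u w
    - (24 : ℤ) • word p q z y u w + (24 : ℤ) • word p q y z u w

/-- The word `36 J(x, y, z) u w`, where `none` stands for the product `pq`, modulo the elements
`J(a, b, c)((de)f)`. Only words with exactly one product occur. -/
def contracted (p q : Fin 6) : (x y z u w : Option (Fin 6)) → LinearExpr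
  | none, some y, some z, some u, some w => jacWord p q y z u w
  | some x, none, some z, some u, some w => jacWord p q z x u w
  | some x, some y, none, some u, some w => jacWord p q x y u w
  | some x, some y, some z, none, some w => (3 : ℤ) • mulWord x y z p q w
  | some x, some y, some z, some u, none => wordMul x y z u p q
  | _, _, _, _, _ => var 0

/-- The expansion of `J(a, b, c)((de)f)`. -/
def mulRelation (a b c d e f : Fin 6) : LinearExpr :=
  expansion (contracted d e) (some a) (some b) (some c) none (some f)

/-- The difference of the two expansions of `J(ab, c, d)(ef)`. -/
def jacMulRelation (a b c d e f : Fin 6) : LinearExpr :=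
  expansion (contracted a b) none (some c) (some d) (some e) (some f)
    - (4 : ℤ) • wordMul b c d a e f + (4 : ℤ) • wordMul a c d b e f
    + (8 : ℤ) • wordMul a b d c e f - (8 : ℤ) • wordMul a b c d e f

/-- Linear relations between the words `J(a, b, c) d e f` modulo the generators. -/
def relations : List LinearExpr :=
  (splits.flatMap fun ⟨a, b, c, d, e, f⟩ =>
    [word a b c d e f + word a b c e f d + word a b c f d e,
      word a b c d f e + word a b c f e d + word a b c e d f]) ++
  splits.flatMap fun ⟨a, b, c, d, e, f⟩ =>
    [mulRelation a b c d e f, mulRelation a b c d f e, mulRelation a b c e f d,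
      jacMulRelation a b c d e f, jacMulRelation a b c e d f]

theorem isNonsingularMod_relations : IsNonsingularMod 5 (2 ^ 32) 120 relations :=
  ⟨2 ^ 24, by decide +kernel, by decide +kernel⟩

end Relations

section Values

variable {Z V : Type*} [NonUnitalNonAssocRing Z] [AddCommGroup V] {z : Fin 6 → Z} {φ : Z →+ V}
  {a b c d e f : Fin 6}

variable (z φ) in
/-- The values under `φ` of the words `J(a, b, c) d e f`, in the order of `words`. -/
def wordValues (k : ℕ) : V :=
  words[k]?.elim 0 fun s => φ (jac (z s.a) (z s.b) (z s.c) * z s.d * z s.e * z s.f)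

theorem wordValues_idxOf (h : (⟨a, b, c, d, e, f⟩ : Sextuple) ∈ words) :
    wordValues z φ (words.idxOf ⟨a, b, c, d, e, f⟩) =
      φ (jac (z a) (z b) (z c) * z d * z e * z f) := by
  rw [wordValues, List.getElem?_eq_getElem (List.idxOf_lt_length_of_mem h), List.getElem_idxOf]
  rfl

theorem value_word (hZ : IsMalcev Z) (h : IsArrangement a b c d e f) :
    (word a b c d e f).value (wordValues z φ) = φ (jac (z a) (z b) (z c) * z d * z e * z f) := by
  have hn := isArrangement_iff_nodup.1 h
  simp only [List.nodup_cons, List.mem_cons, not_or] at hn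
  have jac_rev : jac (z a) (z b) (z c) = -jac (z c) (z b) (z a) := by
    rw [hZ.jac_swap_left, hZ.jac_swap_right, hZ.jac_swap_left, neg_neg]
  unfold word
  split_ifs with ab bc ac ac bc <;>
    simp only [LinearExpr.value_var, LinearExpr.value_neg] <;>
    rw [wordValues_idxOf (mem_words_of_lt _ _ (by omega) _ (by omega) _ _ _
      (h.of_eq (by abel)))]
  · rw [hZ.jac_swap_right (z a) (z b)]
    simp only [neg_mul, map_neg, neg_neg]
  · rw [← jac_rotate]
  · rw [hZ.jac_swap_left (z a) (z b)]
    simp only [neg_mul, map_neg, neg_neg]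
  · rw [jac_rotate]
  · simp only [jac_rev, neg_mul, map_neg]

theorem value_expansion {ι : Type*} {F : ι → ι → ι → ι → ι → LinearExpr} {ζ : ι → Z}
    {vars : ι → Multiset (Fin 6)} {χ : Z →+ V} {u : ℕ → V} {m : ℤ} (hZ : IsMalcev Z) (a b c d e : ι)
    (hF : ∀ a' b' c' d' e', vars a' + vars b' + vars c' + vars d' + vars e' =
        vars a + vars b + vars c + vars d + vars e →
      (F a' b' c' d' e').value u = m • χ (jac (ζ a') (ζ b') (ζ c') * ζ d' * ζ e')) :
    (expansion F a b c d e).value u = (12 * m) • χ (jac (ζ a) (ζ b) (ζ c) * (ζ d * ζ e)) := by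
  rw [mul_comm, mul_smul, ← map_zsmul, hZ.twelve_jac_mul_mul]
  simp (disch := abel) only [expansion, LinearExpr.value_add, LinearExpr.value_sub,
    LinearExpr.value_neg, LinearExpr.value_smul, hF, map_add, map_sub, map_neg, map_zsmul]
  module

theorem value_mulWord (hZ : IsMalcev Z) (h : IsArrangement a b c d e f) :
    (mulWord a b c d e f).value (wordValues z φ) =
      (12 : ℤ) • φ (jac (z a) (z b) (z c) * (z d * z e) * z f) := by
  rw [mulWord, value_expansion (ζ := z) (vars := ({·})) (m := 1)
    (χ := φ.comp (AddMonoidHom.mulRight (z f))) hZ]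
  · simp
  · intro a' b' c' d' e' perm
    rw [value_word hZ (h.of_eq (by rw [perm]))]
    simp

theorem value_jacWord {p q y z' u w : Fin 6} (hZ : IsMalcev Z) (h : IsArrangement p q y z' u w) :
    (jacWord p q y z' u w).value (wordValues z φ) =
      (36 : ℤ) • φ (jac (z p * z q) (z y) (z z') * z u * z w) := by
  have expand := congrArg (fun x => φ (x * z u * z w)) (hZ.three_jac_mul (z p) (z q) (z y) (z z'))
  simp only [smul_mul_assoc, add_mul, sub_mul, map_add, map_sub, map_zsmul] at expand
  simp only [jacWord, LinearExpr.value_add, LinearExpr.value_sub, LinearExpr.value_smul]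
  rw [value_word hZ (h.of_eq (by abel)), value_word hZ (h.of_eq (by abel)),
    value_word hZ (h.of_eq (by abel)), value_word hZ (h.of_eq (by abel))]
  linear_combination (norm := module) (-12 : ℤ) • expand

theorem value_wordMul (hZ : IsMalcev Z)
    (hφ : ∀ a b c d e f, IsArrangement a b c d e f →
      φ (jac (z a) (z b) (z c) * (z d * z e * z f)) = 0) (h : IsArrangement a b c d e f) :
    (wordMul a b c d e f).value (wordValues z φ) =
      (36 : ℤ) • φ (jac (z a) (z b) (z c) * z d * (z e * z f)) := by
  have expand := congrArg φ (hZ.three_mul_mul_mul (jac (z a) (z b) (z c)) (z d) (z e) (z f))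
  simp only [jac.eq_def (z d), mul_add, sub_mul, map_add, map_sub, map_zsmul] at expand
  rw [hφ _ _ _ _ _ _ h, hφ _ _ _ _ _ _ (h.of_eq (by abel)), hφ _ _ _ _ _ _ (h.of_eq (by abel))]
    at expand
  simp (disch := exact h.of_eq (by abel)) only [wordMul, LinearExpr.value_add,
    LinearExpr.value_sub, LinearExpr.value_smul, value_word hZ, value_mulWord hZ]
  linear_combination (norm := module) (-12 : ℤ) • expand

end Values

/-- The cyclic sum of the words `x d e f` over `d, e, f`. -/
def cyclicSum {Z : Type*} [NonUnitalNonAssocRing Z] (x d e f : Z) : Z :=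
  x * d * e * f + x * e * f * d + x * f * d * e

section Relations

variable {Z V : Type*} [NonUnitalNonAssocRing Z] [AddCommGroup V] {z : Fin 6 → Z} {φ : Z →+ V}
  {a b c d e f p q : Fin 6} (hZ : IsMalcev Z)
  (hφ : ∀ a b c d e f, IsArrangement a b c d e f →
    φ (jac (z a) (z b) (z c) * (z d * z e * z f)) = 0)

include hZ hφ

theorem value_contracted (x y z' u w : Option (Fin 6))
    (h : (x.elim ({p} + {q}) ({·}) + y.elim ({p} + {q}) ({·}) + z'.elim ({p} + {q}) ({·}) +
      u.elim ({p} + {q}) ({·}) + w.elim ({p} + {q}) ({·}) : Multiset (Fin 6)) =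
        (Finset.univ : Finset (Fin 6)).val) :
    (contracted p q x y z' u w).value (wordValues z φ) = (36 : ℤ) •
      φ (jac (x.elim (z p * z q) z) (y.elim (z p * z q) z) (z'.elim (z p * z q) z) *
        u.elim (z p * z q) z * w.elim (z p * z q) z) := by
  have one_product := congrArg Multiset.card h
  rcases x with _ | x <;> rcases y with _ | y <;> rcases z' with _ | z' <;>
    rcases u with _ | u <;> rcases w with _ | w <;>
    simp only [Option.elim, Multiset.card_add, Multiset.card_singleton, Finset.card_val,
      Finset.card_univ, Fintype.card_fin] at h one_product ⊢ <;>
    first | omega | simp only [contracted]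
  · exact value_jacWord hZ (Eq.trans (by abel) h)
  · rw [value_jacWord hZ (Eq.trans (by abel) h), ← jac_rotate (z x)]
  · rw [value_jacWord hZ (Eq.trans (by abel) h), ← jac_rotate (z p * z q)]
  · rw [LinearExpr.value_smul, value_mulWord hZ (Eq.trans (by abel) h)]
    module
  · exact value_wordMul hZ hφ (Eq.trans (by abel) h)

theorem value_mulRelation (h : IsArrangement a b c d e f) :
    (mulRelation a b c d e f).value (wordValues z φ) = 0 := by
  rw [mulRelation, value_expansion hZ _ _ _ _ _ fun a' b' c' d' e' perm =>
    value_contracted hZ hφ a' b' c' d' e' (perm.trans (Eq.trans (by simp only [Option.elim]; abel)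
      h))]
  simp only [Option.elim]
  rw [hφ _ _ _ _ _ _ h, smul_zero]

theorem value_jacMulRelation (h : IsArrangement a b c d e f) :
    (jacMulRelation a b c d e f).value (wordValues z φ) = 0 := by
  have expand := congrArg (fun x => φ (x * (z e * z f)))
    (hZ.three_jac_mul (z a) (z b) (z c) (z d))
  simp only [smul_mul_assoc, add_mul, sub_mul, map_add, map_sub, map_zsmul] at expand
  simp only [jacMulRelation, LinearExpr.value_add, LinearExpr.value_sub, LinearExpr.value_smul]
  rw [value_expansion hZ _ _ _ _ _ fun a' b' c' d' e' perm =>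
      value_contracted hZ hφ a' b' c' d' e' (perm.trans (Eq.trans (by simp only [Option.elim]) h)),
    value_wordMul hZ hφ (h.of_eq (by abel)), value_wordMul hZ hφ (h.of_eq (by abel)),
    value_wordMul hZ hφ (h.of_eq (by abel)), value_wordMul hZ hφ h]
  simp only [Option.elim]
  linear_combination (norm := module) (144 : ℤ) • expand

theorem value_relations
    (hcyclic : ∀ s ∈ splits,
      φ (cyclicSum (jac (z s.a) (z s.b) (z s.c)) (z s.d) (z s.e) (z s.f)) = 0)
    (hcyclic' : ∀ s ∈ splits,
      φ (cyclicSum (jac (z s.a) (z s.b) (z s.c)) (z s.d) (z s.f) (z s.e)) = 0) :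
    ∀ r ∈ relations, r.value (wordValues z φ) = 0 := by
  simp only [relations, List.forall_mem_append, List.forall_mem_flatMap, List.forall_mem_cons,
    LinearExpr.value_add]
  simp only [cyclicSum, map_add] at hcyclic hcyclic'
  refine ⟨fun s hs => ?_, fun s hs => ?_⟩ <;> have h := isArrangement_of_mem_splits s hs
  · rw [value_word hZ h, value_word hZ (h.of_eq (by abel)), value_word hZ (h.of_eq (by abel)),
      value_word hZ (h.of_eq (by abel)), value_word hZ (h.of_eq (by abel)),
      value_word hZ (h.of_eq (by abel))]
    exact ⟨hcyclic s hs, hcyclic' s hs, List.forall_mem_nil _⟩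
  · exact ⟨value_mulRelation hZ hφ h, value_mulRelation hZ hφ (h.of_eq (by abel)),
      value_mulRelation hZ hφ (h.of_eq (by abel)), value_jacMulRelation hZ hφ h,
      value_jacMulRelation hZ hφ (h.of_eq (by abel)), List.forall_mem_nil _⟩

theorem wordValues_eq_zero [IsAddTorsionFree V]
    (hcyclic : ∀ s ∈ splits,
      φ (cyclicSum (jac (z s.a) (z s.b) (z s.c)) (z s.d) (z s.e) (z s.f)) = 0)
    (hcyclic' : ∀ s ∈ splits,
      φ (cyclicSum (jac (z s.a) (z s.b) (z s.c)) (z s.d) (z s.f) (z s.e)) = 0) (k : ℕ) :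
    wordValues z φ k = 0 := by
  refine isNonsingularMod_relations.eq_zero (by norm_num) (fun k hk => ?_)
    (value_relations hZ hφ hcyclic hcyclic') k
  rw [wordValues, List.getElem?_eq_none hk]
  rfl

end Relations

/-- A submodule that contains the values of all products of the Jacobian of three variables with
the three other variables. -/
structure ContainsJacobians {K Z : Type*} [Field K] [NonUnitalNonAssocRing Z] [Module K Z]
    (z : Fin 6 → Z) (S : Submodule K Z) : Prop where
  one_one_one : ∀ a b c d e f, IsArrangement a b c d e f →
    jac (z a) (z b) (z c) * z d * z e * z f ∈ S
  one_two : ∀ a b c d e f, IsArrangement a b c d e f →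
    jac (z a) (z b) (z c) * z d * (z e * z f) ∈ S
  two_one : ∀ a b c d e f, IsArrangement a b c d e f →
    jac (z a) (z b) (z c) * (z d * z e) * z f ∈ S
  three : ∀ a b c d e f, IsArrangement a b c d e f →
    jac (z a) (z b) (z c) * (z d * z e * z f) ∈ S

/-- The kinds of generators of the space of multilinear words of degree six with a Jacobian,
whose values are given by `genEval`. -/
inductive GenKind : Type
  | cyclic
  | cyclicSwap
  | mul
  | mulSwap
  | jac

/-- The `4 · 20 + 10` generators. Exchanging the two Jacobians in a product only changes its sign,
so the splits with `a = 0` suffice for `.jac`. -/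
def gens : List (GenKind × Sextuple) :=
  splits.map (Prod.mk .cyclic) ++ splits.map (Prod.mk .cyclicSwap) ++ splits.map (Prod.mk .mul) ++
    splits.map (Prod.mk .mulSwap) ++ (splits.filter fun s => s.a = 0).map (Prod.mk .jac)

section Generators

variable {K Z : Type*} [Field K] [NonUnitalNonAssocRing Z] [Module K Z]

/-- The value of a generator. -/
def genEval (z : Fin 6 → Z) : GenKind × Sextuple → Z
  | (.cyclic, ⟨a, b, c, d, e, f⟩) => cyclicSum (jac (z a) (z b) (z c)) (z d) (z e) (z f)
  | (.cyclicSwap, ⟨a, b, c, d, e, f⟩) => cyclicSum (jac (z a) (z b) (z c)) (z d) (z f) (z e)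
  | (.mul, ⟨a, b, c, d, e, f⟩) => jac (z a) (z b) (z c) * (z d * z e * z f)
  | (.mulSwap, ⟨a, b, c, d, e, f⟩) => jac (z a) (z b) (z c) * (z d * z f * z e)
  | (.jac, ⟨a, b, c, d, e, f⟩) => jac (z a) (z b) (z c) * jac (z d) (z e) (z f)

theorem mem_of_zsmul_mem [CharZero K] {S : Submodule K Z} {x : Z} {n : ℤ} (hn : n ≠ 0)
    (h : n • x ∈ S) : x ∈ S := by
  rw [← Int.cast_smul_eq_zsmul K] at h
  exact (S.smul_mem_iff (Int.cast_ne_zero.2 hn)).1 h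

variable {z : Fin 6 → Z} {S : Submodule K Z} (hZ : IsMalcev Z) (hS : ∀ g ∈ gens, genEval z g ∈ S)

include hZ hS

theorem jac_mul_jac_mem {s : Sextuple} (hs : s ∈ splits) :
    jac (z s.a) (z s.b) (z s.c) * jac (z s.d) (z s.e) (z s.f) ∈ S := by
  by_cases ha : s.a = 0
  · exact hS (.jac, s) (by simp [gens, hs, ha])
  · obtain ⟨mem, hd⟩ := mirror_mem_splits s hs ha
    rw [hZ.anticomm, neg_mem_iff]
    rw [hd] at mem
    have mem_gens : (.jac, ⟨0, s.e, s.f, s.a, s.b, s.c⟩) ∈ gens := by simp [gens, mem]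
    simpa only [genEval, hd] using hS _ mem_gens

theorem jac_mul_mem (a b c d e f : Fin 6) (h : IsArrangement a b c d e f) :
    jac (z a) (z b) (z c) * (z d * z e * z f) ∈ S := by
  refine (forall_of_splits (Q := fun a b c d e f =>
    jac (z a) (z b) (z c) * (z d * z e * z f) ∈ S ∧ jac (z a) (z b) (z c) * (z d * z f * z e) ∈ S ∧
    jac (z a) (z b) (z c) * (z e * z f * z d) ∈ S) (fun a b c d e f h => ?_)
    (fun a b c d e f h => ?_) (fun a b c d e f h => ?_) (fun a b c d e f h => ?_)
    (fun s hs => ?_) a b c d e f h).1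
  · simpa only [hZ.jac_swap_left (z a) (z b), neg_mul, neg_mem_iff] using h
  · simpa only [hZ.jac_swap_right (z a) (z b) (z c), neg_mul, neg_mem_iff] using h
  · rw [hZ.anticomm (z d), neg_mul, mul_neg, neg_mem_iff]
    exact ⟨h.1, h.2.2, h.2.1⟩
  · rw [hZ.anticomm (z e) (z f), neg_mul, mul_neg, neg_mem_iff]
    exact ⟨h.2.1, h.1, h.2.2⟩
  · have def_mem : jac (z s.a) (z s.b) (z s.c) * (z s.d * z s.e * z s.f) ∈ S :=
      hS (.mul, s) (by simp [gens, hs])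
    have dfe_mem : jac (z s.a) (z s.b) (z s.c) * (z s.d * z s.f * z s.e) ∈ S :=
      hS (.mulSwap, s) (by simp [gens, hs])
    refine ⟨def_mem, dfe_mem, ?_⟩
    have jac_mem := jac_mul_jac_mem hZ hS hs
    rw [jac.eq_def (z s.d), hZ.anticomm (z s.d) (z s.f), neg_mul, mul_add, mul_add, mul_neg]
      at jac_mem
    convert S.add_mem (S.sub_mem jac_mem def_mem) dfe_mem using 1
    abel

theorem containsJacobians_of_gens [CharZero K] : ContainsJacobians z S := by
  have := IsAddTorsionFree.of_isTorsionFree K (Z ⧸ S)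
  let φ : Z →+ Z ⧸ S := S.mkQ.toAddMonoidHom
  have map_eq_zero {x : Z} : φ x = 0 ↔ x ∈ S := Submodule.Quotient.mk_eq_zero S
  have map_jac_mul a b c d e f h := map_eq_zero.2 (jac_mul_mem hZ hS a b c d e f h)
  have values_eq_zero : wordValues z φ = 0 := funext <| wordValues_eq_zero hZ map_jac_mul
    (fun s hs => map_eq_zero.2 (hS (.cyclic, s) (by simp [gens, hs])))
    (fun s hs => map_eq_zero.2 (hS (.cyclicSwap, s) (by simp [gens, hs])))
  have mem_of_value {m : ℤ} (hm : m ≠ 0) {x : Z} {r : LinearExpr}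
      (h : r.value (wordValues z φ) = m • φ x) : x ∈ S := by
    rw [values_eq_zero, LinearExpr.value_zero, eq_comm, ← map_zsmul, map_eq_zero] at h
    exact mem_of_zsmul_mem hm h
  refine ⟨fun a b c d e f h => ?_, fun a b c d e f h => ?_, fun a b c d e f h => ?_,
    jac_mul_mem hZ hS⟩
  · exact mem_of_value one_ne_zero ((value_word hZ h).trans (one_smul ℤ _).symm)
  · exact mem_of_value (by norm_num) (value_wordMul hZ map_jac_mul h)
  · exact mem_of_value (by norm_num) (value_mulWord hZ h)

end Generators

/-! ### Spanning words -/

namespace BTree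

variable {n : ℕ}

theorem card_vars_pos : ∀ t : BTree n, 0 < t.vars.card
  | leaf _ => by simp [vars]
  | node s t => by
    rw [vars, Multiset.card_add]
    exact Nat.add_pos_left (card_vars_pos s) _

theorem eq_leaf_of_card : ∀ {t : BTree n}, t.vars.card = 1 → ∃ d, t = leaf d
  | leaf d, _ => ⟨d, rfl⟩
  | node s t, h => by
    rw [vars, Multiset.card_add] at h
    have := s.card_vars_pos
    have := t.card_vars_pos
    omega

theorem eq_node_of_card : ∀ {t : BTree n}, t.vars.card = 2 → ∃ d e, t = node (leaf d) (leaf e)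
  | leaf _, h => by simp [vars] at h
  | node s t, h => by
    rw [vars, Multiset.card_add] at h
    have := s.card_vars_pos
    have := t.card_vars_pos
    obtain ⟨d, rfl⟩ := eq_leaf_of_card (t := s) (by omega)
    obtain ⟨e, rfl⟩ := eq_leaf_of_card (t := t) (by omega)
    exact ⟨d, e, rfl⟩

theorem eq_node_node_of_card : ∀ {t : BTree n}, t.vars.card = 3 → ∃ d e f,
    t = node (node (leaf d) (leaf e)) (leaf f) ∨ t = node (leaf f) (node (leaf d) (leaf e))
  | leaf _, h => by simp [vars] at h
  | node s t, h => by
    rw [vars, Multiset.card_add] at h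
    have := s.card_vars_pos
    have := t.card_vars_pos
    rcases (by omega : s.vars.card = 1 ∨ s.vars.card = 2) with hs | hs
    · obtain ⟨f, rfl⟩ := eq_leaf_of_card hs
      obtain ⟨d, e, rfl⟩ := eq_node_of_card (t := t) (by omega)
      exact ⟨d, e, f, Or.inr rfl⟩
    · obtain ⟨d, e, rfl⟩ := eq_node_of_card hs
      obtain ⟨f, rfl⟩ := eq_leaf_of_card (t := t) (by omega)
      exact ⟨d, e, f, Or.inl rfl⟩

theorem list_eq_of_card_sum_vars : ∀ {ts : List (BTree n)}, (ts.map vars).sum.card = 3 → ∃ d e f,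
    ts = [leaf d, leaf e, leaf f] ∨ ts = [leaf d, node (leaf e) (leaf f)] ∨
    ts = [node (leaf d) (leaf e), leaf f] ∨ ts = [node (node (leaf d) (leaf e)) (leaf f)] ∨
    ts = [node (leaf f) (node (leaf d) (leaf e))] := by
  intro ts h
  match ts with
  | [] => simp at h
  | [s] =>
    obtain ⟨d, e, f, rfl | rfl⟩ := eq_node_node_of_card (t := s) (by simpa using h)
    all_goals exact ⟨d, e, f, by simp⟩
  | [s, t] =>
    simp only [List.map_cons, List.map_nil, List.sum_cons, List.sum_nil, Multiset.card_add] at h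
    have := s.card_vars_pos
    have := t.card_vars_pos
    rcases (by omega : s.vars.card = 1 ∨ s.vars.card = 2) with hs | hs
    · obtain ⟨d, rfl⟩ := eq_leaf_of_card hs
      obtain ⟨e, f, rfl⟩ := eq_node_of_card (t := t) (by simp at h; omega)
      exact ⟨d, e, f, by simp⟩
    · obtain ⟨d, e, rfl⟩ := eq_node_of_card hs
      obtain ⟨f, rfl⟩ := eq_leaf_of_card (t := t) (by simp at h; omega)
      exact ⟨d, e, f, by simp⟩
  | s :: t :: u :: ts =>
    simp only [List.map_cons, List.sum_cons, Multiset.card_add] at h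
    have := s.card_vars_pos
    have := t.card_vars_pos
    have := u.card_vars_pos
    obtain ⟨d, rfl⟩ := eq_leaf_of_card (t := s) (by omega)
    obtain ⟨e, rfl⟩ := eq_leaf_of_card (t := t) (by omega)
    obtain ⟨f, rfl⟩ := eq_leaf_of_card (t := u) (by omega)
    cases ts with
    | nil => exact ⟨d, e, f, by simp⟩
    | cons v _ =>
      have := v.card_vars_pos
      simp only [vars, Multiset.card_singleton, List.map_cons, List.sum_cons,
        Multiset.card_add] at h
      omega

end BTree

section Spanning

open BTree

variable {K Z : Type} [Field K] [NonUnitalNonAssocRing Z] [Module K Z] (z : Fin 6 → Z)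

/-- The value of a monomial in an algebra. -/
abbrev treeEval (t : BTree 6) : Z := t.eval (fun a b => a * b) z

variable [IsScalarTower K Z Z]

variable (K) in
/-- Right multiplication by the values of a list of monomials. -/
def mulTrees : List (BTree 6) → Z →ₗ[K] Z
  | [] => LinearMap.id
  | t :: ts => (mulTrees ts).comp (LinearMap.mulRight K (treeEval z t))

theorem mulTrees_cons (t : BTree 6) (ts : List (BTree 6)) (x : Z) :
    mulTrees K z (t :: ts) x = mulTrees K z ts (x * treeEval z t) := rfl

variable {z} {S : Submodule K Z} (hZ : IsMalcev Z)

include hZ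

theorem mulTrees_jac_mul_mem [CharZero K] {a b c d : BTree 6} {ts : List (BTree 6)}
    (ha : mulTrees K z (a :: ts) (jac (treeEval z b) (treeEval z c) (treeEval z d)) ∈ S)
    (hb : mulTrees K z (b :: ts) (jac (treeEval z a) (treeEval z c) (treeEval z d)) ∈ S)
    (hc : mulTrees K z (c :: ts) (jac (treeEval z a) (treeEval z b) (treeEval z d)) ∈ S)
    (hd : mulTrees K z (d :: ts) (jac (treeEval z a) (treeEval z b) (treeEval z c)) ∈ S) :
    mulTrees K z ts (jac (treeEval z (node a b)) (treeEval z c) (treeEval z d)) ∈ S := by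
  refine mem_of_zsmul_mem (n := 3) (by norm_num) ?_
  rw [← map_zsmul, show treeEval z (node a b) = treeEval z a * treeEval z b from rfl,
    hZ.three_jac_mul]
  simp only [map_add, map_sub, map_zsmul]
  exact S.add_mem (S.sub_mem (S.sub_mem ha hb) (S.smul_of_tower_mem (2 : ℤ) hc))
    (S.smul_of_tower_mem (2 : ℤ) hd)

variable (hS : ContainsJacobians z S)

include hS

theorem mulTrees_jac_leaf_mem (a b c : Fin 6) (ts : List (BTree 6))
    (h : {a} + {b} + {c} + (ts.map vars).sum = (Finset.univ : Finset (Fin 6)).val) :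
    mulTrees K z ts (jac (z a) (z b) (z c)) ∈ S := by
  have hcard : (ts.map vars).sum.card = 3 := by
    have := congrArg Multiset.card h
    simp only [Multiset.card_add, Multiset.card_singleton, Finset.card_val, Finset.card_univ,
      Fintype.card_fin] at this
    omega
  obtain ⟨d, e, f, rfl | rfl | rfl | rfl | rfl⟩ := list_eq_of_card_sum_vars hcard <;>
    simp only [List.map_cons, List.map_nil, List.sum_cons, List.sum_nil, vars] at h
  · exact hS.one_one_one a b c d e f (Eq.trans (by abel) h)
  · exact hS.one_two a b c d e f (Eq.trans (by abel) h)
  · exact hS.two_one a b c d e f (Eq.trans (by abel) h)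
  · exact hS.three a b c d e f (Eq.trans (by abel) h)
  · have mem := hS.three a b c d e f (Eq.trans (by abel) h)
    rwa [hZ.anticomm (z f), mul_neg, neg_mem_iff] at mem

theorem mulTrees_jac_mem [CharZero K] : ∀ (s t u : BTree 6) (ts : List (BTree 6)),
    s.vars + t.vars + u.vars + (ts.map vars).sum = (Finset.univ : Finset (Fin 6)).val →
    mulTrees K z ts (jac (treeEval z s) (treeEval z t) (treeEval z u)) ∈ S
  | node a b, c, d, ts, h => by
    refine mulTrees_jac_mul_mem hZ (mulTrees_jac_mem _ _ _ _ ?_) (mulTrees_jac_mem _ _ _ _ ?_)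
      (mulTrees_jac_mem _ _ _ _ ?_) (mulTrees_jac_mem _ _ _ _ ?_) <;>
    · simp only [← h, vars, List.map_cons, List.sum_cons]
      abel
  | leaf i, node a b, d, ts, h => by
    rw [← jac_rotate]
    refine mulTrees_jac_mul_mem hZ (mulTrees_jac_mem _ _ _ _ ?_) (mulTrees_jac_mem _ _ _ _ ?_)
      (mulTrees_jac_mem _ _ _ _ ?_) (mulTrees_jac_mem _ _ _ _ ?_) <;>
    · simp only [← h, vars, List.map_cons, List.sum_cons]
      abel
  | leaf i, leaf j, node a b, ts, h => by
    rw [jac_rotate]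
    refine mulTrees_jac_mul_mem hZ (mulTrees_jac_mem _ _ _ _ ?_) (mulTrees_jac_mem _ _ _ _ ?_)
      (mulTrees_jac_mem _ _ _ _ ?_) (mulTrees_jac_mem _ _ _ _ ?_) <;>
    · simp only [← h, vars, List.map_cons, List.sum_cons]
      abel
  | leaf i, leaf j, leaf k, ts, h => mulTrees_jac_leaf_mem hZ hS i j k ts h
termination_by s t u => sizeOf s + sizeOf t + sizeOf u

variable (z) in
omit hZ hS in
/-- The left-normed word that starts with the variable `0`. -/
def leftNormed (l : List (Fin 5)) : Z := l.foldl (fun x i => x * z i.succ) (z 0)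

variable (hW : ∀ l, leftNormed z l ∈ S)

include hW

theorem mulTrees_leftNormed_mem [CharZero K] : ∀ (ts : List (BTree 6)) (s : BTree 6)
    (l : List (Fin 5)), treeEval z s = leftNormed z l → 0 ∈ s.vars →
    s.vars + (ts.map vars).sum = (Finset.univ : Finset (Fin 6)).val →
    mulTrees K z ts (treeEval z s) ∈ S
  | [], s, l, hl, _, _ => by
    rw [hl]
    exact hW l
  | leaf i :: ts, s, l, hl, hs, h => by
    have nodup : (s.vars + ({i} + (ts.map vars).sum)).Nodup := h ▸ Finset.univ.nodup
    have hi : i ≠ 0 := fun hi =>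
      Multiset.disjoint_left.1 (Multiset.nodup_add.1 nodup).2.2 hs (by simp [hi])
    obtain ⟨j, rfl⟩ := Fin.exists_succ_eq.2 hi
    refine mulTrees_leftNormed_mem ts (node s (leaf j.succ)) (l ++ [j]) ?_
      (Multiset.mem_add.2 (Or.inl hs)) ?_
    · rw [leftNormed, List.foldl_append]
      exact congrArg (· * z j.succ) hl
    · simp only [← h, List.map_cons, List.sum_cons, vars, add_assoc]
  | node p q :: ts, s, l, hl, hs, h => by
    simp only [List.map_cons, List.sum_cons, vars] at h
    have pq_mem := mulTrees_leftNormed_mem (p :: q :: ts) s l hl hs (by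
      rw [← h, List.map_cons, List.map_cons, List.sum_cons, List.sum_cons]; abel)
    have qp_mem := mulTrees_leftNormed_mem (q :: p :: ts) s l hl hs (by
      rw [← h, List.map_cons, List.map_cons, List.sum_cons, List.sum_cons]; abel)
    have jac_mem := mulTrees_jac_mem hZ hS s p q ts (by rw [← h]; abel)
    rw [hZ.jac_eq_sub_sub, map_sub, map_sub] at jac_mem
    simp only [mulTrees_cons] at pq_mem qp_mem
    change mulTrees K z ts (treeEval z s * (treeEval z p * treeEval z q)) ∈ S
    convert S.sub_mem (S.sub_mem pq_mem qp_mem) jac_mem using 1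
    abel
termination_by ts => (ts.map sizeOf).sum
decreasing_by
  all_goals simp
  all_goals omega

theorem mulTrees_mem [CharZero K] : ∀ (s : BTree 6) (ts : List (BTree 6)), 0 ∈ s.vars →
    s.vars + (ts.map vars).sum = (Finset.univ : Finset (Fin 6)).val →
    mulTrees K z ts (treeEval z s) ∈ S
  | leaf i, ts, hs, h => by
    obtain rfl : 0 = i := Multiset.mem_singleton.1 hs
    exact mulTrees_leftNormed_mem hZ hS hW ts (leaf 0) [] rfl hs h
  | node p q, ts, hs, h => by
    rcases Multiset.mem_add.1 hs with hp | hq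
    · exact mulTrees_mem p (q :: ts) hp (by
        rw [← h, List.map_cons, List.sum_cons, vars, add_assoc])
    · have mem := mulTrees_mem q (p :: ts) hq (by
        rw [← h, List.map_cons, List.sum_cons, vars]; abel)
      rwa [mulTrees_cons, hZ.anticomm, map_neg, neg_mem_iff] at mem

theorem treeEval_mem [CharZero K] {t : BTree 6} (ht : t.Multilinear) : treeEval z t ∈ S :=
  mulTrees_mem hZ hS hW t [] (by rw [ht]; exact Finset.mem_univ (0 : Fin 6))
    (by simpa using show t.vars = _ from ht)

end Spanning

/-! ### Test algebras -/

theorem AlgebraOf.isAlternative {K V : Type*} [Field K] [AddCommGroup V] [Module K V]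
    {μ : V →ₗ[K] V →ₗ[K] V}
    (left : ∀ a b c, μ (μ b a) c - μ b (μ a c) = -(μ (μ a b) c - μ a (μ b c)))
    (right : ∀ a b c, μ (μ a c) b - μ a (μ c b) = -(μ (μ a b) c - μ a (μ b c))) :
    IsAlternative (AlgebraOf μ) :=
  ⟨left, right⟩

section Basis

variable {ι K V : Type*} [Field K] [AddCommGroup V] [Module K V] {μ : V →ₗ[K] V →ₗ[K] V}
  (b : Module.Basis ι K V)

include b

theorem AlgebraOf.isAlternative_of_basis
    (left : ∀ i j k, μ (μ (b j) (b i)) (b k) - μ (b j) (μ (b i) (b k)) =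
      -(μ (μ (b i) (b j)) (b k) - μ (b i) (μ (b j) (b k))))
    (right : ∀ i j k, μ (μ (b i) (b k)) (b j) - μ (b i) (μ (b k) (b j)) =
      -(μ (μ (b i) (b j)) (b k) - μ (b i) (μ (b j) (b k)))) :
    IsAlternative (AlgebraOf μ) := by
  let α : V →ₗ[K] V →ₗ[K] V →ₗ[K] V := μ.compr₂ μ - (LinearMap.llcomp K V V V).compl₁₂ μ μ
  have hleft : α.flip = -α := b.ext fun i => b.ext fun j => b.ext fun k => left i j k
  have hright : LinearMap.lflip.toLinearMap ∘ₗ α = -α :=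
    b.ext fun i => b.ext fun j => b.ext fun k => right i j k
  exact AlgebraOf.isAlternative
    (fun x y z => LinearMap.congr_fun (LinearMap.congr_fun₂ hleft x y) z)
    fun x y z => LinearMap.congr_fun (LinearMap.congr_fun₂ hright x y) z

theorem right_anticomm_of_basis
    (h : ∀ i j k, μ (μ (b i) (b k)) (b j) = -μ (μ (b i) (b j)) (b k)) (x y z : V) :
    μ (μ x z) y = -μ (μ x y) z := by
  have hflip : LinearMap.lflip.toLinearMap ∘ₗ (μ.compr₂ μ) = -μ.compr₂ μ :=
    b.ext fun i => b.ext fun j => b.ext fun k => h i j k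
  exact LinearMap.congr_fun (LinearMap.congr_fun₂ hflip x y) z

end Basis

section Twisted

variable (K : Type*) {w : ℕ} [Field K]

/-- The twisted group algebra of the group `(ℤ/2)ʷ`, with `e_i e_j = σ i j • e_{i ^^^ j}`. -/
noncomputable def twistedMul (σ : BitVec w → BitVec w → ℤ) :
    (BitVec w →₀ K) →ₗ[K] (BitVec w →₀ K) →ₗ[K] BitVec w →₀ K :=
  Finsupp.linearCombination K fun i => Finsupp.linearCombination K fun j =>
    σ i j • Finsupp.single (i ^^^ j) 1

variable {σ : BitVec w → BitVec w → ℤ}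

theorem twistedMul_single (i j : BitVec w) :
    twistedMul K σ (Finsupp.single i 1) (Finsupp.single j 1) =
      σ i j • Finsupp.single (i ^^^ j) 1 := by
  simp only [twistedMul, Finsupp.linearCombination_single, one_smul]

theorem twistedMul_right_anticomm
    (hσ : ∀ i j k, σ i k * σ (i ^^^ k) j = -(σ i j * σ (i ^^^ j) k)) (a b c : BitVec w →₀ K) :
    twistedMul K σ (twistedMul K σ a c) b = -twistedMul K σ (twistedMul K σ a b) c := by
  refine right_anticomm_of_basis Finsupp.basisSingleOne (fun i j k => ?_) a b c
  simp only [Finsupp.coe_basisSingleOne, twistedMul_single, map_zsmul, LinearMap.smul_apply,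
    smul_smul, hσ i j k, BitVec.xor_assoc, BitVec.xor_comm k, neg_smul]

/-- Alternativity of the twisted group algebra in terms of the coboundary of `σ`. -/
theorem twistedMul_isAlternative
    (left : ∀ i j k, σ j i * σ (j ^^^ i) k - σ i k * σ j (i ^^^ k) =
      -(σ i j * σ (i ^^^ j) k - σ j k * σ i (j ^^^ k)))
    (right : ∀ i j k, σ i k * σ (i ^^^ k) j - σ k j * σ i (k ^^^ j) =
      -(σ i j * σ (i ^^^ j) k - σ j k * σ i (j ^^^ k))) :
    IsAlternative (AlgebraOf (twistedMul K σ)) := by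
  refine AlgebraOf.isAlternative_of_basis Finsupp.basisSingleOne (fun i j k => ?_)
    fun i j k => ?_
  · simp only [Finsupp.coe_basisSingleOne, twistedMul_single, map_zsmul, LinearMap.smul_apply,
      smul_smul, ← BitVec.xor_assoc, BitVec.xor_comm j i,
      ← sub_smul, ← neg_smul]
    rw [← left, BitVec.xor_comm j i]
  · simp only [Finsupp.coe_basisSingleOne, twistedMul_single, map_zsmul, LinearMap.smul_apply,
      smul_smul, BitVec.xor_assoc, BitVec.xor_comm k j,
      ← sub_smul, ← neg_smul]
    rw [← right, BitVec.xor_comm k j]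

end Twisted

section TestAlgebras

/-- The signs of the octonions as a twisted group algebra of `(ℤ/2)³`, following Albuquerque and
Majid. Bit number `8 i + j` of the constant tells whether `e_i e_j = -e_(i ^^^ j)`; reading it off
a single numeral is what keeps the evaluation of `isNonsingularMod_testForms` cheap. -/
def octSign (i j : BitVec 3) : ℤ :=
  bif Nat.testBit 14728647580644578816 (8 * i.toNat + j.toNat) then -1 else 1

theorem octSign_swap_left : ∀ i j k : BitVec 3,
    octSign j i * octSign (j ^^^ i) k - octSign i k * octSign j (i ^^^ k) =
      -(octSign i j * octSign (i ^^^ j) k - octSign j k * octSign i (j ^^^ k)) := by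
  decide +kernel

theorem octSign_swap_right : ∀ i j k : BitVec 3,
    octSign i k * octSign (i ^^^ k) j - octSign k j * octSign i (k ^^^ j) =
      -(octSign i j * octSign (i ^^^ j) k - octSign j k * octSign i (j ^^^ k)) := by
  decide +kernel

variable (K : Type*) [Field K]

/-- The octonions. -/
abbrev OctAlgebra : Type _ := AlgebraOf (twistedMul K octSign)

theorem OctAlgebra.isAlternative : IsAlternative (OctAlgebra K) :=
  twistedMul_isAlternative K octSign_swap_left octSign_swap_right

/-- The degree modulo two of the exterior monomial `m`. -/
def isOdd (m : BitVec 7) : Bool := m[0] ^^ m[1] ^^ m[2] ^^ m[3] ^^ m[4] ^^ m[5] ^^ m[6]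

/-- The generators of the exterior algebra that act on it, all except the one with digit `6`. -/
def extVectors : List (BitVec 7) := [1, 2, 4, 8, 16, 32]

/-- The sign of the product of the exterior monomial `m` by the generator `v` from the right, or
`0` if it vanishes or `v` is not one of the generators that act. -/
def extSign (m v : BitVec 7) : ℤ :=
  bif extVectors.contains v && m &&& v == 0 then bif isOdd (m / v) then -1 else 1 else 0

theorem extSign_of_notMem {v : BitVec 7} (hv : v ∉ extVectors) (m : BitVec 7) :
    extSign m v = 0 := by
  simp [extSign, hv]

theorem extSign_anticomm (m v w : BitVec 7) :
    extSign m w * extSign (m ^^^ w) v = -(extSign m v * extSign (m ^^^ v) w) := by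
  by_cases hv : v ∈ extVectors
  · by_cases hw : w ∈ extVectors
    · have check : ∀ v ∈ extVectors, ∀ w ∈ extVectors, ∀ m,
          extSign m w * extSign (m ^^^ w) v = -(extSign m v * extSign (m ^^^ v) w) := by
        decide +kernel
      exact check v hv w hw m
    · simp only [extSign_of_notMem hw, zero_mul, mul_zero, neg_zero]
  · simp only [extSign_of_notMem hv, zero_mul, mul_zero, neg_zero]

/-- The exterior algebra, on which its generators act from the right. -/
noncomputable abbrev extMul : (BitVec 7 →₀ K) →ₗ[K] (BitVec 7 →₀ K) →ₗ[K] BitVec 7 →₀ K :=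
  twistedMul K extSign

theorem extMul_anticomm (m v w : BitVec 7 →₀ K) :
    extMul K (extMul K m w) v = -extMul K (extMul K m v) w :=
  twistedMul_right_anticomm K extSign_anticomm m v w

end TestAlgebras

section ExteriorBimodule

variable (K : Type*) [Field K]

/-- The product of the split null extension of the space of the generators `a` that act on the
exterior algebra by a bimodule, the sum of two copies of the exterior algebra. The right and the
left actions of a generator combine multiplication from the right with two reflections of `K²`
whose product has order three. -/
noncomputable def extProduct : (BitVec 7 →₀ K) × (BitVec 7 →₀ K) × (BitVec 7 →₀ K) →ₗ[K]
    (BitVec 7 →₀ K) × (BitVec 7 →₀ K) × (BitVec 7 →₀ K) →ₗ[K]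
    (BitVec 7 →₀ K) × (BitVec 7 →₀ K) × (BitVec 7 →₀ K) :=
  LinearMap.mk₂ K (fun p q => (0, extMul K p.2.2 q.1 + extMul K q.2.1 p.1,
      extMul K p.2.1 q.1 - extMul K q.2.1 p.1 - extMul K q.2.2 p.1))
    (fun p p' q => by ext1 <;> [simp; ext1] <;> simp <;> abel)
    (fun c p q => by simp [smul_sub])
    (fun p q q' => by ext1 <;> [simp; ext1] <;> simp <;> abel)
    (fun c p q => by simp [smul_sub])

theorem extProduct_apply (a b : BitVec 7 →₀ K) (p q : (BitVec 7 →₀ K) × (BitVec 7 →₀ K)) :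
    extProduct K (a, p) (b, q) = (0, extMul K p.2 b + extMul K q.1 a,
      extMul K p.1 b - extMul K q.1 a - extMul K q.2 a) := rfl

/-- The algebra with product `extProduct`. -/
abbrev ExtAlgebra : Type _ := AlgebraOf (extProduct K)

theorem ExtAlgebra.isAlternative : IsAlternative (ExtAlgebra K) := by
  have anticomm (a b : BitVec 7 →₀ K) := fun m => extMul_anticomm K m a b
  refine AlgebraOf.isAlternative (fun (a, p) (b, q) (c, r) => ?_)
    fun (a, p) (b, q) (c, r) => ?_ <;>
  · ext1
    · simp [extProduct_apply]
    · ext1 <;>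
      simp only [extProduct_apply, Prod.fst_sub, Prod.snd_sub, Prod.fst_neg, Prod.snd_neg, map_zero,
        map_add, map_sub, LinearMap.add_apply, LinearMap.sub_apply, anticomm b a, anticomm c a,
        anticomm c b] <;>
      abel

end ExteriorBimodule

section TestElements

variable (K : Type*) [Field K]

/-- The structure constants of the commutator of octonions. -/
def octBracket (i j : BitVec 3) : ℤ := octSign i j - octSign j i

/-- The basis octonions as elements of the commutator algebra. -/
noncomputable def octBasis (i : BitVec 3) : CommutatorAlgebra K (OctAlgebra K) :=
  AlgebraOf.of _ (AlgebraOf.of _ (Finsupp.single i 1))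

theorem octBasis_ne_zero (i : BitVec 3) : octBasis K i ≠ 0 := by
  simp [octBasis]

theorem octBasis_mul (i j : BitVec 3) :
    octBasis K i * octBasis K j = octBracket i j • octBasis K (i ^^^ j) := by
  simp only [octBasis, AlgebraOf.of_mul_of, commutator₂_apply, twistedMul_single, ← map_sub,
    ← map_zsmul, BitVec.xor_comm j i, ← sub_smul, octBracket]

/-- The eigenvalue of the commutator by a generator on the bimodule, up to sign. -/
def extScale (i : BitVec 7) : ℤ := bif isOdd i then 1 else 3

/-- The structure constants of the commutator of the exterior test algebra with respect to
`extBasis`. -/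
def extBracket (i j : BitVec 7) : ℤ :=
  bif i.msb then bif j.msb then 0 else extScale i * extSign i j
  else bif j.msb then -(extScale j * extSign j i) else 0

/-- The monomials without the generator of the exterior algebra that does not act, as elements of
the first summand, and the monomials with this generator, as elements of the bimodule. -/
noncomputable def extBasis (i : BitVec 7) : CommutatorAlgebra K (ExtAlgebra K) :=
  AlgebraOf.of _ (AlgebraOf.of (extProduct K)
    (bif i.msb then
      bif isOdd i then (0, Finsupp.single i 1, 0)
      else (0, -Finsupp.single i 1, (2 : ℤ) • Finsupp.single i 1)
    else (Finsupp.single i 1, 0, 0)))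

theorem extBasis_ne_zero (i : BitVec 7) : extBasis K i ≠ 0 := by
  simp only [extBasis, ne_eq, map_eq_zero_iff _ (LinearEquiv.injective _)]
  cases i.msb <;> cases isOdd i <;> simp

theorem isOdd_xor : ∀ v ∈ extVectors, ∀ i, isOdd (i ^^^ v) = !isOdd i := by
  decide +kernel

theorem extBasis_mul_of_msb (i j : BitVec 7) (hi : i.msb = true) (hj : j.msb = false) :
    extBasis K i * extBasis K j = (extScale i * extSign i j) • extBasis K (i ^^^ j) := by
  have hij : (i ^^^ j).msb = true := by rw [BitVec.msb_xor, hi, hj]; rfl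
  by_cases hv : j ∈ extVectors
  · simp only [extBasis, hi, hj, hij, isOdd_xor j hv i, AlgebraOf.of_mul_of, commutator₂_apply,
      ← map_sub, ← map_zsmul, cond_true, cond_false]
    congr 2
    cases h : isOdd i <;> refine Prod.ext ?_ (Prod.ext ?_ ?_) <;>
    · simp only [extProduct_apply, extScale, h, Bool.not_true, Bool.not_false, cond_true,
        cond_false, Prod.mk_sub_mk, Prod.smul_mk, map_neg, map_zsmul, map_zero, LinearMap.neg_apply,
        LinearMap.smul_apply, LinearMap.zero_apply, twistedMul_single]
      module
  · simp only [extBasis, hi, hj, hij, AlgebraOf.of_mul_of, commutator₂_apply,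
      ← map_sub, cond_true, cond_false, extSign_of_notMem hv, mul_zero, zero_smul]
    rw [map_eq_zero_iff _ (LinearEquiv.injective _), map_eq_zero_iff _ (LinearEquiv.injective _)]
    cases isOdd i <;>
      simp [extProduct_apply, twistedMul_single, extSign_of_notMem hv, -Finsupp.smul_single]

theorem extBasis_mul (i j : BitVec 7) :
    extBasis K i * extBasis K j = extBracket i j • extBasis K (i ^^^ j) := by
  have anticomm := ((ExtAlgebra.isAlternative K).isMalcev K).anticomm
  cases hi : i.msb <;> cases hj : j.msb
  · simp [extBasis, extBracket, hi, hj, AlgebraOf.of_mul_of, commutator₂_apply, extProduct_apply]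
  · rw [anticomm, extBasis_mul_of_msb K j i hj hi, extBracket, hi, hj, BitVec.xor_comm j i]
    simp only [cond_true, cond_false, neg_smul]
  · rw [extBasis_mul_of_msb K i j hi hj, extBracket, hi, hj]
    simp only [cond_true, cond_false]
  · simp only [extBasis, extBracket, hi, hj, AlgebraOf.of_mul_of, commutator₂_apply, cond_true,
      zero_smul]
    cases isOdd i <;> cases isOdd j <;> simp [extProduct_apply]

end TestElements

/-! ### Linear independence of the generators -/

theorem xor_of_mem_splits {w : ℕ} (x : Fin 6 → BitVec w) : ∀ s ∈ splits,
    x s.a ^^^ x s.b ^^^ x s.c ^^^ x s.d ^^^ x s.e ^^^ x s.f =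
      x 0 ^^^ x 1 ^^^ x 2 ^^^ x 3 ^^^ x 4 ^^^ x 5 := by
  intro s hs
  fin_cases hs <;> dsimp only <;> ac_rfl

theorem snd_mem_splits {g : GenKind × Sextuple} (hg : g ∈ gens) : g.2 ∈ splits := by
  simp only [gens, List.mem_append, List.mem_map, List.mem_filter] at hg
  aesop

theorem cyclicSum_smul {Z : Type*} [NonUnitalNonAssocRing Z] (n : ℤ) (x d e f : Z) :
    cyclicSum (n • x) d e f = n • cyclicSum x d e f := by
  simp only [cyclicSum, smul_mul_assoc, smul_add]

section Graded

variable {w : ℕ} (σ : BitVec w → BitVec w → ℤ)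

/-- The coefficient of the Jacobian of three elements of a basis with
`e_i e_j = σ i j • e_{i ^^^ j}`. -/
def jacCoeff (i j k : BitVec w) : ℤ :=
  σ i j * σ (i ^^^ j) k + σ j k * σ (j ^^^ k) i + σ k i * σ (k ^^^ i) j

/-- The coefficient of the cyclic sum over `d`, `e`, `f` of the product `((e_i e_d) e_e) e_f`. -/
def cyclicCoeff (i d e f : BitVec w) : ℤ :=
  σ i d * σ (i ^^^ d) e * σ (i ^^^ d ^^^ e) f + σ i e * σ (i ^^^ e) f * σ (i ^^^ e ^^^ f) d +
    σ i f * σ (i ^^^ f) d * σ (i ^^^ f ^^^ d) e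

/-- The coefficient of the product `e_i ((e_d e_e) e_f)`. -/
def mulCoeff (i d e f : BitVec w) : ℤ := σ d e * σ (d ^^^ e) f * σ i (d ^^^ e ^^^ f)

/-- The coefficient of the value of a generator at the basis elements with the indices `x`. -/
def genCoeff (x : Fin 6 → BitVec w) : GenKind × Sextuple → ℤ
  | (k, ⟨a, b, c, d, e, f⟩) =>
    let i := x a ^^^ x b ^^^ x c
    jacCoeff σ (x a) (x b) (x c) *
    match k with
    | .cyclic => cyclicCoeff σ i (x d) (x e) (x f)
    | .cyclicSwap => cyclicCoeff σ i (x d) (x f) (x e)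
    | .mul => mulCoeff σ i (x d) (x e) (x f)
    | .mulSwap => mulCoeff σ i (x d) (x f) (x e)
    | .jac => jacCoeff σ (x d) (x e) (x f) * σ i (x d ^^^ x e ^^^ x f)

variable {σ} {Z : Type*} [NonUnitalNonAssocRing Z] {B : BitVec w → Z}
  (hB : ∀ i j, B i * B j = σ i j • B (i ^^^ j))

include hB

theorem jac_basis (i j k : BitVec w) :
    jac (B i) (B j) (B k) = jacCoeff σ i j k • B (i ^^^ j ^^^ k) := by
  have jki : j ^^^ k ^^^ i = i ^^^ j ^^^ k := by ac_rfl
  have kij : k ^^^ i ^^^ j = i ^^^ j ^^^ k := by ac_rfl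
  simp only [jac, hB, smul_mul_assoc, smul_smul, jki, kij, jacCoeff, add_smul]

theorem cyclicSum_basis (i d e f : BitVec w) :
    cyclicSum (B i) (B d) (B e) (B f) = cyclicCoeff σ i d e f • B (i ^^^ d ^^^ e ^^^ f) := by
  have efd : i ^^^ e ^^^ f ^^^ d = i ^^^ d ^^^ e ^^^ f := by ac_rfl
  have fde : i ^^^ f ^^^ d ^^^ e = i ^^^ d ^^^ e ^^^ f := by ac_rfl
  simp only [cyclicSum, hB, smul_mul_assoc, smul_smul, efd, fde, cyclicCoeff, add_smul]

theorem mul_mul_mul_basis (i d e f : BitVec w) :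
    B i * (B d * B e * B f) = mulCoeff σ i d e f • B (i ^^^ d ^^^ e ^^^ f) := by
  simp only [hB, smul_mul_assoc, mul_smul_comm, smul_smul, mulCoeff, BitVec.xor_assoc]

theorem genEval_basis (x : Fin 6 → BitVec w) : ∀ g ∈ gens, genEval (fun i => B (x i)) g =
    genCoeff σ x g • B (x 0 ^^^ x 1 ^^^ x 2 ^^^ x 3 ^^^ x 4 ^^^ x 5) := by
  rintro ⟨k, s⟩ hg
  rw [← xor_of_mem_splits x s (snd_mem_splits hg)]
  obtain ⟨a, b, c, d, e, f⟩ := s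
  have swap : B (x a ^^^ x b ^^^ x c ^^^ x d ^^^ x f ^^^ x e) =
      B (x a ^^^ x b ^^^ x c ^^^ x d ^^^ x e ^^^ x f) := congrArg B (by ac_rfl)
  have assoc : x a ^^^ x b ^^^ x c ^^^ (x d ^^^ x e ^^^ x f) =
      x a ^^^ x b ^^^ x c ^^^ x d ^^^ x e ^^^ x f := by ac_rfl
  cases k <;> simp only [genEval, genCoeff, jac_basis hB, smul_mul_assoc]
  case cyclic => rw [cyclicSum_smul, cyclicSum_basis hB, smul_smul]
  case cyclicSwap => rw [cyclicSum_smul, cyclicSum_basis hB, smul_smul, swap]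
  case mul => rw [mul_mul_mul_basis hB, smul_smul]
  case mulSwap => rw [mul_mul_mul_basis hB, smul_smul, swap]
  case jac => rw [mul_smul_comm, hB, smul_smul, smul_smul, assoc, mul_assoc]

end Graded

namespace LinearExpr

/-- The linear form with the coefficients `c`. -/
def linearForm {n : ℕ} (c : Fin n → ℤ) : LinearExpr :=
  (List.finRange n).foldr (fun k s => c k • var k + s) ((0 : ℤ) • var 0)

theorem value_linearForm {V : Type*} [AddCommGroup V] {n : ℕ} (c : Fin n → ℤ) (d : ℕ → V) :
    (linearForm c).value d = ∑ k, c k • d k := by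
  rw [Fin.sum_univ_def, linearForm]
  induction List.finRange n with
  | nil => simp
  | cons k l ih => simp [ih]

end LinearExpr

section TestForms

/-- The indices of the basis octonions substituted for the variables. -/
def octAssignments : List (Fin 6 → BitVec 3) :=
  [![1, 2, 2, 2, 2, 4], ![1, 1, 2, 1, 1, 4], ![1, 2, 4, 1, 1, 1], ![1, 2, 2, 2, 4, 2],
    ![1, 2, 1, 4, 1, 1], ![1, 1, 1, 1, 2, 4], ![1, 2, 1, 1, 4, 1], ![1, 1, 1, 2, 1, 4],
    ![1, 1, 2, 4, 1, 1], ![1, 2, 2, 4, 2, 2], ![1, 1, 1, 2, 4, 2], ![1, 1, 2, 4, 1, 2],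
    ![1, 1, 2, 1, 2, 4], ![1, 1, 2, 2, 1, 4], ![1, 2, 2, 4, 4, 2], ![1, 1, 2, 4, 2, 1],
    ![1, 1, 2, 4, 4, 1], ![1, 2, 1, 4, 4, 1], ![1, 1, 2, 1, 4, 4], ![1, 2, 2, 2, 4, 4],
    ![1, 2, 1, 4, 1, 4], ![1, 2, 1, 2, 1, 4], ![1, 2, 4, 1, 4, 5], ![1, 2, 3, 1, 4, 3],
    ![1, 1, 2, 4, 3, 1], ![1, 2, 1, 1, 2, 4], ![1, 2, 1, 4, 2, 1], ![1, 2, 1, 3, 4, 2],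
    ![1, 2, 4, 2, 6, 4], ![1, 2, 4, 4, 1, 5], ![1, 2, 3, 4, 1, 2], ![1, 2, 3, 4, 1, 3],
    ![1, 2, 1, 4, 5, 1], ![1, 2, 3, 4, 3, 2], ![1, 2, 4, 2, 3, 1], ![1, 2, 2, 1, 4, 3],
    ![1, 2, 4, 1, 1, 2], ![1, 2, 4, 5, 5, 4], ![1, 2, 4, 5, 1, 4], ![1, 2, 3, 4, 2, 1],
    ![1, 1, 2, 1, 4, 3], ![1, 2, 3, 3, 1, 4], ![1, 2, 1, 1, 4, 5], ![1, 2, 4, 1, 2, 1],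
    ![1, 2, 2, 4, 2, 6], ![1, 2, 2, 4, 6, 2], ![1, 2, 1, 4, 1, 5], ![1, 2, 4, 1, 1, 5],
    ![1, 2, 4, 1, 5, 1], ![1, 2, 4, 6, 2, 2], ![1, 1, 2, 1, 4, 6], ![1, 1, 2, 4, 1, 6],
    ![1, 2, 1, 1, 4, 6], ![1, 1, 2, 4, 6, 1], ![1, 2, 1, 4, 1, 6], ![1, 1, 1, 2, 4, 6],
    ![1, 2, 1, 4, 6, 1], ![1, 2, 4, 1, 1, 6], ![1, 2, 4, 1, 6, 1], ![1, 2, 4, 6, 1, 1],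
    ![1, 2, 4, 2, 3, 4], ![1, 2, 4, 4, 3, 2], ![1, 2, 4, 4, 2, 3], ![1, 2, 4, 3, 2, 4],
    ![1, 2, 4, 1, 4, 3], ![1, 1, 2, 2, 4, 5], ![1, 1, 2, 4, 3, 4], ![1, 2, 4, 2, 1, 5],
    ![1, 1, 2, 4, 4, 3], ![1, 2, 1, 4, 3, 6], ![1, 2, 4, 7, 6, 1], ![1, 1, 2, 4, 5, 7],
    ![1, 1, 2, 4, 7, 6], ![1, 2, 4, 5, 7, 1], ![1, 1, 2, 3, 4, 7], ![1, 2, 4, 3, 1, 6],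
    ![1, 1, 2, 4, 6, 3], ![1, 2, 4, 5, 1, 7], ![1, 2, 3, 1, 4, 6], ![1, 2, 1, 3, 4, 7],
    ![1, 2, 4, 7, 2, 3], ![1, 2, 3, 4, 1, 7], ![1, 2, 4, 5, 6, 1], ![1, 2, 3, 4, 6, 7]]

/-- The indices of the basis elements of the exterior algebra and of the bimodule substituted for
the variables. -/
def extAssignments : List (Fin 6 → BitVec 7) :=
  [![64, 2, 4, 8, 16, 32], ![1, 64, 4, 8, 16, 32], ![1, 2, 64, 8, 16, 32],
    ![1, 2, 4, 64, 16, 32], ![1, 2, 4, 8, 64, 32], ![1, 2, 4, 8, 16, 64]]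

/-- The linear form taking the coefficients of a combination of the generators to the coefficient
of its value at the basis elements with the indices `x`. -/
def testForm {w : ℕ} (σ : BitVec w → BitVec w → ℤ) (x : Fin 6 → BitVec w) : LinearExpr :=
  LinearExpr.linearForm fun k : Fin gens.length => genCoeff σ x gens[k]

/-- The test forms of all assignments. -/
def testForms : List LinearExpr :=
  octAssignments.map (testForm octBracket) ++ extAssignments.map (testForm extBracket)

theorem isNonsingularMod_testForms : IsNonsingularMod 11 (2 ^ 32) gens.length testForms :=
  ⟨2 ^ 16, by decide +kernel, by decide +kernel⟩

end TestForms

theorem sum_genCoeff_smul_eq_zero {K Z : Type*} [Field K] [NonUnitalNonAssocRing Z] [Module K Z]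
    {w : ℕ} {σ : BitVec w → BitVec w → ℤ} {B : BitVec w → Z}
    (hB : ∀ i j, B i * B j = σ i j • B (i ^^^ j)) (hB_ne_zero : ∀ i, B i ≠ 0)
    {x : Fin 6 → BitVec w} {c : Fin gens.length → K}
    (h : ∑ k, c k • genEval (fun i => B (x i)) gens[k] = 0) :
    ∑ k, genCoeff σ x gens[k] • c k = 0 := by
  simp only [genEval_basis hB x _ (List.getElem_mem _), Fin.getElem_fin, smul_comm (c _),
    ← smul_assoc, ← Finset.sum_smul] at h
  exact (smul_eq_zero.1 h).resolve_right (hB_ne_zero _)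

theorem eq_zero_of_sum_genEval_eq_zero {K : Type*} [Field K] [CharZero K]
    {c : Fin gens.length → K}
    (oct : ∀ x : Fin 6 → BitVec 3, ∑ k, c k • genEval (fun i => octBasis K (x i)) gens[k] = 0)
    (ext : ∀ x : Fin 6 → BitVec 7, ∑ k, c k • genEval (fun i => extBasis K (x i)) gens[k] = 0) :
    c = 0 := by
  let d (k : ℕ) : K := if hk : k < gens.length then c ⟨k, hk⟩ else 0
  have value_testForm {w : ℕ} (σ : BitVec w → BitVec w → ℤ) (x : Fin 6 → BitVec w) :
      (testForm σ x).value d = ∑ k, genCoeff σ x gens[k] • c k := by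
    simp [testForm, LinearExpr.value_linearForm, d]
  have eq_zero := isNonsingularMod_testForms.eq_zero (by norm_num) (d := d)
    (fun k hk => dif_neg hk.not_gt) fun e he => by
      simp only [testForms, List.mem_append, List.mem_map] at he
      obtain ⟨x, -, rfl⟩ | ⟨x, -, rfl⟩ := he
      · rw [value_testForm]
        exact sum_genCoeff_smul_eq_zero (octBasis_mul K) (octBasis_ne_zero K) (oct x)
      · rw [value_testForm]
        exact sum_genCoeff_smul_eq_zero (extBasis_mul K) (extBasis_ne_zero K) (ext x)
  funext k
  simpa [d] using eq_zero k

/-! ### Commutator identities -/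

section WordAlgebra

theorem IsAlternative.of_nonUnitalRing (A : Type*) [NonUnitalRing A] : IsAlternative A where
  swap_left a b c := by simp only [associator_eq_zero, Pi.zero_apply, neg_zero]
  swap_right a b c := by simp only [associator_eq_zero, Pi.zero_apply, neg_zero]

variable (K : Type) [Field K]

/-- The endomorphisms of the sum of a line and the free module on the words in five letters. -/
abbrev WordAlgebra : Type _ := Module.End K (K × (List (Fin 5) →₀ K))

/-- The endomorphism that takes the generator of the line to a word. -/
noncomputable def wordMap (l : List (Fin 5)) : WordAlgebra K :=
  LinearMap.inr K K _ ∘ₗ LinearMap.toSpanSingleton K _ (Finsupp.single l 1) ∘ₗ LinearMap.fst K K _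

/-- The endomorphism that appends a letter to a word; the sign cancels the one in the commutator. -/
noncomputable def appendLetter (i : Fin 5) : WordAlgebra K :=
  -(LinearMap.inr K K _ ∘ₗ Finsupp.lmapDomain K K (· ++ [i]) ∘ₗ LinearMap.snd K K _)

/-- The elements of the commutator algebra whose left-normed words are linearly independent. -/
noncomputable def wordPoint : Fin 6 → CommutatorAlgebra K (WordAlgebra K) :=
  Fin.cons (AlgebraOf.of _ (wordMap K [])) fun i => AlgebraOf.of _ (appendLetter K i)

theorem wordMap_mul_appendLetter_sub (l : List (Fin 5)) (i : Fin 5) :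
    wordMap K l * appendLetter K i - appendLetter K i * wordMap K l = wordMap K (l ++ [i]) := by
  ext <;> simp [wordMap, appendLetter]

theorem leftNormed_wordPoint (l : List (Fin 5)) :
    leftNormed (wordPoint K) l = AlgebraOf.of _ (wordMap K l) := by
  induction l using List.reverseRecOn with
  | nil => rfl
  | append_singleton l i ih =>
    rw [← wordMap_mul_appendLetter_sub, leftNormed, List.foldl_concat, ← leftNormed.eq_def, ih]
    rfl

theorem linearIndependent_leftNormed_wordPoint :
    LinearIndependent K (leftNormed (wordPoint K)) := by
  let evalOne : CommutatorAlgebra K (WordAlgebra K) →ₗ[K] List (Fin 5) →₀ K :=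
    LinearMap.snd K K _ ∘ₗ LinearMap.applyₗ (1, 0) ∘ₗ (AlgebraOf.of _).symm.toLinearMap
  refine .of_comp evalOne ?_
  convert Finsupp.linearIndependent_single_one K (List (Fin 5)) using 1
  funext l
  simp [evalOne, leftNormed_wordPoint, wordMap]

theorem genEval_eq_zero_of_nonUnitalRing {A : Type} [NonUnitalRing A] [Module K A]
    [IsScalarTower K A A] [SMulCommClass K A A] (z : Fin 6 → CommutatorAlgebra K A) :
    ∀ g, genEval z g = 0 := by
  have jac_eq_zero (a b c : CommutatorAlgebra K A) : jac a b c = 0 := by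
    obtain ⟨a, rfl⟩ := (AlgebraOf.of _).surjective a
    obtain ⟨b, rfl⟩ := (AlgebraOf.of _).surjective b
    obtain ⟨c, rfl⟩ := (AlgebraOf.of _).surjective c
    simp [(IsAlternative.of_nonUnitalRing A).jac_of K]
  rintro ⟨_ | _ | _ | _ | _, s⟩ <;> simp [genEval, jac_eq_zero, cyclicSum]

end WordAlgebra

section Homomorphisms

variable {Z W F : Type} [NonUnitalNonAssocRing Z] [NonUnitalNonAssocRing W] [FunLike F Z W]
  [NonUnitalRingHomClass F Z W] (φ : F) (z : Fin 6 → Z)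

theorem map_leftNormed (l : List (Fin 5)) :
    φ (leftNormed z l) = leftNormed (fun i => φ (z i)) l := by
  induction l using List.reverseRecOn with
  | nil => rfl
  | append_singleton l i ih =>
    simpa only [leftNormed, List.foldl_concat, map_mul] using congrArg (· * φ (z i.succ)) ih

theorem map_genEval (g : GenKind × Sextuple) : φ (genEval z g) = genEval (fun i => φ (z i)) g := by
  obtain ⟨_ | _ | _ | _ | _, s⟩ := g <;> simp only [genEval, cyclicSum, jac, map_add, map_mul]

theorem map_treeEval : ∀ t : BTree 6, φ (treeEval z t) = treeEval (fun i => φ (z i)) t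
  | .leaf _ => rfl
  | .node s t => (map_mul φ _ _).trans (congrArg₂ (· * ·) (map_treeEval s) (map_treeEval t))

end Homomorphisms

section Transfer

theorem IsMalcev.prod {Z W : Type*} [NonUnitalNonAssocRing Z] [NonUnitalNonAssocRing W]
    (hZ : IsMalcev Z) (hW : IsMalcev W) : IsMalcev (Z × W) where
  anticomm a b := Prod.ext (hZ.anticomm a.1 b.1) (hW.anticomm a.2 b.2)
  three_jac_mul a b c d := Prod.ext (hZ.three_jac_mul a.1 b.1 c.1 d.1)
    (hW.three_jac_mul a.2 b.2 c.2 d.2)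

theorem IsMalcev.pi {ι : Type*} {Z : ι → Type*} [∀ i, NonUnitalNonAssocRing (Z i)]
    (hZ : ∀ i, IsMalcev (Z i)) : IsMalcev (∀ i, Z i) where
  anticomm a b := funext fun i => (hZ i).anticomm (a i) (b i)
  three_jac_mul a b c d := funext fun i => (hZ i).three_jac_mul (a i) (b i) (c i) (d i)

/-- The left-normed words and the generators, a spanning set for the values of multilinear
monomials. -/
def spanningFamily {Z : Type} [NonUnitalNonAssocRing Z] (z : Fin 6 → Z) :
    List (Fin 5) ⊕ Fin gens.length → Z :=
  Sum.elim (leftNormed z) fun k => genEval z gens[k]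

theorem treeEval_mem_span_spanningFamily {K Z : Type} [Field K] [CharZero K]
    [NonUnitalNonAssocRing Z] [Module K Z] [IsScalarTower K Z Z] (hZ : IsMalcev Z) (z : Fin 6 → Z)
    {t : BTree 6} (ht : t.Multilinear) :
    treeEval z t ∈ Submodule.span K (Set.range (spanningFamily z)) := by
  refine treeEval_mem hZ (containsJacobians_of_gens hZ fun g hg => ?_)
    (fun l => Submodule.subset_span (Set.mem_range_self (Sum.inl l))) ht
  obtain ⟨k, hk, rfl⟩ := List.getElem_of_mem hg
  exact Submodule.subset_span (Set.mem_range_self (Sum.inr (⟨k, hk⟩ : Fin gens.length)))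

variable (K : Type) [Field K]

/-- A product of commutator algebras of alternative algebras in which the spanning family is
linearly independent. -/
abbrev TestAlgebra : Type := CommutatorAlgebra K (WordAlgebra K) ×
  ((Fin 6 → BitVec 3) → CommutatorAlgebra K (OctAlgebra K)) ×
  ((Fin 6 → BitVec 7) → CommutatorAlgebra K (ExtAlgebra K))

theorem TestAlgebra.isMalcev : IsMalcev (TestAlgebra K) :=
  ((IsAlternative.of_nonUnitalRing (WordAlgebra K)).isMalcev K).prod <|
    (IsMalcev.pi fun _ => (OctAlgebra.isAlternative K).isMalcev K).prod
      (IsMalcev.pi fun _ => (ExtAlgebra.isAlternative K).isMalcev K)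

/-- The elements of the test algebra that realize all assignments simultaneously. -/
noncomputable def testPoint (i : Fin 6) : TestAlgebra K :=
  (wordPoint K i, fun x => octBasis K (x i), fun x => extBasis K (x i))

theorem linearIndependent_genEval_testPoint [CharZero K] :
    LinearIndependent K fun k : Fin gens.length => (genEval (testPoint K) gens[k]).2 := by
  refine Fintype.linearIndependent_iff.2 fun c h => congrFun (eq_zero_of_sum_genEval_eq_zero
    (fun x => ?_) fun x => ?_)
  · let oct : TestAlgebra K →ₙ+* CommutatorAlgebra K (OctAlgebra K) :=
      (Pi.evalNonUnitalRingHom _ x).comp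
        ((NonUnitalRingHom.fst _ _).comp (NonUnitalRingHom.snd _ _))
    have oct_genEval (g) : (genEval (testPoint K) g).2.1 x =
        genEval (fun i => octBasis K (x i)) g := map_genEval oct (testPoint K) g
    simpa only [Prod.fst_sum, Prod.fst_zero, Pi.zero_apply, Finset.sum_apply, Prod.smul_fst,
      Pi.smul_apply, oct_genEval] using congrFun (congrArg Prod.fst h) x
  · let ext : TestAlgebra K →ₙ+* CommutatorAlgebra K (ExtAlgebra K) :=
      (Pi.evalNonUnitalRingHom _ x).comp
        ((NonUnitalRingHom.snd _ _).comp (NonUnitalRingHom.snd _ _))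
    have ext_genEval (g) : (genEval (testPoint K) g).2.2 x =
        genEval (fun i => extBasis K (x i)) g := map_genEval ext (testPoint K) g
    simpa only [Prod.snd_sum, Prod.snd_zero, Pi.zero_apply, Finset.sum_apply, Prod.smul_snd,
      Pi.smul_apply, ext_genEval] using congrFun (congrArg Prod.snd h) x

theorem linearIndependent_spanningFamily_testPoint [CharZero K] :
    LinearIndependent K (spanningFamily (testPoint K)) := by
  have word_leftNormed : LinearMap.fst K _ _ ∘ leftNormed (testPoint K) =
      leftNormed (wordPoint K) :=
    funext (map_leftNormed (NonUnitalRingHom.fst _ _) (testPoint K))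
  have word_genEval (g) : (genEval (testPoint K) g).1 = 0 :=
    (map_genEval (NonUnitalRingHom.fst _ _) (testPoint K) g).trans
      (genEval_eq_zero_of_nonUnitalRing K (wordPoint K) g)
  have linearIndependent_word : LinearIndependent K
      (LinearMap.fst K _ _ ∘ leftNormed (testPoint K)) := by
    rw [word_leftNormed]
    exact linearIndependent_leftNormed_wordPoint K
  refine linearIndependent_word.of_comp.sum_type
    (.of_comp (LinearMap.snd K _ _) (linearIndependent_genEval_testPoint K)) ?_
  refine (Submodule.range_ker_disjoint linearIndependent_word).mono_right ?_
  rw [Submodule.span_le]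
  rintro - ⟨k, rfl⟩
  exact word_genEval gens[k]

variable {K} in
/-- A linear combination of monomials vanishes identically in the commutator algebras of all
alternative algebras. -/
def IsCommutatorIdentity (P : BTree 6 →₀ K) : Prop :=
  ∀ (A : Type) [NonUnitalNonAssocRing A] [Module K A] [IsScalarTower K A A] [SMulCommClass K A A],
    IsAlternative A → ∀ a : Fin 6 → CommutatorAlgebra K A,
      Finsupp.linearCombination K (treeEval a) P = 0

section

variable {K} {P : BTree 6 →₀ K}

theorem map_linearCombination_treeEval {Z W : Type} [NonUnitalNonAssocRing Z] [Module K Z]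
    [NonUnitalNonAssocRing W] [Module K W] (φ : Z →ₗ[K] W)
    (map_mul : ∀ a b, φ (a * b) = φ a * φ b) (z : Fin 6 → Z) :
    φ (Finsupp.linearCombination K (treeEval z) P) =
      Finsupp.linearCombination K (treeEval fun i => φ (z i)) P := by
  let ringHom : Z →ₙ+* W := { φ with map_mul' := map_mul, map_zero' := map_zero φ }
  have comp_treeEval : φ ∘ treeEval z = treeEval fun i => φ (z i) :=
    funext (map_treeEval ringHom z)
  rw [← comp_treeEval, Finsupp.apply_linearCombination]

theorem IsCommutatorIdentity.linearCombination_testPoint_eq_zero (hP : IsCommutatorIdentity P) :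
    Finsupp.linearCombination K (treeEval (testPoint K)) P = 0 := by
  let word : TestAlgebra K →ₗ[K] CommutatorAlgebra K (WordAlgebra K) := LinearMap.fst K _ _
  let oct (x) : TestAlgebra K →ₗ[K] CommutatorAlgebra K (OctAlgebra K) :=
    LinearMap.proj x ∘ₗ LinearMap.fst K _ _ ∘ₗ LinearMap.snd K _ _
  let ext (x) : TestAlgebra K →ₗ[K] CommutatorAlgebra K (ExtAlgebra K) :=
    LinearMap.proj x ∘ₗ LinearMap.snd K _ _ ∘ₗ LinearMap.snd K _ _
  refine Prod.ext ?_ (Prod.ext (funext fun x => ?_) (funext fun x => ?_))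
  · exact (map_linearCombination_treeEval word (fun _ _ => rfl) _).trans
      (hP _ (.of_nonUnitalRing (WordAlgebra K)) _)
  · exact (map_linearCombination_treeEval (oct x) (fun _ _ => rfl) _).trans
      (hP _ (OctAlgebra.isAlternative K) _)
  · exact (map_linearCombination_treeEval (ext x) (fun _ _ => rfl) _).trans
      (hP _ (ExtAlgebra.isAlternative K) _)

theorem map_spanningFamily {Z W F : Type} [NonUnitalNonAssocRing Z] [NonUnitalNonAssocRing W]
    [FunLike F Z W] [NonUnitalRingHomClass F Z W] (φ : F) (z : Fin 6 → Z) :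
    φ ∘ spanningFamily z = spanningFamily fun i => φ (z i) := by
  funext k
  obtain l | k := k
  · exact map_leftNormed φ z l
  · exact map_genEval φ z _

theorem linearCombination_treeEval_eq_zero_of_linearIndependent [CharZero K]
    (multilinear : ∀ t ∈ P.support, t.Multilinear) {E W : Type} [NonUnitalNonAssocRing E]
    [Module K E] [IsScalarTower K E E] [NonUnitalNonAssocRing W] [Module K W]
    [IsScalarTower K W W] (hE : IsMalcev E) (hW : IsMalcev W) {w : Fin 6 → W}
    (independent : LinearIndependent K (spanningFamily w))
    (hw : Finsupp.linearCombination K (treeEval w) P = 0) (x : Fin 6 → E) :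
    Finsupp.linearCombination K (treeEval x) P = 0 := by
  let z (i : Fin 6) : E × W := (x i, w i)
  set value := Finsupp.linearCombination K (treeEval z) P
  have fst_value : value.1 = Finsupp.linearCombination K (treeEval x) P :=
    map_linearCombination_treeEval (LinearMap.fst K E W) (fun _ _ => rfl) z
  have snd_value : value.2 = 0 :=
    (map_linearCombination_treeEval (LinearMap.snd K E W) (fun _ _ => rfl) z).trans hw
  have value_mem : value ∈ Submodule.span K (Set.range (spanningFamily z)) :=
    Submodule.sum_mem _ fun t ht => Submodule.smul_mem _ _ <|
      treeEval_mem_span_spanningFamily (hE.prod hW) z (multilinear t ht)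
  obtain ⟨c, hc⟩ := Finsupp.mem_span_range_iff_exists_finsupp.1 value_mem
  have snd_spanningFamily : LinearMap.snd K E W ∘ spanningFamily z = spanningFamily w :=
    map_spanningFamily (NonUnitalRingHom.snd E W) z
  have c_eq_zero : c = 0 := by
    refine linearIndependent_iff.1 independent c ?_
    rw [← snd_spanningFamily, ← Finsupp.apply_linearCombination, Finsupp.linearCombination_apply,
      hc]
    exact snd_value
  rw [← fst_value, ← hc, c_eq_zero, Finsupp.sum_zero_index, Prod.fst_zero]

theorem IsCommutatorIdentity.linearCombination_eq_zero [CharZero K] (hP : IsCommutatorIdentity P)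
    (multilinear : ∀ t ∈ P.support, t.Multilinear) {E : Type} [NonUnitalNonAssocRing E]
    [Module K E] [IsScalarTower K E E] (hE : IsMalcev E) (x : Fin 6 → E) :
    Finsupp.linearCombination K (treeEval x) P = 0 :=
  linearCombination_treeEval_eq_zero_of_linearIndependent multilinear hE (TestAlgebra.isMalcev K)
    (linearIndependent_spanningFamily_testPoint K) hP.linearCombination_testPoint_eq_zero x

end

end Transfer

/-! ### Dialgebras -/

namespace BTree

/-- The first variable of a monomial, at which all terms of its expansion under the dicommutator
are centered. -/
def leftmost {n : ℕ} : BTree n → Fin n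
  | leaf i => i
  | node s _ => leftmost s

theorem leftmost_mem_vars {n : ℕ} : ∀ t : BTree n, t.leftmost ∈ t.vars
  | leaf i => Multiset.mem_singleton_self i
  | node s _ => Multiset.mem_add.2 (Or.inl (leftmost_mem_vars s))

theorem Multilinear.nodup {n : ℕ} {t : BTree n} (h : t.Multilinear) : t.vars.Nodup :=
  h.symm ▸ Finset.univ.nodup

end BTree

section AlternativeDialgebra

/-- Alternative dialgebras with left product `l` and right product `r`. -/
structure IsAlternativeDialgebra {K D : Type*} [Field K] [AddCommGroup D] [Module K D]
    (l r : D →ₗ[K] D →ₗ[K] D) : Prop where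
  right_bar : ∀ a b c, r (l a b) c = r (r a b) c
  left_bar : ∀ a b c, l a (l b c) = l a (r b c)
  left_add_right : ∀ a b c, (l (l a b) c - l a (l b c)) + (r (r c b) a - r c (r b a)) = 0
  left_sub_right : ∀ a b c, (l (l a b) c - l a (l b c)) - (r (r b c) a - r b (r c a)) = 0
  inner_add_right : ∀ a b c, (l (r a b) c - r a (l b c)) + (r (r a c) b - r a (r c b)) = 0

section DoubleDialgebra

variable (K : Type*) {A : Type*} [Field K] [NonUnitalNonAssocRing A] [Module K A]
  [IsScalarTower K A A] [SMulCommClass K A A]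

variable (A) in
/-- The left product `(a, a') ⊣ (b, b') = (ab, a'b)` on two copies of an algebra. -/
def leftProduct : A × A →ₗ[K] A × A →ₗ[K] A × A :=
  LinearMap.mk₂ K (fun p q => (p.1 * q.1, p.2 * q.1)) (fun p p' q => by simp [add_mul])
    (fun c p q => by simp [smul_mul_assoc]) (fun p q q' => by simp [mul_add])
    (fun c p q => by simp [mul_smul_comm])

variable (A) in
/-- The right product `(a, a') ⊢ (b, b') = (ab, ab')` on two copies of an algebra. -/
def rightProduct : A × A →ₗ[K] A × A →ₗ[K] A × A :=
  LinearMap.mk₂ K (fun p q => (p.1 * q.1, p.1 * q.2)) (fun p p' q => by simp [add_mul])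
    (fun c p q => by simp [smul_mul_assoc]) (fun p q q' => by simp [mul_add])
    (fun c p q => by simp [mul_smul_comm])

theorem IsAlternative.isAlternativeDialgebra (h : IsAlternative A) :
    IsAlternativeDialgebra (leftProduct K A) (rightProduct K A) := by
  have add_reverse (a b c : A) : associator a b c + associator c b a = 0 := by
    rw [h.swap_left b c a, h.swap_right b a c, h.swap_left a b c, neg_neg, add_neg_cancel]
  have sub_rotate (a b c : A) : associator a b c - associator b c a = 0 := by
    rw [h.swap_right b a c, h.swap_left a b c, neg_neg, sub_self]
  have add_swap (a b c : A) : associator a b c + associator a c b = 0 := by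
    rw [h.swap_right a b c, add_neg_cancel]
  exact
    { right_bar := fun _ _ _ => rfl
      left_bar := fun _ _ _ => rfl
      left_add_right := fun _ _ _ => Prod.ext (add_reverse _ _ _) (add_reverse _ _ _)
      left_sub_right := fun _ _ _ => Prod.ext (sub_rotate _ _ _) (sub_rotate _ _ _)
      inner_add_right := fun _ _ _ => Prod.ext (add_swap _ _ _) (add_swap _ _ _) }

end DoubleDialgebra

variable {K : Type} [Field K] {A : Type} [NonUnitalNonAssocRing A] [Module K A]
  [IsScalarTower K A A] [SMulCommClass K A A]

-- Placing only the `i`-th variable in the second copy isolates the monomials that start with it.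
theorem eval_dicommutator {n : ℕ} (i : Fin n) (a : Fin n → A) : ∀ t : BTree n, t.vars.Nodup →
    t.eval (fun p q => leftProduct K A p q - rightProduct K A q p)
        (fun j => if j = i then (0, a j) else (a j, 0)) =
      (if i ∈ t.vars then 0 else t.eval (fun p q => p * q - q * p) a,
        if t.leftmost = i then t.eval (fun p q => p * q - q * p) a else 0)
  | .leaf j, _ => by
    obtain rfl | ne := eq_or_ne j i
    · simp [BTree.eval, BTree.vars, BTree.leftmost]
    · simp [BTree.eval, BTree.vars, BTree.leftmost, ne, ne.symm]
  | .node s t, nodup => by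
    rw [BTree.vars, Multiset.nodup_add] at nodup
    have notMem_right (hs : s.leftmost = i) : i ∉ t.vars :=
      Multiset.disjoint_left.1 nodup.2.2 (hs ▸ s.leftmost_mem_vars)
    rw [BTree.eval, eval_dicommutator i a s nodup.1, eval_dicommutator i a t nodup.2.1]
    simp only [leftProduct, rightProduct, LinearMap.mk₂_apply, Prod.mk_sub_mk, BTree.vars,
      BTree.leftmost, Multiset.mem_add, BTree.eval]
    refine Prod.ext ?_ ?_
    · by_cases mem_left : i ∈ s.vars <;> by_cases mem_right : i ∈ t.vars <;>
        simp [mem_left, mem_right]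
    · by_cases hs : s.leftmost = i
      · simp [hs, notMem_right hs]
      · simp [hs]

theorem treeEval_of (a : Fin 6 → A) : ∀ t : BTree 6,
    treeEval (fun j => AlgebraOf.of (commutator₂ K A) (a j)) t =
      AlgebraOf.of (commutator₂ K A) (t.eval (fun p q => p * q - q * p) a)
  | .leaf _ => rfl
  | .node s t => congrArg₂ (· * ·) (treeEval_of a s) (treeEval_of a t)

/-- A linear combination of monomials vanishes identically under the dicommutator in all
alternative dialgebras. -/
def IsDicommutatorIdentity (P : BTree 6 →₀ K) : Prop :=
  ∀ (D : Type) [AddCommGroup D] [Module K D] (l r : D →ₗ[K] D →ₗ[K] D),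
    IsAlternativeDialgebra l r → ∀ x : Fin 6 → D,
      P.sum (fun t k => k • t.eval (fun a b => l a b - r b a) x) = 0

theorem IsDicommutatorIdentity.isCommutatorIdentity_filter {P : BTree 6 →₀ K}
    (hP : IsDicommutatorIdentity P) (multilinear : ∀ t ∈ P.support, t.Multilinear) (i : Fin 6) :
    IsCommutatorIdentity (P.filter fun t => t.leftmost = i) := by
  intro A _ _ _ _ hA a
  let b (j : Fin 6) : A := (AlgebraOf.of (commutator₂ K A)).symm (a j)
  let second : A × A →ₗ[K] CommutatorAlgebra K A :=
    (AlgebraOf.of (commutator₂ K A)).toLinearMap ∘ₗ LinearMap.snd K A A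
  have sum_eval_eq_zero := congrArg second
    (hP (A × A) _ _ (hA.isAlternativeDialgebra K) fun j => if j = i then (0, b j) else (b j, 0))
  rw [Finsupp.sum, map_sum, map_zero] at sum_eval_eq_zero
  rw [Finsupp.linearCombination_apply, Finsupp.sum_filter_index, Finsupp.support_filter,
    Finset.sum_filter]
  refine (Finset.sum_congr rfl fun t ht => ?_).trans sum_eval_eq_zero
  rw [eval_dicommutator i b t (multilinear t ht).nodup]
  have treeEval_a : treeEval a t = _ := treeEval_of b t
  rw [treeEval_a]
  split_ifs <;> simp [second]

end AlternativeDialgebra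

section MalcevDialgebra

/-- Right anticommutativity `a(bc) + a(cb) = 0` of the product `f`. -/
def IsRightAnticommutative {K M : Type*} [Field K] [AddCommGroup M] [Module K M]
    (f : M →ₗ[K] M →ₗ[K] M) : Prop :=
  ∀ a b c, f a (f b c) + f a (f c b) = 0

/-- Malcev dialgebras with product `f`. -/
structure IsMalcevDialgebra {K M : Type*} [Field K] [AddCommGroup M] [Module K M]
    (f : M →ₗ[K] M →ₗ[K] M) : Prop where
  right_anticomm : IsRightAnticommutative f
  di_malcev : ∀ a b c d, f (f (f a b) c) d - f (f (f a d) b) c - f (f a (f c d)) b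
    - f (f a c) (f b d) - f a (f (f b c) d) = 0

section NullExtension

variable {K M : Type*} [Field K] [AddCommGroup M] [Module K M] (f : M →ₗ[K] M →ₗ[K] M)

/-- The quotient of `M` by its right annihilator, the elements `b` with `ab = 0` for all `a`. -/
abbrev AnnQuotient : Type _ := M ⧸ LinearMap.ker f.flip

/-- The right multiplications, which factor through the quotient by the right annihilator. -/
def quotientAction : M →ₗ[K] AnnQuotient f →ₗ[K] M :=
  ((LinearMap.ker f.flip).liftQ f.flip le_rfl).flip

variable {f} (hf : IsRightAnticommutative f)
include hf

theorem IsRightAnticommutative.apply_apply (a b c : M) : f a (f b c) = -f a (f c b) :=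
  eq_neg_of_add_eq_zero_left (hf a b c)

theorem IsRightAnticommutative.apply_mem_ker {a : M} (ha : a ∈ LinearMap.ker f.flip) (b : M) :
    f a b ∈ LinearMap.ker f.flip := by
  have apply_eq_zero (c : M) : f c a = 0 := LinearMap.congr_fun (LinearMap.mem_ker.1 ha) c
  refine LinearMap.mem_ker.2 (LinearMap.ext fun c => ?_)
  rw [LinearMap.flip_apply, hf.apply_apply, apply_eq_zero, map_zero, neg_zero,
    LinearMap.zero_apply]

/-- The product that `f` induces on the quotient by the right annihilator. -/
def quotientProduct : AnnQuotient f →ₗ[K] AnnQuotient f →ₗ[K] AnnQuotient f :=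
  (LinearMap.ker f.flip).liftQ ((quotientAction f).compr₂ (LinearMap.ker f.flip).mkQ)
    fun a ha => LinearMap.mem_ker.2 (LinearMap.ext fun b => by
      obtain ⟨b, rfl⟩ := Submodule.Quotient.mk_surjective _ b
      exact (Submodule.Quotient.mk_eq_zero _).2 (hf.apply_mem_ker ha b))

/-- The product `(a, u)(b, v) = (ab, ub - va)` of the split null extension of the quotient by `M`,
on which the quotient acts by `quotientAction` from the right and by its negative from the left. -/
def nullExtensionProduct :
    AnnQuotient f × M →ₗ[K] AnnQuotient f × M →ₗ[K] AnnQuotient f × M :=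
  LinearMap.mk₂ K (fun p q => (quotientProduct hf p.1 q.1,
      quotientAction f p.2 q.1 - quotientAction f q.2 p.1))
    (fun p p' q => Prod.ext (by simp) (by simp [add_sub_add_comm]))
    (fun c p q => by simp [smul_sub])
    (fun p q q' => Prod.ext (by simp) (by simp [add_sub_add_comm]))
    (fun c p q => by simp [smul_sub])

/-- The split null extension of the quotient by the right annihilator. -/
abbrev NullExtension : Type _ := AlgebraOf (nullExtensionProduct hf)

namespace NullExtension

/-- The element of the split null extension represented by two elements of `M`. -/
def mk (a u : M) : NullExtension hf :=
  AlgebraOf.of (nullExtensionProduct hf) (Submodule.Quotient.mk a, u)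

theorem mk_mul_mk (a u b v : M) : mk hf a u * mk hf b v = mk hf (f a b) (f u b - f v a) := rfl

theorem mk_add_mk (a u b v : M) : mk hf a u + mk hf b v = mk hf (a + b) (u + v) := rfl

theorem neg_mk (a u : M) : -mk hf a u = mk hf (-a) (-u) := rfl

theorem mk_surjective (x : NullExtension hf) : ∃ a u, x = mk hf a u := by
  obtain ⟨⟨a, u⟩, rfl⟩ := (AlgebraOf.of (nullExtensionProduct hf)).surjective x
  obtain ⟨a, rfl⟩ := Submodule.Quotient.mk_surjective _ a
  exact ⟨a, u, rfl⟩

theorem mk_congr {a b u v : M} (hab : ∀ c, f c a = f c b) (huv : u = v) :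
    mk hf a u = mk hf b v := by
  refine congrArg (AlgebraOf.of (nullExtensionProduct hf)) (Prod.ext ?_ huv)
  refine (Submodule.Quotient.eq _).2 (LinearMap.mem_ker.2 (LinearMap.ext fun c => ?_))
  rw [LinearMap.flip_apply, map_sub, hab, sub_self, LinearMap.zero_apply]

end NullExtension

end NullExtension

section

variable {K M : Type*} [Field K] [AddCommGroup M] [Module K M] {f : M →ₗ[K] M →ₗ[K] M}

theorem IsMalcevDialgebra.apply_sagle (h : IsMalcevDialgebra f) (e a b c d : M) :
    f e (f (f a c) (f b d)) = f e (f (f (f a b) c) d + f (f (f b c) d) a + f (f (f c d) a) b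
      + f (f (f d a) b) c) := by
  have swap := h.right_anticomm.apply_apply
  have swap₂ (a b c d : M) : f a (f (f b c) d) = -f a (f (f c b) d) := by
    rw [swap a _ d, swap d b c, map_neg, neg_neg, swap a d]
  have swap₃ (a b c d e : M) : f a (f (f (f b c) d) e) = -f a (f (f (f c b) d) e) := by
    rw [swap a _ e, swap₂ e b c, map_neg, neg_neg, swap a e]
  have malcev := congrArg (f e) (h.di_malcev a b c d)
  simp only [map_add, map_sub, map_zero] at malcev ⊢
  rw [swap e _ a, swap₂ e _ a, swap₃ e d a]
  linear_combination (norm := abel) -malcev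

theorem IsMalcevDialgebra.isMalcev_nullExtension (h : IsMalcevDialgebra f) :
    IsMalcev (NullExtension h.right_anticomm) := by
  have swap := h.right_anticomm.apply_apply
  refine isMalcev_of_sagle (fun x y => ?_) fun x y z o => ?_
  · obtain ⟨a, u, rfl⟩ := NullExtension.mk_surjective _ x
    obtain ⟨b, v, rfl⟩ := NullExtension.mk_surjective _ y
    rw [NullExtension.mk_mul_mk, NullExtension.mk_mul_mk, NullExtension.neg_mk]
    exact NullExtension.mk_congr _ (fun e => by rw [map_neg, swap]) (neg_sub _ _).symm
  · obtain ⟨a, u, rfl⟩ := NullExtension.mk_surjective _ x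
    obtain ⟨b, v, rfl⟩ := NullExtension.mk_surjective _ y
    obtain ⟨c, w, rfl⟩ := NullExtension.mk_surjective _ z
    obtain ⟨d, s, rfl⟩ := NullExtension.mk_surjective _ o
    simp only [NullExtension.mk_mul_mk, NullExtension.mk_add_mk]
    refine NullExtension.mk_congr _ (fun e => h.apply_sagle e a b c d) ?_
    have malcev_u := h.di_malcev u b c d
    have malcev_v := h.di_malcev v c d a
    have malcev_w := h.di_malcev w d a b
    have malcev_s := h.di_malcev s a b c
    simp only [map_sub, LinearMap.sub_apply]
    rw [swap (f v d) a c, swap (f w a) b d]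
    linear_combination (norm := abel) -malcev_u - malcev_v - malcev_w - malcev_s

end

section LeftmostVariable

variable {K M : Type} [Field K] [AddCommGroup M] [Module K M] {f : M →ₗ[K] M →ₗ[K] M}

/-- The assignment that puts `x i` into `M` and all other `x j` into the quotient. -/
def nullExtensionPoint (hf : IsRightAnticommutative f) (i : Fin 6) (x : Fin 6 → M) (j : Fin 6) :
    NullExtension hf :=
  if j = i then NullExtension.mk hf 0 (x j) else NullExtension.mk hf (x j) 0

theorem treeEval_nullExtensionPoint_of_notMem (hf : IsRightAnticommutative f) (i : Fin 6)
    (x : Fin 6 → M) : ∀ t : BTree 6, i ∉ t.vars →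
      treeEval (nullExtensionPoint hf i x) t =
        NullExtension.mk hf (t.eval (fun a b => f a b) x) 0
  | .leaf j, notMem => if_neg fun hj => notMem (Multiset.mem_singleton.2 hj.symm)
  | .node s t, notMem => by
    rw [BTree.vars, Multiset.mem_add, not_or] at notMem
    refine (congrArg₂ (· * ·) (treeEval_nullExtensionPoint_of_notMem hf i x s notMem.1)
      (treeEval_nullExtensionPoint_of_notMem hf i x t notMem.2)).trans
        ((NullExtension.mk_mul_mk ..).trans ?_)
    rw [map_zero, LinearMap.zero_apply, LinearMap.zero_apply, sub_zero]
    rfl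

theorem treeEval_nullExtensionPoint_of_leftmost (hf : IsRightAnticommutative f) (i : Fin 6)
    (x : Fin 6 → M) : ∀ t : BTree 6, t.vars.Nodup → t.leftmost = i →
      treeEval (nullExtensionPoint hf i x) t =
        NullExtension.mk hf 0 (t.eval (fun a b => f a b) x)
  | .leaf j, _, leftmost => if_pos leftmost
  | .node s t, nodup, leftmost => by
    rw [BTree.vars, Multiset.nodup_add] at nodup
    rw [BTree.leftmost] at leftmost
    have notMem : i ∉ t.vars :=
      Multiset.disjoint_left.1 nodup.2.2 (leftmost ▸ s.leftmost_mem_vars)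
    refine (congrArg₂ (· * ·) (treeEval_nullExtensionPoint_of_leftmost hf i x s nodup.1 leftmost)
      (treeEval_nullExtensionPoint_of_notMem hf i x t notMem)).trans
        ((NullExtension.mk_mul_mk ..).trans ?_)
    rw [map_zero, map_zero, LinearMap.zero_apply, sub_zero]
    rfl

theorem IsMalcevDialgebra.sum_filter_leftmost_eq_zero [CharZero K] (h : IsMalcevDialgebra f)
    {P : BTree 6 →₀ K} (multilinear : ∀ t ∈ P.support, t.Multilinear) {i : Fin 6}
    (hP : IsCommutatorIdentity (P.filter fun t => t.leftmost = i)) (x : Fin 6 → M) :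
    ∑ t ∈ P.support with t.leftmost = i, P t • t.eval (fun a b => f a b) x = 0 := by
  let second : NullExtension h.right_anticomm →ₗ[K] M :=
    LinearMap.snd K _ _ ∘ₗ (AlgebraOf.of _).symm.toLinearMap
  have sum_treeEval_eq_zero := congrArg second <| hP.linearCombination_eq_zero
    (fun t ht => multilinear t (Finset.mem_filter.1 ht).1)
    h.isMalcev_nullExtension (nullExtensionPoint h.right_anticomm i x)
  rw [Finsupp.linearCombination_apply, Finsupp.sum_filter_index, Finsupp.support_filter, map_sum,
    map_zero] at sum_treeEval_eq_zero
  refine (Finset.sum_congr rfl fun t ht => ?_).trans sum_treeEval_eq_zero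
  obtain ⟨mem_support, leftmost⟩ := Finset.mem_filter.1 ht
  rw [treeEval_nullExtensionPoint_of_leftmost _ i x t (multilinear t mem_support).nodup leftmost,
    map_smul]
  rfl

end LeftmostVariable

end MalcevDialgebra

/-- Over a field `K` of characteristic 0, every multilinear polynomial identity `P` of degree 6 satisfied by the dicommutator in every alternative dialgebra over `K` is satisfied in every Malcev dialgebra over `K`; there are no special identities for Malcev dialgebras in degree 6, so any special identity must have degree at least 7. -/
theorem degree6_no_special_identities (K : Type) [Field K]
    [CharZero K]
    (P : BTree 6 →₀ K) (hml : ∀ t ∈ P.support, t.Multilinear)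
    (hvanish : ∀ (D : Type) [AddCommGroup D] [Module K D]
      (l r : D →ₗ[K] D →ₗ[K] D),
      (∀ a b c : D, r (l a b) c = r (r a b) c) →
      (∀ a b c : D, l a (l b c) = l a (r b c)) →
      (∀ a b c : D, (l (l a b) c - l a (l b c)) + (r (r c b) a - r c (r b a)) = 0) →
      (∀ a b c : D, (l (l a b) c - l a (l b c)) - (r (r b c) a - r b (r c a)) = 0) →
      (∀ a b c : D, (l (r a b) c - r a (l b c)) + (r (r a c) b - r a (r c b)) = 0) →
      ∀ x : Fin 6 → D,
        P.sum (fun t k => k • BTree.eval (fun a b => l a b - r b a) x t) = 0) :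
    ∀ (M : Type) [AddCommGroup M] [Module K M] (f : M →ₗ[K] M →ₗ[K] M),
      (∀ a b c : M, f a (f b c) + f a (f c b) = 0) →
      (∀ a b c d : M,
        f (f (f a b) c) d - f (f (f a d) b) c - f (f a (f c d)) b
          - f (f a c) (f b d) - f a (f (f b c) d) = 0) →
      ∀ x : Fin 6 → M,
        P.sum (fun t k => k • BTree.eval (fun a b => f a b) x t) = 0 := by
  intro M _ _ f right_anticomm di_malcev x
  have dicommutatorIdentity : IsDicommutatorIdentity P := fun D _ _ l r h =>
    hvanish D l r h.right_bar h.left_bar h.left_add_right h.left_sub_right h.inner_add_right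
  have isMalcevDialgebra : IsMalcevDialgebra f := ⟨right_anticomm, di_malcev⟩
  rw [Finsupp.sum, ← Finset.sum_fiberwise P.support BTree.leftmost]
  exact Finset.sum_eq_zero fun i _ => isMalcevDialgebra.sum_filter_leftmost_eq_zero hml
    (dicommutatorIdentity.isCommutatorIdentity_filter hml i) x
end

section
/- Let K be a field of characteristic 0 and let c_σ ∈ K for each of the six permutations σ of three variables. Suppose that in every Malcev dialgebra M over K, the sum over all six permutations σ of c_σ·⟨x_{σ(1)}, x_{σ(2)}, x_{σ(3)}⟩ vanishes for all x_1, x_2, x_3 ∈ M, where ⟨a,b,c⟩ = 2(ab)c + a(bc) + (ac)b. Then c_σ = 0 for every σ; that is, the trilinear operation ⟨a,b,c⟩ satisfies no polynomial identity in degree 3. -/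
/-!
If `a(bc) = 0` identically, then `⟨a,b,c⟩ = 2(ab)c + (ac)b`, and after reindexing by the
transposition `(1 2)` the assumed identity becomes a relation among the left-normed monomials
`(x_{σ0} x_{σ1}) x_{σ2}` with coefficients `2 c_σ + c_{σ(1 2)}`. There are Malcev dialgebras with
`a(bc) = 0` in which these monomials are linearly independent, so all these coefficients vanish;
applying this to `σ` and to `σ(1 2)` gives `3 c_σ = 0`. Characteristic three is a true exception, as
`⟨a,b,c⟩ + ⟨a,c,b⟩ = 3((ab)c + (ac)b)` in every Malcev dialgebra.
-/

universe u v

section Products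

variable {K : Type u} [CommRing K] {M : Type v} [AddCommGroup M] [Module K M]

/-- The (right) Malcev dialgebras: bilinear products satisfying right anticommutativity and the
di-Malcev identity. The product is an argument, not an instance. -/
structure IsMalcevDialgebra_s10 (f : M →ₗ[K] M →ₗ[K] M) : Prop where
  right_anticomm (a b c : M) : f a (f b c) + f a (f c b) = 0
  di_malcev (a b c d : M) :
    f (f (f a b) c) d - f (f (f a d) b) c - f (f a (f c d)) b
      - f (f a c) (f b d) - f a (f (f b c) d) = 0

/-- The trilinear operation `⟨a, b, c⟩ = 2(ab)c + a(bc) + (ac)b` of a bilinear product. -/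
def trilinearOp (f : M →ₗ[K] M →ₗ[K] M) (a b c : M) : M :=
  (2 : K) • f (f a b) c + f a (f b c) + f (f a c) b

variable {f : M →ₗ[K] M →ₗ[K] M}

theorem IsMalcevDialgebra_s10.of_mul_mul_eq_zero (hright : ∀ a b c, f a (f b c) = 0)
    (hnil : ∀ a b c d, f (f (f a b) c) d = 0) : IsMalcevDialgebra_s10 f where
  right_anticomm a b c := by simp [hright]
  di_malcev a b c d := by simp [hright, hnil]

theorem sum_smul_trilinearOp_of_mul_mul_eq_zero (hright : ∀ a b c, f a (f b c) = 0)
    (c : Equiv.Perm (Fin 3) → K) (x : Fin 3 → M) :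
    ∑ σ, c σ • trilinearOp f (x (σ 0)) (x (σ 1)) (x (σ 2)) =
      ∑ σ, (2 * c σ + c (σ * Equiv.swap 1 2)) • f (f (x (σ 0)) (x (σ 1))) (x (σ 2)) := by
  have reindex : ∑ σ, c σ • f (f (x (σ 0)) (x (σ 2))) (x (σ 1)) =
      ∑ σ, c (σ * Equiv.swap 1 2) • f (f (x (σ 0)) (x (σ 1))) (x (σ 2)) := by
    rw [← Equiv.sum_comp (Equiv.mulRight (Equiv.swap 1 2))]
    simp [Equiv.swap_apply_of_ne_of_ne]
  simp only [trilinearOp, hright, add_zero, smul_add, add_smul, Finset.sum_add_distrib, reindex,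
    smul_smul, mul_comm]

end Products

/-- The space `V ⊕ V^⊗2 ⊕ V^⊗3` of tensors of degree one to three over `V = K^ι`, each tensor being
encoded by its array of coordinates (for infinite `ι`, all arrays are allowed). It carries the
product `TruncatedTensors.mul`. -/
abbrev TruncatedTensors (K : Type u) (ι : Type v) : Type (max u v) :=
  (ι → K) × (ι → ι → K) × ((Fin 3 → ι) → K)

namespace TruncatedTensors

variable (K : Type u) [CommRing K] (ι : Type v)

/-- The product `a * b = a ⊗ b₁` on `TruncatedTensors`, where `b₁` is the degree-one
part of `b` and terms of degree four are discarded. Forgetting the higher-degree parts of `b` forces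
`a(bc) = 0`, while the left-normed monomials of degree three remain independent. -/
def mul : TruncatedTensors K ι →ₗ[K] TruncatedTensors K ι →ₗ[K] TruncatedTensors K ι :=
  LinearMap.mk₂ K
    (fun a b ↦ (0, fun i j ↦ a.1 i * b.1 j, fun w ↦ a.2.1 (w 0) (w 1) * b.1 (w 2)))
    (by intros; ext <;> simp [add_mul])
    (by intros; ext <;> simp [mul_assoc])
    (by intros; ext <;> simp [mul_add])
    (by intros; ext <;> simp [mul_left_comm])

variable {ι}

/-- The basis vector `e_i` of `V`, as a tensor of degree one; the independent left-normed
monomials are formed in these. -/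
def generator [DecidableEq ι] (i : ι) : TruncatedTensors K ι :=
  (Pi.single i 1, 0, 0)

variable {K}

theorem mul_apply (a b : TruncatedTensors K ι) :
    mul K ι a b = (0, fun i j ↦ a.1 i * b.1 j, fun w ↦ a.2.1 (w 0) (w 1) * b.1 (w 2)) :=
  rfl

theorem mul_mul_eq_zero (a b c : TruncatedTensors K ι) :
    mul K ι a (mul K ι b c) = 0 := by
  ext <;> simp [mul_apply]

theorem isMalcevDialgebra_mul : IsMalcevDialgebra_s10 (mul K ι) :=
  .of_mul_mul_eq_zero mul_mul_eq_zero fun a b c d ↦ by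
    ext <;> simp [mul_apply]

theorem linearIndependent_leftNormed [DecidableEq ι] :
    LinearIndependent K fun w : Fin 3 → ι ↦
      mul K ι (mul K ι (generator K (w 0)) (generator K (w 1))) (generator K (w 2)) := by
  have top_degree_coord (w v : Fin 3 → ι) :
      (Pi.single (w 0) 1 : ι → K) (v 0) * (Pi.single (w 1) 1 : ι → K) (v 1) *
        (Pi.single (w 2) 1 : ι → K) (v 2) = (Pi.single w 1 : (Fin 3 → ι) → K) v := by
    simp [Pi.single_apply, funext_iff, Fin.forall_fin_succ, ← ite_and, and_comm, and_assoc]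
  refine .of_comp (LinearMap.snd K _ _ ∘ₗ LinearMap.snd K _ _) ?_
  convert Pi.linearIndependent_single_one (Fin 3 → ι) K using 1
  ext w v
  exact top_degree_coord w v

end TruncatedTensors

theorem eq_zero_of_two_mul_add_comp_eq_zero {K : Type u} [CommRing K] {α : Type v}
    (h₃ : 3 ∈ nonZeroDivisors K) {s : α → α} (hs : Function.Involutive s) {c : α → K}
    (hc : ∀ a, 2 * c a + c (s a) = 0) (a : α) : c a = 0 := by
  have h_swap : 2 * c (s a) + c a = 0 := by simpa only [hs a] using hc (s a)
  have h_three : c a * 3 = 0 := by linear_combination 2 * hc a - h_swap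
  exact (mul_right_mem_nonZeroDivisors_eq_zero_iff h₃).mp h_three

theorem no_degree3_identity_for_trilinear_op_general {K : Type u} [CommRing K]
    (h₃ : 3 ∈ nonZeroDivisors K) (c : Equiv.Perm (Fin 3) → K)
    (h : ∀ (M : Type u) [AddCommGroup M] [Module K M] (f : M →ₗ[K] M →ₗ[K] M),
      IsMalcevDialgebra_s10 f → ∀ x : Fin 3 → M,
        ∑ σ, c σ • trilinearOp f (x (σ 0)) (x (σ 1)) (x (σ 2)) = 0)
    (σ : Equiv.Perm (Fin 3)) : c σ = 0 := by
  have relation := h _ (TruncatedTensors.mul K (Fin 3)) TruncatedTensors.isMalcevDialgebra_mul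
    (TruncatedTensors.generator K)
  rw [sum_smul_trilinearOp_of_mul_mul_eq_zero TruncatedTensors.mul_mul_eq_zero] at relation
  have independent := (TruncatedTensors.linearIndependent_leftNormed (K := K) (ι := Fin 3)).comp
    ((⇑) : Equiv.Perm (Fin 3) → Fin 3 → Fin 3) DFunLike.coe_injective
  have coeff_eq_zero := Fintype.linearIndependent_iff.mp independent _ relation
  exact eq_zero_of_two_mul_add_comp_eq_zero h₃ (Equiv.mul_swap_involutive 1 2) coeff_eq_zero σ

/-- Over a field `K` of characteristic 0, if coefficients
`c σ ∈ K` (one for each permutation of three variables) are such that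
`∑ σ, c σ • ⟨x (σ 0), x (σ 1), x (σ 2)⟩ = 0` holds in every Malcev dialgebra
over `K`, where `⟨a,b,c⟩ = 2(ab)c + a(bc) + (ac)b`, then all `c σ = 0`;
the trilinear operation satisfies no polynomial identity in degree 3. -/
theorem no_degree3_identity_for_trilinear_op (K : Type) [Field K] [CharZero K]
    (c : Equiv.Perm (Fin 3) → K)
    (h : ∀ (M : Type) [AddCommGroup M] [Module K M]
      (f : M →ₗ[K] M →ₗ[K] M),
      (∀ a b c : M, f a (f b c) + f a (f c b) = 0) →
      (∀ a b c d : M,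
        f (f (f a b) c) d - f (f (f a d) b) c - f (f a (f c d)) b
          - f (f a c) (f b d) - f a (f (f b c) d) = 0) →
      ∀ x : Fin 3 → M,
        ∑ σ : Equiv.Perm (Fin 3),
          c σ • ((2 : K) • f (f (x (σ 0)) (x (σ 1))) (x (σ 2))
              + f (x (σ 0)) (f (x (σ 1)) (x (σ 2)))
              + f (f (x (σ 0)) (x (σ 2))) (x (σ 1))) = 0) :
    ∀ σ : Equiv.Perm (Fin 3), c σ = 0 :=
  no_degree3_identity_for_trilinear_op_general
    (mem_nonZeroDivisors_of_ne_zero three_ne_zero) c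
    fun M _ _ f hf x ↦ h M f hf.right_anticomm hf.di_malcev x
end

section
/- Let K be a field of characteristic 0. Let P be a multilinear polynomial of degree 5 in one formal trilinear operation such that, in every Malcev dialgebra over K, P vanishes identically when the formal trilinear operation is interpreted as ⟨a,b,c⟩ = 2(ab)c + a(bc) + (ac)b. Then P vanishes identically in every Leibniz triple system over K; that is, P is a consequence of the defining identities of Leibniz triple systems. -/
/-- Formal monomials of a single trilinear operation in variables
`x_0, …, x_{n-1}`: ternary trees whose leaves are labelled by variables. -/
inductive TTree (n : ℕ) : Type
  | leaf : Fin n → TTree n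
  | node : TTree n → TTree n → TTree n → TTree n

namespace TTree

/-- Evaluate a monomial in a system with trilinear operation `m`,
assigning the value `x i` to the variable `i`. -/
def eval {n : ℕ} {V : Type} (m : V → V → V → V) (x : Fin n → V) : TTree n → V
  | leaf i => x i
  | node s t u => m (eval m x s) (eval m x t) (eval m x u)

/-- The multiset of variables occurring in a monomial. -/
def vars {n : ℕ} : TTree n → Multiset (Fin n)
  | leaf i => {i}
  | node s t u => vars s + vars t + vars u

/-- A monomial of degree `n` is multilinear if each of the `n` variables
occurs in it exactly once. -/
def Multilinear {n : ℕ} (t : TTree n) : Prop :=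
  vars t = (Finset.univ : Finset (Fin n)).val

end TTree

/-! Every Leibniz triple system embeds in a Leibniz algebra so that `⟨a,b,c⟩ = (ab)c`. In a Leibniz
algebra `a(bc) + (ac)b = (ab)c`, so there `2(ab)c + a(bc) + (ac)b = 3(ab)c`; moreover every Leibniz
algebra is a Malcev dialgebra. Since the defining identities of Leibniz triple systems are
homogeneous, `⟨-,-,-⟩ / 3` is again a Leibniz triple system, and embedding it instead of
`⟨-,-,-⟩` cancels the factor `3`. Hence every Leibniz triple system is a subsystem of the triple
system of a Malcev dialgebra, and satisfies all the identities of the latter.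

For the embedding, let `b` act on the right on pairs `(a, φ)` with `a : L` and `φ : L → L` by
`(a, φ) · b = (φ b, ⟨a, b, -⟩)`, so that `(a, 0) · b · c = (⟨a, b, c⟩, 0)`. If `φ` is restricted to
the maps that, like every `⟨x, y, -⟩`, expand at `⟨a, b, c⟩` according to the second defining
identity, then `⟨a, b, c⟩` acts as the iterated commutator `[[a, b], c]` of right actions, and the
hemisemidirect product of the space of pairs with its endomorphisms is the required Leibniz
algebra. -/

namespace TTree

lemma map_eval {n : ℕ} {V W : Type} {m : V → V → V → V} {m' : W → W → W → W} (φ : V → W)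
    (hφ : ∀ a b c, φ (m a b c) = m' (φ a) (φ b) (φ c)) (x : Fin n → V) (t : TTree n) :
    φ (t.eval m x) = t.eval m' (fun i => φ (x i)) := by
  induction t with
  | leaf i => rfl
  | node s t u hs ht hu => rw [eval, hφ, hs, ht, hu, eval]

end TTree

section Dialgebras

variable {K M : Type*} [CommRing K] [AddCommGroup M] [Module K M]

/-- The identities making the bilinear product `f` a right Malcev dialgebra. -/
structure IsMalcevDialgebra_s11 (f : M →ₗ[K] M →ₗ[K] M) : Prop where
  right_anticomm (a b c : M) : f a (f b c) + f a (f c b) = 0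
  diMalcev (a b c d : M) :
    f (f (f a b) c) d - f (f (f a d) b) c - f (f a (f c d)) b
      - f (f a c) (f b d) - f a (f (f b c) d) = 0

/-- The trilinear operation `2(ab)c + a(bc) + (ac)b` attached to a bilinear product. -/
def tripleProduct (f : M →ₗ[K] M →ₗ[K] M) (a b c : M) : M :=
  (2 : K) • f (f a b) c + f a (f b c) + f (f a c) b

/-- The (right) Leibniz identity: right multiplications are derivations of the product `f`. -/
def IsLeibnizAlgebra (f : M →ₗ[K] M →ₗ[K] M) : Prop :=
  ∀ a b c, f (f a b) c = f (f a c) b + f a (f b c)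

namespace IsLeibnizAlgebra

variable {f : M →ₗ[K] M →ₗ[K] M}

lemma apply_apply_eq_sub (hf : IsLeibnizAlgebra f) (a b c : M) :
    f a (f b c) = f (f a b) c - f (f a c) b :=
  eq_sub_of_add_eq' (hf a b c).symm

lemma isMalcevDialgebra (hf : IsLeibnizAlgebra f) : IsMalcevDialgebra_s11 f where
  right_anticomm a b c := by
    rw [hf.apply_apply_eq_sub a b c, hf.apply_apply_eq_sub a c b, sub_add_sub_cancel, sub_self]
  diMalcev a b c d := by
    simp only [hf.apply_apply_eq_sub, map_sub, LinearMap.sub_apply]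
    abel

lemma tripleProduct_eq (hf : IsLeibnizAlgebra f) (a b c : M) :
    tripleProduct f a b c = (3 : K) • f (f a b) c := by
  rw [tripleProduct, hf.apply_apply_eq_sub]
  module

end IsLeibnizAlgebra

end Dialgebras

section Hemisemidirect

variable (K 𝔤 V : Type*) [CommRing K] [LieRing 𝔤] [LieAlgebra K 𝔤] [AddCommGroup V] [Module K V]
  [LieRingModule 𝔤 V] [LieModule K 𝔤 V]

/-- The hemisemidirect product of a Lie algebra with a Lie module. As `⁅-, -⁆` is a left action,
the second factor of the product acts on the first. -/
def hemisemidirect : V × 𝔤 →ₗ[K] V × 𝔤 →ₗ[K] V × 𝔤 :=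
  LinearMap.mk₂ K (fun p q => (⁅q.2, p.1⁆, ⁅q.2, p.2⁆))
    (fun p p' q => by simp) (fun k p q => by simp)
    (fun p q q' => by simp) (fun k p q => by simp)

variable {𝔤 V}

lemma hemisemidirect_apply (p q : V × 𝔤) :
    hemisemidirect K 𝔤 V p q = (⁅q.2, p.1⁆, ⁅q.2, p.2⁆) := rfl

variable (𝔤 V)

lemma isLeibnizAlgebra_hemisemidirect : IsLeibnizAlgebra (hemisemidirect K 𝔤 V) := fun a b c => by
  simp only [hemisemidirect_apply, Prod.mk_add_mk]
  rw [leibniz_lie c.2, leibniz_lie c.2, add_comm, add_comm ⁅⁅c.2, b.2⁆, a.2⁆]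

end Hemisemidirect

section LeibnizTripleSystem

universe v

variable {K : Type*} {L : Type v} [CommRing K] [AddCommGroup L] [Module K L]
  {T : L →ₗ[K] L →ₗ[K] L →ₗ[K] L}

/-- The identities making the trilinear operation `T` a Leibniz triple system. -/
structure IsLeibnizTripleSystem (T : L →ₗ[K] L →ₗ[K] L →ₗ[K] L) : Prop where
  nested_middle (a b c d e : L) :
    T a (T b c d) e = T (T a b c) d e - T (T a c b) d e - T (T a d b) c e + T (T a d c) b e
  nested_right (a b c d e : L) :
    T a b (T c d e) = T (T a b c) d e - T (T a b d) c e - T (T a b e) c d + T (T a b e) d c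

lemma IsLeibnizTripleSystem.smul (hT : IsLeibnizTripleSystem T) (k : K) :
    IsLeibnizTripleSystem (k • T) where
  nested_middle a b c d e := by
    simp only [LinearMap.smul_apply, map_smul, hT.nested_middle, smul_add, smul_sub]
  nested_right a b c d e := by
    simp only [LinearMap.smul_apply, map_smul, hT.nested_right, smul_add, smul_sub]

/-- The linear maps `φ` for which `φ ⟨a, b, c⟩` expands as if `φ` were of the form `⟨x, y, -⟩`. In
the universal Leibniz algebra of a Leibniz triple system the part of even degree is spanned by the
products `xy`, each of which is represented here by the map `⟨x, y, -⟩`. -/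
def tripleExpandingMaps (T : L →ₗ[K] L →ₗ[K] L →ₗ[K] L) : Submodule K (L →ₗ[K] L) where
  carrier := {φ | ∀ a b c,
    φ (T a b c) = T (φ a) b c - T (φ b) a c - T (φ c) a b + T (φ c) b a}
  zero_mem' a b c := by simp
  add_mem' {φ ψ} hφ hψ a b c := by
    simp only [LinearMap.add_apply, map_add, hφ a b c, hψ a b c]
    abel
  smul_mem' k φ hφ a b c := by
    simp only [LinearMap.smul_apply, map_smul, hφ a b c, smul_add, smul_sub]

namespace IsLeibnizTripleSystem

/-- The right multiplication by `b`, which is `(a, φ) ↦ (φ b, ⟨a, b, -⟩)`. -/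
def rightMul (hT : IsLeibnizTripleSystem T) :
    L →ₗ[K] Module.End K (L × tripleExpandingMaps T) :=
  LinearMap.mk₂ K (fun b p => (p.2.1 b, ⟨T p.1 b, hT.nested_right p.1 b⟩))
    (fun b b' p => by ext <;> simp) (fun k b p => by ext <;> simp)
    (fun b p p' => by ext <;> simp) (fun k b p => by ext <;> simp)

lemma rightMul_apply (hT : IsLeibnizTripleSystem T) (b : L) (p : L × tripleExpandingMaps T) :
    hT.rightMul b p = (p.2.1 b, ⟨T p.1 b, hT.nested_right p.1 b⟩) := rfl

lemma rightMul_rightMul_mk_zero (hT : IsLeibnizTripleSystem T) (a b c : L) :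
    hT.rightMul c (hT.rightMul b (a, 0)) = (T a b c, 0) := by
  simp [rightMul_apply]

attribute [local instance] LieRing.ofAssociativeRing

-- Composition in `Module.End` is opposite to that of right actions, so `[[a, b], c]` is reversed.
lemma rightMul_triple (hT : IsLeibnizTripleSystem T) (a b c : L) :
    hT.rightMul (T a b c) = ⁅hT.rightMul c, ⁅hT.rightMul b, hT.rightMul a⁆⁆ := by
  refine LinearMap.ext fun p => Prod.ext ?_ (Subtype.ext <| LinearMap.ext fun e => ?_)
  · simp only [LieHom.lie_apply, Module.End.lie_apply, rightMul_apply, p.2.2 a b c,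
      Prod.mk_sub_mk, map_sub, Submodule.coe_sub, LinearMap.sub_apply]
    abel
  · simp only [LieHom.lie_apply, Module.End.lie_apply, rightMul_apply, hT.nested_middle,
      Prod.mk_sub_mk, map_sub, Submodule.coe_sub, LinearMap.sub_apply]
    abel

theorem exists_leibnizAlgebra_embedding (hT : IsLeibnizTripleSystem T) :
    ∃ (M : Type v) (_ : AddCommGroup M) (_ : Module K M) (f : M →ₗ[K] M →ₗ[K] M) (ι : L →ₗ[K] M),
      IsLeibnizAlgebra f ∧ Function.Injective ι ∧
        ∀ a b c, ι (T a b c) = f (f (ι a) (ι b)) (ι c) := by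
  let V := L × tripleExpandingMaps T
  refine ⟨V × Module.End K V, inferInstance, inferInstance, hemisemidirect K (Module.End K V) V,
    (LinearMap.inl K L _).prod hT.rightMul, isLeibnizAlgebra_hemisemidirect K _ _,
    fun a b h => congrArg (fun p => p.1.1) h,
    fun a b c => Prod.ext (hT.rightMul_rightMul_mk_zero a b c).symm (hT.rightMul_triple a b c)⟩

theorem exists_malcevDialgebra_embedding [Invertible (3 : K)] (hT : IsLeibnizTripleSystem T) :
    ∃ (M : Type v) (_ : AddCommGroup M) (_ : Module K M) (f : M →ₗ[K] M →ₗ[K] M) (ι : L →ₗ[K] M),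
      IsMalcevDialgebra_s11 f ∧ Function.Injective ι ∧
        ∀ a b c, ι (T a b c) = tripleProduct f (ι a) (ι b) (ι c) := by
  obtain ⟨M, _, _, f, ι, hf, hι, hfι⟩ := (hT.smul ⅟(3 : K)).exists_leibnizAlgebra_embedding
  refine ⟨M, _, _, f, ι, hf.isMalcevDialgebra, hι, fun a b c => ?_⟩
  rw [hf.tripleProduct_eq, ← hfι, ← map_smul]
  simp only [LinearMap.smul_apply, smul_smul, mul_invOf_self, one_smul]

end IsLeibnizTripleSystem

end LeibnizTripleSystem

theorem degree5_trilinear_identities_general {K : Type} [CommRing K] [Invertible (3 : K)] {n : ℕ}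
    (P : TTree n →₀ K)
    (hvanish : ∀ (M : Type) [AddCommGroup M] [Module K M] (f : M →ₗ[K] M →ₗ[K] M),
      IsMalcevDialgebra_s11 f →
        ∀ x : Fin n → M, P.sum (fun t k => k • t.eval (tripleProduct f) x) = 0)
    {L : Type} [AddCommGroup L] [Module K L] {T : L →ₗ[K] L →ₗ[K] L →ₗ[K] L}
    (hT : IsLeibnizTripleSystem T) (x : Fin n → L) :
    P.sum (fun t k => k • t.eval (fun a b c => T a b c) x) = 0 := by
  obtain ⟨M, _, _, f, ι, hf, hι, hfι⟩ := hT.exists_malcevDialgebra_embedding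
  apply hι
  calc ι (P.sum fun t k => k • t.eval (fun a b c => T a b c) x)
      = P.sum (fun t k => k • t.eval (tripleProduct f) (fun i => ι (x i))) := by
        simp only [map_finsuppSum, map_smul, TTree.map_eval ι hfι]
    _ = ι 0 := by rw [hvanish M f hf, map_zero]

/-- Over a field `K` of characteristic 0, every multilinear
polynomial identity `P` of degree 5 (in one formal trilinear operation)
satisfied by the trilinear operation `⟨a,b,c⟩ = 2(ab)c + a(bc) + (ac)b` in
every Malcev dialgebra over `K` is satisfied in every Leibniz triple system
over `K`; that is, `P` is a consequence of the defining identities of Leibniz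
triple systems. -/
theorem degree5_trilinear_identities (K : Type) [Field K] [CharZero K]
    (P : TTree 5 →₀ K) (hml : ∀ t ∈ P.support, t.Multilinear)
    (hvanish : ∀ (M : Type) [AddCommGroup M] [Module K M]
      (f : M →ₗ[K] M →ₗ[K] M),
      (∀ a b c : M, f a (f b c) + f a (f c b) = 0) →
      (∀ a b c d : M,
        f (f (f a b) c) d - f (f (f a d) b) c - f (f a (f c d)) b
          - f (f a c) (f b d) - f a (f (f b c) d) = 0) →
      ∀ x : Fin 5 → M,
        P.sum (fun t k => k •
          TTree.eval (fun a b c =>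
            (2 : K) • f (f a b) c + f a (f b c) + f (f a c) b) x t) = 0) :
    ∀ (L : Type) [AddCommGroup L] [Module K L]
      (T : L →ₗ[K] L →ₗ[K] L →ₗ[K] L),
      (∀ a b c d e : L,
        T a (T b c d) e
          = T (T a b c) d e - T (T a c b) d e - T (T a d b) c e
            + T (T a d c) b e) →
      (∀ a b c d e : L,
        T a b (T c d e)
          = T (T a b c) d e - T (T a b d) c e - T (T a b e) c d
            + T (T a b e) d c) →
      ∀ x : Fin 5 → L,
        P.sum (fun t k => k • TTree.eval (fun a b c => T a b c) x t) = 0 := by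
  let _ : Invertible (3 : K) := invertibleOfNonzero three_ne_zero
  exact fun L _ _ T hmid hright x => degree5_trilinear_identities_general P
    (fun M _ _ f hf => hvanish M f hf.right_anticomm hf.diMalcev) ⟨hmid, hright⟩ x
end

section
/- Let K be a field of characteristic not 2 and let M be a Malcev dialgebra over K which is generated as an algebra by a single element a (i.e., the smallest K-linear subspace of M containing a and closed under the product is M itself). Then M satisfies the Leibniz identity: (xy)z = (xz)y + x(yz) for all x,y,z ∈ M. -/
/-!
Write `xy = f x y` and `R_x = f.flip x` for right multiplication by `x`. The elements `x` with `R_x`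
a multiple of `R_a` form a subalgebra: if `R_x = k R_a` and `R_y = l R_a`, then, because `(u, v) ↦
m(uv)` is alternating, `m(xy) = l m(xa) = -l m(ax) = -lk m(aa) = 0`, so that `R_{xy} = 0`. When `a`
generates, every right multiplication is thus a multiple of `R_a`. Hence right multiplications
commute and `x(yz) = 0`, and the Leibniz identity reduces to `(xy)z = (xz)y`.
-/

lemma isAlt_of_add_swap_eq_zero {R M N : Type*} [CommSemiring R] [IsDomain R]
    [AddCommMonoid M] [Module R M] [AddCommMonoid N] [Module R N] [Module.IsTorsionFree R N]
    (h2 : (2 : R) ≠ 0) {B : M →ₗ[R] M →ₗ[R] N} (hB : ∀ x y, B x y + B y x = 0) : B.IsAlt := by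
  intro x
  have h : (2 : R) • B x x = 0 := by rw [two_smul, hB]
  exact (smul_eq_zero.mp h).resolve_left h2

section RightMultiplication

open Submodule

lemma apply_apply_right_comm_of_flip_mem_span {R M : Type*} [CommSemiring R] [AddCommMonoid M]
    [Module R M] {f : M →ₗ[R] M →ₗ[R] M} {T : M →ₗ[R] M} {y z : M}
    (hy : f.flip y ∈ span R {T}) (hz : f.flip z ∈ span R {T}) (x : M) :
    f (f x y) z = f (f x z) y := by
  obtain ⟨k, hk⟩ := mem_span_singleton.mp hy
  obtain ⟨l, hl⟩ := mem_span_singleton.mp hz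
  have mul_y (m : M) : f m y = k • T m := (LinearMap.congr_fun hk m).symm
  have mul_z (m : M) : f m z = l • T m := (LinearMap.congr_fun hl m).symm
  simp only [mul_y, mul_z, map_smul, LinearMap.smul_apply, smul_comm k l]

variable {R M : Type*} [CommSemiring R] [AddCommGroup M] [Module R M] {f : M →ₗ[R] M →ₗ[R] M}
  {a : M}

lemma flip_apply_eq_zero_of_flip_mem_span (halt : ∀ m, (f.compr₂ (f m)).IsAlt) {x y : M}
    (hx : f.flip x ∈ span R {f.flip a}) (hy : f.flip y ∈ span R {f.flip a}) :
    f.flip (f x y) = 0 := by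
  obtain ⟨k, hk⟩ := mem_span_singleton.mp hx
  obtain ⟨l, hl⟩ := mem_span_singleton.mp hy
  have mul_x : f a x = k • f a a := (LinearMap.congr_fun hk a).symm
  have mul_y : f x y = l • f x a := (LinearMap.congr_fun hl x).symm
  ext m
  have haa : f m (f a a) = 0 := halt m a
  have hxa : f m (f x a) = -f m (f a x) := ((halt m).neg a x).symm
  calc f m (f x y) = l • f m (f x a) := by rw [mul_y, map_smul]
    _ = l • -(k • f m (f a a)) := by rw [hxa, mul_x, map_smul]
    _ = 0 := by rw [haa, smul_zero, neg_zero, smul_zero]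

lemma flip_mem_span_of_generates (halt : ∀ m, (f.compr₂ (f m)).IsAlt)
    (hgen : ∀ p : Submodule R M, a ∈ p → (∀ x ∈ p, ∀ y ∈ p, f x y ∈ p) → p = ⊤) (x : M) :
    f.flip x ∈ span R {f.flip a} := by
  have htop : (span R {f.flip a}).comap f.flip = ⊤ := by
    refine hgen _ (mem_span_singleton_self _) fun x hx y hy ↦ ?_
    rw [mem_comap, flip_apply_eq_zero_of_flip_mem_span halt hx hy]
    exact zero_mem _
  exact mem_comap.mp (htop ▸ mem_top)

theorem one_generated_malcev_dialgebra_is_leibniz_general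
    (halt : ∀ m, (f.compr₂ (f m)).IsAlt)
    (hgen : ∀ p : Submodule R M, a ∈ p → (∀ x ∈ p, ∀ y ∈ p, f x y ∈ p) → p = ⊤) (x y z : M) :
    f (f x y) z = f (f x z) y + f x (f y z) := by
  have hR (u : M) : f.flip u ∈ span R {f.flip a} := flip_mem_span_of_generates halt hgen u
  have hxyz : f x (f y z) = 0 :=
    LinearMap.congr_fun (flip_apply_eq_zero_of_flip_mem_span halt (hR y) (hR z)) x
  rw [hxyz, add_zero, apply_apply_right_comm_of_flip_mem_span (hR y) (hR z)]

end RightMultiplication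

/-- Over a field `K` of characteristic not 2, every Malcev
dialgebra `M` generated as an algebra by a single element `a` (the smallest
`K`-linear subspace of `M` containing `a` and closed under the product is `M`
itself) satisfies the Leibniz identity `(xy)z = (xz)y + x(yz)`. -/
theorem one_generated_malcev_dialgebra_is_leibniz (K : Type) [Field K]
    (h2 : (2 : K) ≠ 0)
    (M : Type) [AddCommGroup M] [Module K M]
    (f : M →ₗ[K] M →ₗ[K] M)
    (hra : ∀ a b c : M, f a (f b c) + f a (f c b) = 0)
    (hdm : ∀ a b c d : M,
      f (f (f a b) c) d - f (f (f a d) b) c - f (f a (f c d)) b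
        - f (f a c) (f b d) - f a (f (f b c) d) = 0)
    (a : M)
    (hgen : ∀ p : Submodule K M, a ∈ p →
      (∀ x ∈ p, ∀ y ∈ p, f x y ∈ p) → p = ⊤) :
    ∀ x y z : M, f (f x y) z = f (f x z) y + f x (f y z) :=
  one_generated_malcev_dialgebra_is_leibniz_general
    (fun m ↦ isAlt_of_add_swap_eq_zero h2 (hra m)) hgen
end

section
/- Let K be a field and let A be the K-vector space with basis {e_n : n ≥ 1} equipped with the bilinear product determined by e_n·e_1 = e_{n+1} and e_n·e_m = 0 for all m ≥ 2. Then A satisfies right anticommutativity x(yz) + x(zy) = 0, the di-Malcev identity ((xy)z)w − ((xw)y)z − (x(zw))y − (xz)(yw) − x((yz)w) = 0, and the Leibniz identity (xy)z = (xz)y + x(yz), for all x,y,z,w ∈ A. -/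
/-!
The hypotheses say that `x · y = φ(y) T(x)`, where `φ` is the `e_1`-coordinate and `T` is right
multiplication by `e_1`, and that `φ ∘ T = 0` because no `e_{n+1}` equals `e_1`. For every such
product, all `x(yz)` vanish, while `(xy)z = φ(y) φ(z) T²(x)` is symmetric in `y` and `z`; each
of the three identities follows from these two facts.
-/

/-- The basis vector `e n` of the `K`-vector space with basis `{e_n : n ≥ 1}`
(realized as finitely supported functions `ℕ+ →₀ K`). -/
noncomputable def eVec (K : Type) [Field K] (n : ℕ+) : ℕ+ →₀ K := Finsupp.single n 1

open Module

section FunctionalMul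

variable {R M : Type*}

section Semiring

variable [CommSemiring R] [AddCommMonoid M] [Module R M] (φ : M →ₗ[R] R) (T : M →ₗ[R] M)

/-- The bilinear product `x · y = φ(y) T(x)` attached to a linear functional `φ` and an
endomorphism `T`, encoded as a curried linear map. -/
def functionalMul : M →ₗ[R] M →ₗ[R] M := (φ.smulRight T).flip

theorem functionalMul_apply (x y : M) : functionalMul φ T x y = φ y • T x := rfl

theorem functionalMul_right_comm (x y z : M) :
    functionalMul φ T (functionalMul φ T x y) z = functionalMul φ T (functionalMul φ T x z) y := by
  simp only [functionalMul_apply, map_smul]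
  exact smul_comm _ _ _

variable {φ T}

theorem functionalMul_functionalMul_eq_zero (h : φ ∘ₗ T = 0) (x y z : M) :
    functionalMul φ T x (functionalMul φ T y z) = 0 := by
  have hφT : φ (T y) = 0 := LinearMap.congr_fun h y
  simp only [functionalMul_apply, map_smul, hφT, smul_zero, zero_smul]

theorem functionalMul_right_anticomm (h : φ ∘ₗ T = 0) (x y z : M) :
    functionalMul φ T x (functionalMul φ T y z) +
      functionalMul φ T x (functionalMul φ T z y) = 0 := by
  simp only [functionalMul_functionalMul_eq_zero h, add_zero]

theorem functionalMul_leibniz (h : φ ∘ₗ T = 0) (x y z : M) :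
    functionalMul φ T (functionalMul φ T x y) z =
      functionalMul φ T (functionalMul φ T x z) y +
        functionalMul φ T x (functionalMul φ T y z) := by
  rw [functionalMul_functionalMul_eq_zero h, add_zero, functionalMul_right_comm]

end Semiring

variable [CommRing R] [AddCommGroup M] [Module R M]

theorem functionalMul_diMalcev {φ : M →ₗ[R] R} {T : M →ₗ[R] M} (h : φ ∘ₗ T = 0) (x y z w : M) :
    functionalMul φ T (functionalMul φ T (functionalMul φ T x y) z) w
      - functionalMul φ T (functionalMul φ T (functionalMul φ T x w) y) z
      - functionalMul φ T (functionalMul φ T x (functionalMul φ T z w)) y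
      - functionalMul φ T (functionalMul φ T x z) (functionalMul φ T y w)
      - functionalMul φ T x (functionalMul φ T (functionalMul φ T y z) w) = 0 := by
  have hswap : functionalMul φ T (functionalMul φ T (functionalMul φ T x y) z) w =
      functionalMul φ T (functionalMul φ T (functionalMul φ T x w) y) z := by
    rw [functionalMul_right_comm φ T (functionalMul φ T x y) z w,
      functionalMul_right_comm φ T x y w]
  simp only [hswap, functionalMul_functionalMul_eq_zero h, map_zero, LinearMap.zero_apply,
    sub_self]

end FunctionalMul

theorem eq_functionalMul_coord {ι R M : Type*} [CommSemiring R] [AddCommMonoid M] [Module R M]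
    (b : Basis ι R M) (o : ι) (f : M →ₗ[R] M →ₗ[R] M)
    (hzero : ∀ i j, j ≠ o → f (b i) (b j) = 0) :
    f = functionalMul (b.coord o) (f.flip (b o)) := by
  refine b.ext fun i => b.ext fun j => ?_
  rw [functionalMul_apply, LinearMap.flip_apply, b.coord_apply, b.repr_self]
  rcases eq_or_ne j o with rfl | hj
  · rw [Finsupp.single_eq_same, one_smul]
  · rw [hzero i j hj, Finsupp.single_eq_of_ne' hj, zero_smul]

theorem free_one_generated_structure_general {ι R M : Type*} [CommRing R] [AddCommGroup M]
    [Module R M] (b : Basis ι R M) (o : ι) (f : M →ₗ[R] M →ₗ[R] M)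
    (hcoord : ∀ i, b.coord o (f (b i) (b o)) = 0)
    (hzero : ∀ i j, j ≠ o → f (b i) (b j) = 0) :
    (∀ x y z : M, f x (f y z) + f x (f z y) = 0) ∧
    (∀ x y z w : M,
      f (f (f x y) z) w - f (f (f x w) y) z - f (f x (f z w)) y
        - f (f x z) (f y w) - f x (f (f y z) w) = 0) ∧
    (∀ x y z : M, f (f x y) z = f (f x z) y + f x (f y z)) := by
  have hφT : b.coord o ∘ₗ f.flip (b o) = 0 := b.ext hcoord
  rw [eq_functionalMul_coord b o f hzero]
  exact ⟨functionalMul_right_anticomm hφT, functionalMul_diMalcev hφT, functionalMul_leibniz hφT⟩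

/-- Let `A` be the `K`-vector space with basis `{e_n : n ≥ 1}`
equipped with the bilinear product determined by `e_n·e_1 = e_{n+1}` and
`e_n·e_m = 0` for `m ≥ 2`.  Then `A` satisfies right anticommutativity,
the di-Malcev identity, and the Leibniz identity. -/
theorem free_one_generated_structure (K : Type) [Field K]
    (f : (ℕ+ →₀ K) →ₗ[K] (ℕ+ →₀ K) →ₗ[K] (ℕ+ →₀ K))
    (hmul1 : ∀ n : ℕ+, f (eVec K n) (eVec K 1) = eVec K (n + 1))
    (hmul0 : ∀ n m : ℕ+, 2 ≤ m → f (eVec K n) (eVec K m) = 0) :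
    (∀ x y z : ℕ+ →₀ K, f x (f y z) + f x (f z y) = 0) ∧
    (∀ x y z w : ℕ+ →₀ K,
      f (f (f x y) z) w - f (f (f x w) y) z - f (f x (f z w)) y
        - f (f x z) (f y w) - f x (f (f y z) w) = 0) ∧
    (∀ x y z : ℕ+ →₀ K, f (f x y) z = f (f x z) y + f x (f y z)) := by
  have hcoord (n : ℕ+) : f (eVec K n) (eVec K 1) 1 = 0 := by
    rw [hmul1, eVec, Finsupp.single_eq_of_ne' (PNat.lt_add_left 1 n).ne']
  have hzero (n m : ℕ+) (hm : m ≠ 1) : f (eVec K n) (eVec K m) = 0 :=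
    hmul0 n m (PNat.add_one_le_iff.mpr (one_lt_of_ne_one hm))
  exact free_one_generated_structure_general Finsupp.basisSingleOne 1 f
    (by simpa [eVec] using hcoord) (by simpa [eVec] using hzero)
end

section
/- There exist a Malcev dialgebra M over ℚ generated as an algebra by two elements, and elements x, y, z ∈ M, such that (xy)z ≠ (xz)y + x(yz). In other words, not every two-generated Malcev dialgebra is a Leibniz algebra. -/
/-- A (right) Malcev dialgebra over `ℚ`: a `ℚ`-vector space with a bilinear
product satisfying right anticommutativity and the di-Malcev identity. -/
structure MalcevDialgebraQ where
  carrier : Type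
  [addCommGroup : AddCommGroup carrier]
  [module : Module ℚ carrier]
  mul : carrier →ₗ[ℚ] carrier →ₗ[ℚ] carrier
  right_anti : ∀ a b c : carrier, mul a (mul b c) + mul a (mul c b) = 0
  di_malcev : ∀ a b c d : carrier,
    mul (mul (mul a b) c) d - mul (mul (mul a d) b) c - mul (mul a (mul c d)) b
      - mul (mul a c) (mul b d) - mul a (mul (mul b c) d) = 0

attribute [instance] MalcevDialgebraQ.addCommGroup MalcevDialgebraQ.module

/-!
If every product `x(yz)` and every product `((xy)z)t` vanishes, then each term of the two axioms of
a Malcev dialgebra is zero, whereas the Leibniz identity reduces to `(xy)z = (xz)y`. The latter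
fails already on two generators `a`, `b`: take the basis `a`, `b`, `c = ab`, `d = ca`, with all
other products of basis vectors zero, so that `(ab)a = d` but `(aa)b = 0`.
-/

section Identities

variable {R M : Type*} [CommRing R] [AddCommGroup M] [Module R M]

/-- The axioms of a (right) Malcev dialgebra, as a property of a bilinear product on a module over
an arbitrary commutative ring. -/
structure IsMalcevDialgebra_s16 (μ : M →ₗ[R] M →ₗ[R] M) : Prop where
  right_anti : ∀ a b c, μ a (μ b c) + μ a (μ c b) = 0
  di_malcev : ∀ a b c d,
    μ (μ (μ a b) c) d - μ (μ (μ a d) b) c - μ (μ a (μ c d)) b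
      - μ (μ a c) (μ b d) - μ a (μ (μ b c) d) = 0

/-- The (right) Leibniz identity: right multiplications are derivations of the product `μ`. -/
def IsLeibniz (μ : M →ₗ[R] M →ₗ[R] M) : Prop :=
  ∀ x y z, μ (μ x y) z = μ (μ x z) y + μ x (μ y z)

/-- The set `s` generates the algebra with product `μ`: the only submodule that contains `s` and is
closed under `μ` is the whole module. -/
def IsGeneratingSet (μ : M →ₗ[R] M →ₗ[R] M) (s : Set M) : Prop :=
  ∀ p : Submodule R M, s ⊆ p → (∀ x ∈ p, ∀ y ∈ p, μ x y ∈ p) → p = ⊤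

variable {μ : M →ₗ[R] M →ₗ[R] M}

theorem IsMalcevDialgebra_s16.of_mul_mul_eq_zero (hr : ∀ x y z, μ x (μ y z) = 0)
    (hl : ∀ x y z t, μ (μ (μ x y) z) t = 0) : IsMalcevDialgebra_s16 μ where
  right_anti a b c := by simp only [hr, add_zero]
  di_malcev a b c d := by simp only [hr, hl, map_zero, LinearMap.zero_apply, sub_zero]

theorem isLeibniz_iff_of_mul_mul_eq_zero (hr : ∀ x y z, μ x (μ y z) = 0) :
    IsLeibniz μ ↔ ∀ x y z, μ (μ x y) z = μ (μ x z) y := by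
  simp only [IsLeibniz, hr, add_zero]

end Identities

section NilpotentMul

variable (R : Type*) [CommRing R]

/-- The product on `R⁴` with basis `a, b, c, d` (in the order of the coordinates `0, 1, 2, 3`) whose
only nonzero products of basis vectors are `ab = c` and `ca = d`. It is the two-generated Malcev
dialgebra that is not Leibniz. -/
def nilpotentMul : (Fin 4 → R) →ₗ[R] (Fin 4 → R) →ₗ[R] (Fin 4 → R) :=
  LinearMap.mk₂ R (fun x y => ![0, 0, x 0 * y 1, x 2 * y 0])
    (fun x x' y => by simp [add_mul])
    (fun r x y => by simp [mul_assoc])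
    (fun x y y' => by simp [mul_add])
    (fun r x y => by simp [mul_left_comm])

variable {R}

theorem nilpotentMul_apply (x y : Fin 4 → R) :
    nilpotentMul R x y = ![0, 0, x 0 * y 1, x 2 * y 0] := rfl

theorem nilpotentMul_mul_right (x y z : Fin 4 → R) :
    nilpotentMul R x (nilpotentMul R y z) = 0 := by
  simp [nilpotentMul_apply]

theorem nilpotentMul_mul_mul_left (x y z t : Fin 4 → R) :
    nilpotentMul R (nilpotentMul R (nilpotentMul R x y) z) t = 0 := by
  simp [nilpotentMul_apply]

theorem isMalcevDialgebra_nilpotentMul : IsMalcevDialgebra_s16 (nilpotentMul R) :=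
  .of_mul_mul_eq_zero nilpotentMul_mul_right nilpotentMul_mul_mul_left

theorem nilpotentMul_single_zero_single_one :
    nilpotentMul R (Pi.single 0 1) (Pi.single 1 1) = Pi.single 2 1 := by
  ext i; fin_cases i <;> simp [nilpotentMul_apply]

theorem nilpotentMul_single_two_single_zero :
    nilpotentMul R (Pi.single 2 1) (Pi.single 0 1) = Pi.single 3 1 := by
  ext i; fin_cases i <;> simp [nilpotentMul_apply]

theorem nilpotentMul_single_zero_single_zero :
    nilpotentMul R (Pi.single 0 1) (Pi.single 0 1) = 0 := by
  simp [nilpotentMul_apply]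

theorem isGeneratingSet_nilpotentMul :
    IsGeneratingSet (nilpotentMul R) {Pi.single 0 1, Pi.single 1 1} := by
  intro p hs hmul
  obtain ⟨ha, hb⟩ := Set.pair_subset_iff.1 hs
  have hc : Pi.single 2 1 ∈ p := nilpotentMul_single_zero_single_one (R := R) ▸ hmul _ ha _ hb
  have hd : Pi.single 3 1 ∈ p := nilpotentMul_single_two_single_zero (R := R) ▸ hmul _ hc _ ha
  rw [← top_le_iff, ← (Pi.basisFun R (Fin 4)).span_eq, Submodule.span_le, Set.range_subset_iff]
  intro i
  rw [Pi.basisFun_apply]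
  fin_cases i
  exacts [ha, hb, hc, hd]

theorem not_isLeibniz_nilpotentMul [Nontrivial R] : ¬ IsLeibniz (nilpotentMul R) := by
  rw [isLeibniz_iff_of_mul_mul_eq_zero nilpotentMul_mul_right]
  intro h
  have hd : (Pi.single 3 1 : Fin 4 → R) = 0 := by
    simpa only [nilpotentMul_single_zero_single_one, nilpotentMul_single_two_single_zero,
      nilpotentMul_single_zero_single_zero, map_zero, LinearMap.zero_apply]
      using h (Pi.single 0 1) (Pi.single 1 1) (Pi.single 0 1)
  exact one_ne_zero (Pi.single_eq_zero_iff.1 hd)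

end NilpotentMul

theorem two_generated_malcev_dialgebra_not_leibniz_general.{u} (R : Type u) [CommRing R]
    [Nontrivial R] :
    ∃ (M : Type u) (_ : AddCommGroup M) (_ : Module R M) (μ : M →ₗ[R] M →ₗ[R] M) (g₁ g₂ : M),
      IsMalcevDialgebra_s16 μ ∧ IsGeneratingSet μ {g₁, g₂} ∧ ¬ IsLeibniz μ :=
  ⟨Fin 4 → R, inferInstance, inferInstance, nilpotentMul R, Pi.single 0 1, Pi.single 1 1,
    isMalcevDialgebra_nilpotentMul, isGeneratingSet_nilpotentMul, not_isLeibniz_nilpotentMul⟩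

/-- There exist a Malcev dialgebra `M` over `ℚ` generated as an
algebra by two elements and elements `x, y, z ∈ M` with
`(xy)z ≠ (xz)y + x(yz)`; not every two-generated Malcev dialgebra is a Leibniz
algebra. -/
theorem two_generated_malcev_dialgebra_not_leibniz :
    ∃ (D : MalcevDialgebraQ) (g₁ g₂ : D.carrier),
      (∀ p : Submodule ℚ D.carrier, g₁ ∈ p → g₂ ∈ p →
        (∀ x ∈ p, ∀ y ∈ p, D.mul x y ∈ p) → p = ⊤) ∧
      ∃ x y z : D.carrier,
        D.mul (D.mul x y) z ≠ D.mul (D.mul x z) y + D.mul x (D.mul y z) := by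
  obtain ⟨M, _, _, μ, g₁, g₂, hμ, hgen, hL⟩ :=
    two_generated_malcev_dialgebra_not_leibniz_general ℚ
  exact ⟨⟨M, μ, hμ.right_anti, hμ.di_malcev⟩, g₁, g₂,
    fun p h₁ h₂ => hgen p (Set.pair_subset h₁ h₂), by simpa only [IsLeibniz, not_forall] using hL⟩
end

section
/- Let K_n = C(2n−2, n−1)/n (the Catalan number counting binary association types of degree n), and let Z : ℕ → ℕ be defined by Z_1 = 1 and Z_n = 2·Σ_{i=1}^{n−1} Z_{n−i}·K_i for n ≥ 2. Then Z_n = C(2n−2, n−1) for all n ≥ 1; equivalently, Z_n = n·K_n. -/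
/-!
Shifted to start at degree `0`, the recurrence reads `Y (m + 1) = 2 * ∑ Y i * catalan j`, summed
over `i + j = m`, so it suffices that the central binomial coefficients satisfy it. Writing
`centralBinom i = (i + 1) * catalan i`, this becomes a Catalan convolution weighted by `i + 1`.
By the symmetry `i ↔ j` twice the weight may be replaced by `(i + 1) + (j + 1) = m + 2`, leaving
`(m + 2) * catalan (m + 1) = centralBinom (m + 1)`.
-/

open Finset

theorem two_mul_sum_antidiagonal_fst_mul {R : Type*} [NonAssocSemiring R] {f : ℕ × ℕ → R}
    (hf : ∀ p, f p.swap = f p) (n : ℕ) :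
    2 * ∑ p ∈ antidiagonal n, (p.1 : R) * f p = n * ∑ p ∈ antidiagonal n, f p := by
  have fst_eq_snd : ∑ p ∈ antidiagonal n, (p.1 : R) * f p =
      ∑ p ∈ antidiagonal n, (p.2 : R) * f p := by
    rw [← Nat.sum_antidiagonal_swap]
    simp only [hf, Prod.fst_swap]
  calc 2 * ∑ p ∈ antidiagonal n, (p.1 : R) * f p
      = ∑ p ∈ antidiagonal n, (p.1 : R) * f p + ∑ p ∈ antidiagonal n, (p.2 : R) * f p := by
        rw [two_mul, ← fst_eq_snd]
    _ = ∑ p ∈ antidiagonal n, ((p.1 + p.2 : ℕ) : R) * f p := by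
        simp only [Nat.cast_add, add_mul, sum_add_distrib]
    _ = n * ∑ p ∈ antidiagonal n, f p := by
        rw [mul_sum]
        exact sum_congr rfl fun p hp => by rw [mem_antidiagonal.mp hp]

theorem two_mul_sum_antidiagonal_centralBinom_mul_catalan (m : ℕ) :
    2 * ∑ p ∈ antidiagonal m, p.1.centralBinom * catalan p.2 = (m + 1).centralBinom := by
  have weighted : 2 * ∑ p ∈ antidiagonal m, p.1 * (catalan p.1 * catalan p.2) =
      m * catalan (m + 1) := by
    rw [catalan_succ']
    exact two_mul_sum_antidiagonal_fst_mul (R := ℕ)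
      (f := fun p => catalan p.1 * catalan p.2) (fun _ => mul_comm _ _) m
  calc 2 * ∑ p ∈ antidiagonal m, p.1.centralBinom * catalan p.2
      = 2 * ∑ p ∈ antidiagonal m, p.1 * (catalan p.1 * catalan p.2) +
          2 * ∑ p ∈ antidiagonal m, catalan p.1 * catalan p.2 := by
        simp only [← succ_mul_catalan_eq_centralBinom, add_mul, one_mul, mul_assoc,
          sum_add_distrib, mul_add]
    _ = (m + 2) * catalan (m + 1) := by rw [weighted, ← catalan_succ', add_mul]
    _ = (m + 1).centralBinom := succ_mul_catalan_eq_centralBinom (m + 1)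

theorem sum_Ico_one_eq_sum_antidiagonal {M : Type*} [AddCommMonoid M] (f : ℕ → ℕ → M) (n : ℕ) :
    ∑ i ∈ Ico 1 (n + 2), f (n + 2 - i) i = ∑ p ∈ antidiagonal n, f (p.1 + 1) (p.2 + 1) := by
  rw [← Nat.sum_antidiagonal_swap, Nat.sum_antidiagonal_eq_sum_range_succ_mk,
    sum_Ico_eq_sum_range]
  refine sum_congr rfl fun k hk => ?_
  have hkn : k < n + 1 := mem_range.mp hk
  congr 1 <;> grind

section Recurrence

variable {R : Type*} [Semiring R]

theorem eq_mul_centralBinom_of_catalan_recurrence {Y : ℕ → R}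
    (hY : ∀ m, Y (m + 1) = 2 * ∑ p ∈ antidiagonal m, Y p.1 * (catalan p.2 : R)) (m : ℕ) :
    Y m = Y 0 * (m.centralBinom : R) := by
  induction m using Nat.strong_induction_on with
  | _ m ih =>
    rcases m with _ | m
    · simp
    · calc Y (m + 1)
          = 2 * ∑ p ∈ antidiagonal m, Y 0 * (p.1.centralBinom : R) * (catalan p.2 : R) := by
            rw [hY]
            congr 1
            exact sum_congr rfl fun p hp => by
              rw [ih p.1 (Nat.antidiagonal.fst_lt hp)]
        _ = Y 0 * ((2 * ∑ p ∈ antidiagonal m, p.1.centralBinom * catalan p.2 : ℕ) : R) := by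
            push_cast
            simp only [mul_assoc, ← mul_sum]
            rw [← mul_assoc, ← mul_assoc, (Commute.ofNat_left 2 (Y 0)).eq]
        _ = Y 0 * ((m + 1).centralBinom : R) := by
            rw [two_mul_sum_antidiagonal_centralBinom_mul_catalan]

theorem dialgebra_association_types_general (Z : ℕ → R)
    (hZrec : ∀ n, 2 ≤ n →
      Z n = 2 * ∑ i ∈ Ico 1 n, Z (n - i) * (catalan (i - 1) : R))
    (n : ℕ) (hn : 1 ≤ n) :
    Z n = Z 1 * ((2 * n - 2).choose (n - 1) : R) ∧
      Z n = Z 1 * ((n * catalan (n - 1) : ℕ) : R) := by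
  obtain ⟨m, rfl⟩ := Nat.exists_eq_add_of_le' hn
  have shifted_rec (k : ℕ) :
      Z (k + 1 + 1) = 2 * ∑ p ∈ antidiagonal k, Z (p.1 + 1) * (catalan p.2 : R) := by
    rw [hZrec (k + 2) (Nat.le_add_left 2 k),
      sum_Ico_one_eq_sum_antidiagonal fun a b => Z a * (catalan (b - 1) : R)]
    simp only [Nat.add_sub_cancel]
  have eq_centralBinom : Z (m + 1) = Z 1 * (m.centralBinom : R) :=
    eq_mul_centralBinom_of_catalan_recurrence (Y := fun k => Z (k + 1)) shifted_rec m
  constructor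
  · rw [eq_centralBinom, Nat.centralBinom_eq_two_mul_choose, Nat.mul_add_one, Nat.add_sub_cancel,
      Nat.add_sub_cancel]
  · rw [eq_centralBinom, Nat.add_sub_cancel, succ_mul_catalan_eq_centralBinom]

end Recurrence

/-- Let `K_n = catalan (n−1)` (which equals `C(2n−2, n−1)/n`, the
number of binary association types in degree `n`) and let `Z : ℕ → ℕ` satisfy
`Z 1 = 1` and `Z n = 2·∑_{i=1}^{n−1} Z_{n−i}·K_i` for `n ≥ 2`.  Then
`Z n = C(2n−2, n−1)` for all `n ≥ 1`; equivalently, `Z n = n·K_n`. -/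
theorem dialgebra_association_types (Z : ℕ → ℕ)
    (hZ1 : Z 1 = 1)
    (hZrec : ∀ n, 2 ≤ n →
      Z n = 2 * ∑ i ∈ Finset.Ico 1 n, Z (n - i) * catalan (i - 1)) :
    ∀ n, 1 ≤ n →
      Z n = (2 * n - 2).choose (n - 1) ∧ Z n = n * catalan (n - 1) := by
  simpa [hZ1] using dialgebra_association_types_general Z hZrec
end
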